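/- arXiv:2112.04458 — 2 statements merged into one kernel-verified Lean document; each statement's English description precedes it below -/
import Mathlib

section
/- Let ρ be a quasi-periodic labelling, and let Γ ≤ G_ρ be a subgroup admitting a global fixed point: there exists x ∈ ℝ with γ(x) = x for every γ ∈ Γ. Then Γ is 2-boundedly acyclic: every bounded 2-cocycle ω : Γ × Γ → ℝ is the coboundary of a bounded function φ : Γ → ℝ. -/
/-! ### Letters, labellings and quasi-periodicity -/

/-- The four letters `a, b, a⁻¹, b⁻¹`. -/
inductive Letter : Type
  | a : Letter
  | b : Letter
  | A : Letter  -- `a⁻¹`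
  | B : Letter  -- `b⁻¹`
  deriving DecidableEq

/-- The formal inverse of a letter. -/
def Letter.inv : Letter → Letter
  | .a => .A
  | .A => .a
  | .b => .B
  | .B => .b

/-- We encode the set of half-integers `½ℤ` by `ℤ` via `m ↦ m / 2`; integer points
correspond to even indices and proper half-integer points to odd indices.
A labelling assigns `a^{±1}` to integer points and `b^{±1}` to half-integer points. -/
def IsLabelling (ρ : ℤ → Letter) : Prop :=
  ∀ m : ℤ, (Even m → ρ m = Letter.a ∨ ρ m = Letter.A) ∧
    (Odd m → ρ m = Letter.b ∨ ρ m = Letter.B)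

/-- The word of the labelling `ρ` along the block `{k, k+1, …, k+n}` (in the
half-integer encoding, the block of size `n+1` starting at `k/2`). -/
def blockWord (ρ : ℤ → Letter) (k : ℤ) (n : ℕ) : List Letter :=
  (List.range (n + 1)).map fun i => ρ (k + i)

/-- The formal inverse of a word: reverse the word and invert each letter. -/
def wordInv (w : List Letter) : List Letter :=
  (w.map Letter.inv).reverse

/-- A labelling is quasi-periodic if (1) every subword of the labelling appears as a
subword (string of consecutive letters) of every sufficiently large block, and (2) the
formal inverse of every subword of the labelling is again a subword of the labelling. -/
def IsQuasiPeriodic (ρ : ℤ → Letter) : Prop :=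
  IsLabelling ρ ∧
    (∀ (k : ℤ) (n : ℕ), ∃ N : ℕ, ∀ (k' : ℤ) (n' : ℕ), N ≤ n' + 1 →
      (blockWord ρ k n) <:+: (blockWord ρ k' n')) ∧
    (∀ (k : ℤ) (n : ℕ), ∃ k' : ℤ, blockWord ρ k' n = wordInv (blockWord ρ k n))

/-! ### Thompson's group `F` and the subgroup `H`

Orientation-preserving homeomorphisms of `[0,1]` are realised as order-automorphisms
of `ℝ` that are the identity outside `[0,1]`; orientation-preserving homeomorphisms of
the line are order-automorphisms of `ℝ`. -/

/-- A dyadic rational real number, i.e. an element of `ℤ[1/2]`. -/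
def IsDyadic (x : ℝ) : Prop :=
  ∃ (a : ℤ) (b : ℕ), x = (a : ℝ) / 2 ^ b

/-- Membership in Thompson's group `F`: the identity outside `[0,1]`, and on `[0,1]`
piecewise linear with breakpoints in `ℤ[1/2]` and slopes integer powers of `2`. -/
def InThompsonF (f : ℝ ≃o ℝ) : Prop :=
  (∀ x : ℝ, x ∉ Set.Icc (0 : ℝ) 1 → f x = x) ∧
    ∃ (m : ℕ) (x : Fin (m + 1) → ℝ), x 0 = 0 ∧ x (Fin.last m) = 1 ∧ StrictMono x ∧
      (∀ i, IsDyadic (x i)) ∧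
      ∀ i : Fin m, ∃ (k : ℤ) (c : ℝ),
        ∀ t ∈ Set.Icc (x i.castSucc) (x i.succ), f t = 2 ^ k * t + c

/-- Membership in the subgroup `H ≤ F` of elements whose slopes at `0` and `1`
coincide. -/
def InH (f : ℝ ≃o ℝ) : Prop :=
  InThompsonF f ∧
    ∃ (k : ℤ) (ε : ℝ), 0 < ε ∧ (∀ t ∈ Set.Icc (0 : ℝ) ε, f t = 2 ^ k * t) ∧
      ∀ t ∈ Set.Icc (1 - ε) (1 : ℝ), f t = 1 + 2 ^ k * (t - 1)

/-! ### The generators of `G_ρ` -/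

/-- `ζ` is the homeomorphism of `ℝ` which on each `[n, n+1]` is the conjugate of `ν`
(a homeomorphism of `[0,1]`) by the orientation-preserving isometry `[n,n+1] → [0,1]`
if `ρ(n + ½) = b`, and by the orientation-reversing isometry if `ρ(n + ½) = b⁻¹`.
(In the encoding of `½ℤ` by `ℤ`, the point `n + ½` has index `2n + 1`.) -/
def IsZeta (ρ : ℤ → Letter) (ν ζ : ℝ ≃o ℝ) : Prop :=
  ∀ n : ℤ, ∀ x ∈ Set.Icc (n : ℝ) (n + 1),
    (ρ (2 * n + 1) = Letter.b → ζ x = n + ν (x - n)) ∧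
    (ρ (2 * n + 1) = Letter.B → ζ x = (n + 1) - ν ((n + 1) - x))

/-- `χ` is the homeomorphism of `ℝ` which on each `[n-½, n+½]` is the conjugate of `ν`
by the orientation-preserving isometry `[n-½, n+½] → [0,1]` if `ρ(n) = a`, and by the
orientation-reversing isometry if `ρ(n) = a⁻¹`. -/
def IsChi (ρ : ℤ → Letter) (ν χ : ℝ ≃o ℝ) : Prop :=
  ∀ n : ℤ, ∀ x ∈ Set.Icc ((n : ℝ) - 1/2) ((n : ℝ) + 1/2),
    (ρ (2 * n) = Letter.a → χ x = ((n : ℝ) - 1/2) + ν (x - ((n : ℝ) - 1/2))) ∧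
    (ρ (2 * n) = Letter.A → χ x = ((n : ℝ) + 1/2) - ν (((n : ℝ) + 1/2) - x))

/-! ### Bounded cohomology in degree two -/

/-- A bounded 2-cocycle on `G` with trivial real coefficients. -/
def IsBounded2Cocycle {G : Type*} [Group G] (ω : G → G → ℝ) : Prop :=
  (∃ C : ℝ, ∀ g h : G, |ω g h| ≤ C) ∧
    ∀ g₁ g₂ g₃ : G, ω g₂ g₃ - ω (g₁ * g₂) g₃ + ω g₁ (g₂ * g₃) - ω g₁ g₂ = 0

/-- `ω` is the coboundary of a bounded real-valued function. -/
def IsCoboundaryOfBounded {G : Type*} [Group G] (ω : G → G → ℝ) : Prop :=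
  ∃ φ : G → ℝ, (∃ C : ℝ, ∀ g : G, |φ g| ≤ C) ∧
    ∀ g h : G, ω g h = φ h - φ (g * h) + φ g

/-- A group is 2-boundedly acyclic if `H²_b(G; ℝ) = 0`, i.e. every bounded 2-cocycle is
the coboundary of a bounded function. -/
def Is2BoundedlyAcyclic (G : Type*) [Group G] : Prop :=
  ∀ ω : G → G → ℝ, IsBounded2Cocycle ω → IsCoboundaryOfBounded ω

/-- A 2-cocycle is homogeneous if it vanishes on powers of a single element. -/
def IsHomogeneous {G : Type*} [Group G] (ω : G → G → ℝ) : Prop :=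
  ∀ (g : G) (i j : ℤ), ω (g ^ i) (g ^ j) = 0

/-!
A bounded 2-cocycle `ω` on `Γ` defines a central extension of `Γ` by `ℝ`, on which the fibre
coordinate is a quasimorphism. If its homogenisation `q` is a homomorphism, then the restriction of
`q` to the canonical section is bounded and has coboundary `ω` up to a constant.

Suppose that every finitely generated subgroup `K` of the commutator subgroup commutes with its
conjugates by the powers of a single element `t`; this property passes to the central extension.
Multiplying the first `n` conjugations gives a homomorphism on `K` along which `q` pulls back to
`n * q`. As homogeneous quasimorphisms of a given defect are uniformly bounded at each element of
`[K, K]`, `q` vanishes there. Hence `q` vanishes on the second derived subgroup, so it is additive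
on the derived subgroup, so it vanishes there too, and is a homomorphism.

To find `t`, choose a finitely generated `S ≤ Γ` with `K ≤ [S, S]`. The elements of `S` are
determined locally by `ρ`, so by recurrence the fixed points of `S` are relatively dense and `S`
acts faithfully on some compact interval `[a, b]` between two of them. The one-sided germs of `S` at
a fixed point are linear, hence commute, so `K` is trivial near each fixed point of `S` and its
support in `[a, b]` is a compact set without fixed points of `S`. Some `t ∈ S` and all its positive
powers move such a set off itself.
-/

open Filter Topology MulAction
open scoped commutatorElement

/-! ### Homogeneous quasimorphisms -/

theorem eq_zero_of_forall_abs_natCast_mul_le {R : Type*} [Ring R] [LinearOrder R]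
    [IsStrictOrderedRing R] [Archimedean R] {r M : R} (h : ∀ n : ℕ, |n * r| ≤ M) : r = 0 := by
  by_contra hr
  obtain ⟨n, hn⟩ := exists_lt_nsmul (abs_pos.mpr hr) M
  rw [nsmul_eq_mul, ← Nat.abs_cast, ← abs_mul] at hn
  exact (h n).not_gt hn

section Quasimorphism

variable {G : Type*} [Group G] {q : G → ℝ} {D : ℝ}

/-- `q` is a quasimorphism of defect at most `D`. -/
def IsQuasimorphism (q : G → ℝ) (D : ℝ) : Prop :=
  ∀ x y, |q (x * y) - q x - q y| ≤ D

/-- `q` is a quasimorphism of defect at most `D` which is homogeneous, that is, additive on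
nonnegative powers (and hence on all cyclic subgroups). -/
structure IsHomogeneousQuasimorphism (q : G → ℝ) (D : ℝ) : Prop where
  isQuasimorphism : IsQuasimorphism q D
  map_pow : ∀ x (n : ℕ), q (x ^ n) = n * q x

namespace IsQuasimorphism

theorem defect_nonneg (h : IsQuasimorphism q D) : 0 ≤ D :=
  (abs_nonneg _).trans (h 1 1)

theorem abs_map_pow_succ_sub_le (h : IsQuasimorphism q D) (x : G) (n : ℕ) :
    |q (x ^ (n + 1)) - (n + 1) * q x| ≤ n * D := by
  induction n with
  | zero => simp
  | succ n ih =>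
    have hstep := abs_le.1 (h (x ^ (n + 1)) x)
    rw [← pow_succ] at hstep
    push_cast
    rw [abs_le] at ih ⊢
    constructor <;> linarith [hstep.1, hstep.2, ih.1, ih.2]

theorem abs_map_pow_div_sub_le (h : IsQuasimorphism q D) (x : G) {n : ℕ} (hn : n ≠ 0) :
    |q (x ^ n) / n - q x| ≤ D := by
  obtain ⟨n, rfl⟩ := Nat.exists_eq_succ_of_ne_zero hn
  have hpos : (0 : ℝ) < (n + 1 : ℕ) := by positivity
  rw [div_sub' hpos.ne', abs_div, abs_of_pos hpos, div_le_iff₀ hpos]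
  push_cast
  linarith [h.abs_map_pow_succ_sub_le x n, h.defect_nonneg]

-- Fekete's lemma, applied to the subadditive sequence `q (x ^ n) + D`.
theorem exists_tendsto_map_pow_div (h : IsQuasimorphism q D) (x : G) :
    ∃ l, Tendsto (fun n : ℕ => q (x ^ n) / n) atTop (𝓝 l) := by
  have hsub : Subadditive fun n : ℕ => q (x ^ n) + D := fun m n => by
    have := (abs_le.1 (h (x ^ m) (x ^ n))).2
    rw [← pow_add] at this
    linarith
  have hbdd : BddBelow (Set.range fun n : ℕ => (q (x ^ n) + D) / n) := by
    refine ⟨-(|q x| + D), ?_⟩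
    rintro _ ⟨n, rfl⟩
    dsimp only
    rcases eq_or_ne n 0 with rfl | hn
    · simp only [Nat.cast_zero, div_zero]; linarith [abs_nonneg (q x), h.defect_nonneg]
    · have hD : 0 ≤ D / n := div_nonneg h.defect_nonneg n.cast_nonneg
      rw [add_div]
      linarith [(abs_le.1 (h.abs_map_pow_div_sub_le x hn)).1, neg_abs_le (q x)]
  refine ⟨hsub.lim - 0, ((hsub.tendsto_lim hbdd).sub
    (tendsto_const_div_atTop_nhds_zero_nat D)).congr fun n => ?_⟩
  rw [← sub_div, add_sub_cancel_right]

theorem exists_homogenization (h : IsQuasimorphism q D) :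
    ∃ p : G → ℝ, (∀ x, |p x - q x| ≤ D) ∧ IsHomogeneousQuasimorphism p (4 * D) := by
  choose p hp using h.exists_tendsto_map_pow_div
  have hpq : ∀ x, |p x - q x| ≤ D := fun x =>
    le_of_tendsto ((hp x).sub_const (q x)).abs <|
      (eventually_ne_atTop 0).mono fun _ hn => h.abs_map_pow_div_sub_le x hn
  refine ⟨p, hpq, fun x y => ?_, fun x n => ?_⟩
  · have hxy := abs_le.1 (h x y)
    have hx := abs_le.1 (hpq x)
    have hy := abs_le.1 (hpq y)
    have hmul := abs_le.1 (hpq (x * y))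
    rw [abs_le]
    constructor <;> linarith [hxy.1, hxy.2, hx.1, hx.2, hy.1, hy.2, hmul.1, hmul.2]
  · rcases Nat.eq_zero_or_pos n with rfl | hn
    · have hone := hp 1
      simp only [one_pow] at hone
      simpa using tendsto_nhds_unique hone (tendsto_const_div_atTop_nhds_zero_nat (q 1))
    · refine tendsto_nhds_unique (hp (x ^ n)) ?_
      refine (((hp x).comp (tendsto_id.const_mul_atTop' hn)).const_mul (n : ℝ)).congr fun m => ?_
      have : (n : ℝ) ≠ 0 := by positivity
      simp only [Function.comp_apply, id_eq, pow_mul, Nat.cast_mul]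
      rw [← mul_div_assoc, mul_div_mul_left _ _ this]

end IsQuasimorphism

namespace IsHomogeneousQuasimorphism

theorem map_one (h : IsHomogeneousQuasimorphism q D) : q 1 = 0 := by
  simpa using h.map_pow 1 0

theorem comp {G' : Type*} [Group G'] (h : IsHomogeneousQuasimorphism q D) (f : G' →* G) :
    IsHomogeneousQuasimorphism (fun x => q (f x)) D where
  isQuasimorphism x y := by simpa only [_root_.map_mul] using h.isQuasimorphism (f x) (f y)
  map_pow x n := by simpa only [_root_.map_pow] using h.map_pow (f x) n

theorem map_mul_of_commute (h : IsHomogeneousQuasimorphism q D) {x y : G} (hxy : Commute x y) :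
    q (x * y) = q x + q y := by
  suffices q (x * y) - q x - q y = 0 by linarith
  refine eq_zero_of_forall_abs_natCast_mul_le (M := D) fun n => ?_
  simpa only [← hxy.mul_pow, h.map_pow, mul_sub] using h.isQuasimorphism (x ^ n) (y ^ n)

theorem map_inv (h : IsHomogeneousQuasimorphism q D) (x : G) : q x⁻¹ = -q x := by
  have := h.map_mul_of_commute (Commute.refl x).inv_right
  rw [mul_inv_cancel, h.map_one] at this
  linarith

theorem map_conj (h : IsHomogeneousQuasimorphism q D) (x y : G) : q (y * x * y⁻¹) = q x := by
  suffices q (y * x * y⁻¹) - q x = 0 by linarith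
  refine eq_zero_of_forall_abs_natCast_mul_le (M := 2 * D) fun n => ?_
  have hl := abs_le.1 (h.isQuasimorphism y (x ^ n))
  have hr := abs_le.1 (h.isQuasimorphism (y * x ^ n) y⁻¹)
  rw [← conj_pow, h.map_inv] at hr
  simp only [h.map_pow] at hl hr
  rw [abs_le]
  constructor <;> linarith [hl.1, hl.2, hr.1, hr.2]

theorem abs_map_commutatorElement_le (h : IsHomogeneousQuasimorphism q D) (x y : G) :
    |q ⁅x, y⁆| ≤ D := by
  have := h.isQuasimorphism (x * y * x⁻¹) y⁻¹
  rwa [h.map_conj, h.map_inv, sub_neg_eq_add, sub_add_cancel] at this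

theorem map_mul_of_eq_zero_on_commutator (h : IsHomogeneousQuasimorphism q D)
    (h0 : ∀ x ∈ commutator G, q x = 0) (x y : G) : q (x * y) = q x + q y := by
  suffices q (x * y) - q x - q y = 0 by linarith
  refine eq_zero_of_forall_abs_natCast_mul_le (M := 2 * D) fun n => ?_
  have hc : (x ^ n * y ^ n)⁻¹ * (x * y) ^ n ∈ commutator G := by
    rw [← Abelianization.ker_of, MonoidHom.mem_ker]
    simp [mul_pow]
  have hxy := abs_le.1 (h.isQuasimorphism (x ^ n) (y ^ n))
  have hcor := abs_le.1 (h.isQuasimorphism (x ^ n * y ^ n) ((x ^ n * y ^ n)⁻¹ * (x * y) ^ n))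
  rw [mul_inv_cancel_left, h0 _ hc] at hcor
  simp only [h.map_pow] at hxy hcor
  rw [abs_le]
  constructor <;> linarith [hxy.1, hxy.2, hcor.1, hcor.2]

theorem map_eq_zero_of_additive_on_commutator (h : IsHomogeneousQuasimorphism q D)
    (hadd : ∀ x ∈ commutator G, ∀ y ∈ commutator G, q (x * y) = q x + q y) :
    ∀ x ∈ commutator G, q x = 0 := by
  have hmem (a b : G) : ⁅a, b⁆ ∈ commutator G :=
    Subgroup.commutator_mem_commutator (Subgroup.mem_top a) (Subgroup.mem_top b)
  have hpow (a b : G) (n : ℕ) : q ⁅a, b ^ n⁆ = n * q ⁅a, b⁆ := by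
    induction n with
    | zero => simp [h.map_one]
    | succ n ih =>
      have hsplit : ⁅a, b ^ (n + 1)⁆ = ⁅a, b ^ n⁆ * (b ^ n * ⁅a, b⁆ * (b ^ n)⁻¹) := by
        simp only [commutatorElement_def, pow_succ]; group
      rw [hsplit, hadd _ (hmem _ _) _ (Subgroup.Normal.conj_mem inferInstance _ (hmem _ _) _),
        h.map_conj, ih]
      push_cast; ring
  have hcomm (a b : G) : q ⁅a, b⁆ = 0 :=
    eq_zero_of_forall_abs_natCast_mul_le (M := D) fun n =>
      hpow a b n ▸ h.abs_map_commutatorElement_le a (b ^ n)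
  intro x hx
  rw [commutator_eq_closure] at hx
  induction hx using Subgroup.closure_induction with
  | mem x hx => obtain ⟨a, b, rfl⟩ := hx; exact hcomm a b
  | one => exact h.map_one
  | mul x y hx hy ihx ihy =>
    rw [← commutator_eq_closure] at hx hy
    rw [hadd x hx y hy, ihx, ihy, add_zero]
  | inv x _ ih => rw [h.map_inv, ih, neg_zero]

theorem exists_forall_abs_map_le_of_mem_commutator {x : G} (hx : x ∈ commutator G) (D : ℝ) :
    ∃ M, ∀ q : G → ℝ, IsHomogeneousQuasimorphism q D → |q x| ≤ M := by
  rw [commutator_eq_closure] at hx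
  induction hx using Subgroup.closure_induction with
  | mem x hx =>
    obtain ⟨a, b, rfl⟩ := hx
    exact ⟨D, fun q hq => hq.abs_map_commutatorElement_le a b⟩
  | one => exact ⟨0, fun q hq => by rw [hq.map_one, abs_zero]⟩
  | mul x y _ _ ihx ihy =>
    obtain ⟨M, hM⟩ := ihx
    obtain ⟨N, hN⟩ := ihy
    refine ⟨M + N + D, fun q hq => ?_⟩
    have hx := abs_le.1 (hM q hq)
    have hy := abs_le.1 (hN q hq)
    have hxy := abs_le.1 (hq.isQuasimorphism x y)
    rw [abs_le]
    constructor <;> linarith [hx.1, hx.2, hy.1, hy.2, hxy.1, hxy.2]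
  | inv x _ ih =>
    obtain ⟨M, hM⟩ := ih
    exact ⟨M, fun q hq => by rw [hq.map_inv, abs_neg]; exact hM q hq⟩

end IsHomogeneousQuasimorphism

end Quasimorphism

/-! ### Commuting conjugates -/

section CommutingConjugates

variable {G : Type*} [Group G]

/-- The conjugates of `K` by the powers `1, t, t ^ 2, …` commute with each other elementwise. -/
def CommutesWithConjugates (K : Subgroup G) (t : G) : Prop :=
  ∀ k : ℕ, 1 ≤ k → ∀ u ∈ K, ∀ v ∈ K, Commute u (MulAut.conj (t ^ k) v)

/-- Commuting `ℤ`-conjugates inside the commutator subgroup: every finitely generated subgroup of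
`commutator G` commutes with its conjugates by the powers of some element of `G`. -/
def HasCommutingConjugates (G : Type*) [Group G] : Prop :=
  ∀ K : Subgroup G, K.FG → K ≤ commutator G → ∃ t, CommutesWithConjugates K t

theorem CommutesWithConjugates.commute_conj_pow {K : Subgroup G} {t : G}
    (ht : CommutesWithConjugates K t) {i j : ℕ} (hij : i < j) (u v : K) :
    Commute (MulAut.conj (t ^ i) (u : G)) (MulAut.conj (t ^ j) (v : G)) := by
  have := (ht (j - i) (by lia) u u.2 v v.2).map (MulAut.conj (t ^ i))
  rwa [← MulAut.mul_apply, ← map_mul, ← pow_add, Nat.add_sub_cancel' hij.le] at this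

namespace IsHomogeneousQuasimorphism

variable {q : G → ℝ} {D : ℝ}

-- The homomorphism is the product of the conjugations by `t ^ i` for `i < n`.
theorem exists_monoidHom_map_eq_natCast_mul (h : IsHomogeneousQuasimorphism q D)
    {K : Subgroup G} {t : G} (ht : CommutesWithConjugates K t) (n : ℕ) :
    ∃ Φ : K →* G, (∀ u, q (Φ u) = n * q u) ∧
      ∀ j, n ≤ j → ∀ u v : K, Commute (Φ u) (MulAut.conj (t ^ j) (v : G)) := by
  induction n with
  | zero => exact ⟨1, fun u => by simp [h.map_one], fun _ _ _ _ => Commute.one_left _⟩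
  | succ n ih =>
    obtain ⟨Φ, hq, hcomm⟩ := ih
    let Ψ : K →* G := (MulAut.conj (t ^ n)).toMonoidHom.comp K.subtype
    refine ⟨(Φ.noncommCoprod Ψ (hcomm n le_rfl)).comp ((MonoidHom.id K).prod (MonoidHom.id K)),
      fun u => ?_, fun j hj u v => ?_⟩
    · change q (Φ u * MulAut.conj (t ^ n) (u : G)) = _
      rw [h.map_mul_of_commute (hcomm n le_rfl u u), hq, MulAut.conj_apply, h.map_conj]
      push_cast
      ring
    · exact (hcomm j (by lia) u v).mul_left (ht.commute_conj_pow (by lia) u v)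

theorem map_eq_zero_of_commutesWithConjugates (h : IsHomogeneousQuasimorphism q D)
    {K : Subgroup G} {t : G} (ht : CommutesWithConjugates K t) {x : G} (hx : x ∈ ⁅K, K⁆) :
    q x = 0 := by
  rw [← Subgroup.map_subtype_commutator] at hx
  obtain ⟨y, hy, rfl⟩ := hx
  obtain ⟨M, hM⟩ := exists_forall_abs_map_le_of_mem_commutator hy D
  refine eq_zero_of_forall_abs_natCast_mul_le (M := M) fun n => ?_
  obtain ⟨Φ, hΦ, -⟩ := h.exists_monoidHom_map_eq_natCast_mul ht n
  simpa only [hΦ, Subgroup.subtype_apply] using hM _ (h.comp Φ)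

end IsHomogeneousQuasimorphism

theorem exists_fg_le_mem_commutator {A : Subgroup G} {x : G} (hx : x ∈ ⁅A, A⁆) :
    ∃ S ≤ A, S.FG ∧ x ∈ ⁅S, S⁆ := by
  rw [Subgroup.commutator_def] at hx
  induction hx using Subgroup.closure_induction with
  | mem x hx =>
    obtain ⟨a, ha, b, hb, rfl⟩ := hx
    refine ⟨Subgroup.closure {a, b}, ?_, (Subgroup.fg_iff _).2 ⟨{a, b}, rfl, Set.toFinite _⟩, ?_⟩
    · rw [Subgroup.closure_le]
      rintro _ (rfl | rfl) <;> assumption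
    · exact Subgroup.commutator_mem_commutator (Subgroup.subset_closure (by simp))
        (Subgroup.subset_closure (by simp))
  | one => exact ⟨⊥, bot_le, Subgroup.FG.bot, one_mem _⟩
  | mul x y _ _ ihx ihy =>
    obtain ⟨S, hSA, hS, hxS⟩ := ihx
    obtain ⟨T, hTA, hT, hyT⟩ := ihy
    exact ⟨S ⊔ T, sup_le hSA hTA, hS.sup hT,
      mul_mem (Subgroup.commutator_mono le_sup_left le_sup_left hxS)
        (Subgroup.commutator_mono le_sup_right le_sup_right hyT)⟩
  | inv x _ ih =>
    obtain ⟨S, hSA, hS, hxS⟩ := ih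
    exact ⟨S, hSA, hS, inv_mem hxS⟩

theorem exists_fg_le_le_commutator {A K : Subgroup G} (hK : K.FG) (hKA : K ≤ ⁅A, A⁆) :
    ∃ S ≤ A, S.FG ∧ K ≤ ⁅S, S⁆ := by
  obtain ⟨s, rfl⟩ := hK
  rw [Subgroup.closure_le] at hKA
  choose! S hSA hS hxS using fun x (hx : x ∈ s) => exists_fg_le_mem_commutator (hKA hx)
  refine ⟨⨆ x ∈ s, S x, iSup₂_le hSA, Subgroup.FG.biSup_finset s S hS, ?_⟩
  rw [Subgroup.closure_le]
  exact fun x hx => Subgroup.commutator_mono (le_iSup₂ (f := fun x _ => S x) x hx)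
    (le_iSup₂ (f := fun x _ => S x) x hx) (hxS x hx)

theorem fg_map {G' : Type*} [Group G'] {K : Subgroup G} (hK : K.FG) (f : G →* G') :
    (K.map f).FG :=
  (Subgroup.fg_iff_submonoid_fg _).2 (((Subgroup.fg_iff_submonoid_fg K).1 hK).map f)

theorem hasCommutingConjugates_of_forall_le {Γ : Subgroup G}
    (h : ∀ S ≤ Γ, S.FG → ∀ K ≤ ⁅S, S⁆, K.FG → ∃ t ∈ S, CommutesWithConjugates K t) :
    HasCommutingConjugates Γ := by
  intro K hK hKΓ
  have hle : K.map Γ.subtype ≤ ⁅Γ, Γ⁆ :=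
    Γ.map_subtype_commutator ▸ Subgroup.map_mono hKΓ
  have hfg := fg_map hK Γ.subtype
  obtain ⟨S, hSΓ, hS, hKS⟩ := exists_fg_le_le_commutator hfg hle
  obtain ⟨t, ht, hcomm⟩ := h S hSΓ hS _ hKS hfg
  exact ⟨⟨t, hSΓ ht⟩, fun k hk u hu v hv => Subtype.ext <|
    hcomm k hk u (Subgroup.mem_map_of_mem Γ.subtype hu) v (Subgroup.mem_map_of_mem Γ.subtype hv)⟩

theorem IsHomogeneousQuasimorphism.map_mul {q : G → ℝ} {D : ℝ}
    (h : IsHomogeneousQuasimorphism q D) (hG : HasCommutingConjugates G) (x y : G) :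
    q (x * y) = q x + q y := by
  have hsecond : ∀ x ∈ ⁅commutator G, commutator G⁆, q x = 0 := fun x hx => by
    obtain ⟨S, hSle, hS, hxS⟩ := exists_fg_le_mem_commutator hx
    obtain ⟨t, ht⟩ := hG S hS hSle
    exact h.map_eq_zero_of_commutesWithConjugates ht hxS
  have hadd : ∀ x ∈ commutator G, ∀ y ∈ commutator G, q (x * y) = q x + q y := fun x hx y hy =>
    (h.comp (commutator G).subtype).map_mul_of_eq_zero_on_commutator
      (fun z hz => hsecond _ (Subgroup.map_subtype_commutator (commutator G) ▸
        Subgroup.mem_map_of_mem _ hz)) ⟨x, hx⟩ ⟨y, hy⟩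
  exact h.map_mul_of_eq_zero_on_commutator (h.map_eq_zero_of_additive_on_commutator hadd) x y

end CommutingConjugates

/-! ### The central extension defined by a bounded cocycle -/

namespace IsBounded2Cocycle

variable {G : Type*} [Group G] {ω : G → G → ℝ}

theorem apply_one_left (hω : IsBounded2Cocycle ω) (g : G) : ω 1 g = ω 1 1 := by
  have := hω.2 1 1 g
  simp only [one_mul] at this
  linarith

theorem apply_one_right (hω : IsBounded2Cocycle ω) (g : G) : ω g 1 = ω 1 1 := by
  have := hω.2 g 1 1
  simp only [mul_one] at this
  linarith

end IsBounded2Cocycle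

/-- The central extension of `G` by `ℝ` defined by the cocycle `ω`, or rather by the normalised
cocycle `ω - ω 1 1`, so that `⟨1, 0⟩` is the identity. -/
@[ext]
structure CentralExtension {G : Type*} [Group G] {ω : G → G → ℝ} (hω : IsBounded2Cocycle ω) where
  base : G
  fiber : ℝ

namespace CentralExtension

variable {G : Type*} [Group G] {ω : G → G → ℝ} {hω : IsBounded2Cocycle ω}

instance : Mul (CentralExtension hω) :=
  ⟨fun x y => ⟨x.base * y.base, x.fiber + y.fiber + (ω x.base y.base - ω 1 1)⟩⟩

instance : One (CentralExtension hω) := ⟨⟨1, 0⟩⟩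

instance : Inv (CentralExtension hω) :=
  ⟨fun x => ⟨x.base⁻¹, -x.fiber - (ω x.base⁻¹ x.base - ω 1 1)⟩⟩

theorem mul_def (x y : CentralExtension hω) :
    x * y = ⟨x.base * y.base, x.fiber + y.fiber + (ω x.base y.base - ω 1 1)⟩ := rfl

theorem one_def : (1 : CentralExtension hω) = ⟨1, 0⟩ := rfl

theorem inv_def (x : CentralExtension hω) :
    x⁻¹ = ⟨x.base⁻¹, -x.fiber - (ω x.base⁻¹ x.base - ω 1 1)⟩ := rfl

instance : Group (CentralExtension hω) :=
  Group.ofLeftAxioms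
    (fun x y z => by
      simp only [mul_def, CentralExtension.mk.injEq, mul_assoc, true_and]
      linarith [hω.2 x.base y.base z.base])
    (fun x => by simp [mul_def, one_def, hω.apply_one_left])
    (fun x => by simp [mul_def, one_def, inv_def, sub_eq_add_neg])

variable (hω) in
/-- The projection of the central extension onto `G`. -/
def proj : CentralExtension hω →* G where
  toFun := base
  map_one' := rfl
  map_mul' _ _ := rfl

theorem proj_surjective : Function.Surjective (proj hω) := fun g => ⟨⟨g, 0⟩, rfl⟩

theorem mul_fiber_eq (g : G) (s : ℝ) :
    (⟨g, 0⟩ * ⟨1, s⟩ : CentralExtension hω) = ⟨g, s⟩ := by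
  simp [mul_def, hω.apply_one_right]

theorem commute_fiber (x : CentralExtension hω) (s : ℝ) : Commute x ⟨1, s⟩ := by
  simp [commute_iff_eq, mul_def, hω.apply_one_left, hω.apply_one_right, add_comm]

theorem fiber_mul_fiber (s r : ℝ) :
    (⟨1, s⟩ * ⟨1, r⟩ : CentralExtension hω) = ⟨1, s + r⟩ := by
  simp [mul_def]

theorem fiber_pow (s : ℝ) (n : ℕ) :
    (⟨1, s⟩ : CentralExtension hω) ^ n = ⟨1, n * s⟩ := by
  induction n with
  | zero => simp [one_def]
  | succ n ih => rw [pow_succ, ih, fiber_mul_fiber]; push_cast; rw [add_one_mul]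

variable (hω) in
-- The fibre coordinate is a quasimorphism whose defect is the bound of the normalised cocycle.
theorem exists_homogeneousQuasimorphism :
    ∃ (q : CentralExtension hω → ℝ) (D : ℝ), IsHomogeneousQuasimorphism q D ∧
      (∀ x, q x = q ⟨x.base, 0⟩ + x.fiber) ∧ ∃ C, ∀ g, |q ⟨g, 0⟩| ≤ C := by
  obtain ⟨C, hC⟩ := hω.1
  have hfiber : IsQuasimorphism (fiber : CentralExtension hω → ℝ) (2 * C) := fun x y => by
    have hxy := abs_le.1 (hC x.base y.base)
    have hone := abs_le.1 (hC 1 1)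
    rw [mul_def, abs_le]
    constructor <;> linarith [hxy.1, hxy.2, hone.1, hone.2]
  obtain ⟨q, hqf, hq⟩ := hfiber.exists_homogenization
  have hqfiber (s : ℝ) : q ⟨1, s⟩ = s := by
    suffices q ⟨1, s⟩ - s = 0 by linarith
    refine eq_zero_of_forall_abs_natCast_mul_le (M := 2 * C) fun n => ?_
    simpa only [← hq.map_pow, fiber_pow, mul_sub] using hqf ⟨1, n * s⟩
  refine ⟨q, _, hq, fun x => ?_, 2 * C, fun g => by simpa using hqf ⟨g, 0⟩⟩
  rw [← hqfiber x.fiber, ← hq.map_mul_of_commute (commute_fiber _ _), mul_fiber_eq]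

-- The commutator of two lifts is central, and its fibre coordinate is read off by the conjugation
-- invariant quasimorphism `q`.
theorem commute_of_commute_proj {x y : CentralExtension hω}
    (h : Commute (proj hω x) (proj hω y)) : Commute x y := by
  obtain ⟨q, D, hq, hfiber, -⟩ := exists_homogeneousQuasimorphism hω
  have hbase : (y * x * y⁻¹).base = x.base := h.symm.mul_inv_cancel
  have hconj := hq.map_conj x y
  rw [hfiber, hbase, hfiber x, add_right_inj] at hconj
  exact (mul_inv_eq_iff_eq_mul.1 (CentralExtension.ext hbase hconj)).symm

theorem hasCommutingConjugates (hG : HasCommutingConjugates G) :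
    HasCommutingConjugates (CentralExtension hω) := by
  intro K hK hKE
  have hle : K.map (proj hω) ≤ commutator G :=
    (Subgroup.map_mono hKE).trans <| by
      rw [commutator_def, Subgroup.map_commutator]
      exact Subgroup.commutator_mono le_top le_top
  obtain ⟨t, ht⟩ := hG _ (fg_map hK _) hle
  obtain ⟨T, rfl⟩ := proj_surjective (hω := hω) t
  refine ⟨T, fun k hk u hu v hv => commute_of_commute_proj ?_⟩
  rw [MulAut.conj_apply, map_mul, map_mul, map_inv, map_pow]
  exact ht k hk _ (Subgroup.mem_map_of_mem _ hu) _ (Subgroup.mem_map_of_mem _ hv)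

end CentralExtension

theorem HasCommutingConjugates.is2BoundedlyAcyclic {G : Type*} [Group G]
    (hG : HasCommutingConjugates G) : Is2BoundedlyAcyclic G := by
  intro ω hω
  obtain ⟨q, D, hq, hfiber, C, hC⟩ := CentralExtension.exists_homogeneousQuasimorphism hω
  refine ⟨fun g => q ⟨g, 0⟩ + ω 1 1, ⟨C + |ω 1 1|, fun g =>
    (abs_add_le _ _).trans (by gcongr; exact hC g)⟩, fun g h => ?_⟩
  have hmul := hq.map_mul (CentralExtension.hasCommutingConjugates hG) ⟨g, 0⟩ ⟨h, 0⟩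
  rw [CentralExtension.mul_def, hfiber] at hmul
  linarith

/-! ### Displacing compact sets away from the fixed points -/

section Displacement

variable {X : Type*}

theorem mem_fixedPoints_subgroup_iff [LE X] {Γ : Subgroup (X ≃o X)} {z : X} :
    z ∈ fixedPoints Γ X ↔ ∀ γ ∈ Γ, γ z = z := by
  simp [mem_fixedPoints, Subgroup.smul_def]

theorem mem_fixedPoints_closure_iff [LE X] {s : Set (X ≃o X)} {z : X} :
    z ∈ fixedPoints (Subgroup.closure s) X ↔ ∀ γ ∈ s, γ z = z :=
  mem_fixedPoints_subgroup_iff.trans (Subgroup.closure_le (stabilizer (X ≃o X) z))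

theorem isClosed_fixedPoints_subgroup [LinearOrder X] [TopologicalSpace X] [OrderTopology X]
    (Γ : Subgroup (X ≃o X)) : IsClosed (fixedPoints Γ X) := by
  simp only [fixedPoints, Set.ofPred_forall]
  exact isClosed_iInter fun γ => isClosed_eq γ.1.continuous continuous_id

theorem fixedPoints_mem_nhds_of_fg [LE X] [TopologicalSpace X] {K : Subgroup (X ≃o X)}
    (hK : K.FG) {z : X} (h : ∀ u ∈ K, ∀ᶠ y in 𝓝 z, u y = y) : fixedPoints K X ∈ 𝓝 z := by
  obtain ⟨s, rfl⟩ := hK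
  have : ∀ᶠ y in 𝓝 z, ∀ u ∈ s, u y = y :=
    (eventually_all_finset s).2 fun u hu => h u (Subgroup.subset_closure hu)
  exact this.mono fun y hy => mem_fixedPoints_closure_iff.2 hy

-- Otherwise the supremum of the orbit of `a` would be a fixed point in `[a, b]`.
theorem exists_lt_apply_of_disjoint_fixedPoints [ConditionallyCompleteLinearOrder X]
    {Γ : Subgroup (X ≃o X)} {a b : X}
    (h : Disjoint (Set.Icc a b) (fixedPoints Γ X)) : ∃ γ ∈ Γ, b < γ a := by
  by_contra! hle
  let O : Set X := orbit Γ a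
  have hne : O.Nonempty := nonempty_orbit a
  have hb : b ∈ upperBounds O := by
    rintro _ ⟨γ, rfl⟩
    exact hle γ γ.2
  have hfix : sSup O ∈ fixedPoints Γ X := mem_fixedPoints_subgroup_iff.2 fun γ hγ => by
    rw [γ.map_csSup' hne ⟨b, hb⟩]
    exact congrArg sSup (smul_orbit (⟨γ, hγ⟩ : Γ) a)
  exact Set.disjoint_left.1 h
    ⟨le_csSup ⟨b, hb⟩ (mem_orbit_self a), csSup_le hne hb⟩ hfix

theorem apply_mem_Icc [Preorder X] {Γ : Subgroup (X ≃o X)} {p q : X}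
    (hp : p ∈ fixedPoints Γ X) (hq : q ∈ fixedPoints Γ X) {γ : X ≃o X} (hγ : γ ∈ Γ) {y : X}
    (hy : y ∈ Set.Icc p q) : γ y ∈ Set.Icc p q := by
  rw [← mem_fixedPoints_subgroup_iff.1 hp γ hγ, ← mem_fixedPoints_subgroup_iff.1 hq γ hγ]
  exact ⟨γ.monotone hy.1, γ.monotone hy.2⟩

theorem commute_of_forall_Icc_eq_or_eq [Preorder X] {Γ : Subgroup (X ≃o X)} {p q : X}
    (hp : p ∈ fixedPoints Γ X) (hq : q ∈ fixedPoints Γ X)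
    (hfaithful : ∀ γ ∈ Γ, (∀ y ∈ Set.Icc p q, γ y = y) → γ = 1) {u w : X ≃o X}
    (hu : u ∈ Γ) (hw : w ∈ Γ) (h : ∀ y ∈ Set.Icc p q, u y = y ∨ w y = y) : Commute u w := by
  have hcomm (y) (hy : y ∈ Set.Icc p q) : u (w y) = w (u y) := by
    rcases h y hy with huy | hwy
    · rcases h (w y) (apply_mem_Icc hp hq hw hy) with h' | h'
      · rw [h', huy]
      · rw [w.injective h', huy, w.injective h']
    · rcases h (u y) (apply_mem_Icc hp hq hu hy) with h' | h'
      · rw [hwy, u.injective h', hwy]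
      · rw [h', hwy]
  rw [← commutatorElement_eq_one_iff_commute]
  refine hfaithful _ (mul_mem (mul_mem (mul_mem hu hw) (inv_mem hu)) (inv_mem hw)) fun y hy => ?_
  have hy' := hcomm _ (apply_mem_Icc hp hq (mul_mem (inv_mem hu) (inv_mem hw)) hy)
  simpa [commutatorElement_def] using hy'

section LinearOrder

variable [LinearOrder X]

/-- `t` moves the interval `[a, b]` off itself. -/
def Displaces (t : X ≃o X) (a b : X) : Prop :=
  b < t a ∨ t b < a

theorem lt_pow_apply {t : X ≃o X} {a b : X} (hab : a ≤ b) (h : b < t a) {k : ℕ} (hk : 1 ≤ k) :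
    b < (t ^ k) a := by
  induction k, hk using Nat.le_induction with
  | base => rwa [pow_one]
  | succ k _ ih => exact pow_succ' t k ▸ h.trans (t.lt_iff_lt.2 (hab.trans_lt ih))

theorem Displaces.pow {t : X ≃o X} {a b : X} (h : Displaces t a b) (hab : a ≤ b) {k : ℕ}
    (hk : 1 ≤ k) : Displaces (t ^ k) a b := by
  refine h.imp (lt_pow_apply hab · hk) fun h => ?_
  have hinv : b < ((t ^ k)⁻¹) a := inv_pow t k ▸ lt_pow_apply hab (t.lt_symm_apply.2 h) hk
  exact (t ^ k).lt_symm_apply.1 hinv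

theorem disjoint_Icc_fixedPoints_hull {Γ : Subgroup (X ≃o X)} {h : X ≃o X} (hh : h ∈ Γ) {a b : X}
    (hab : Disjoint (Set.Icc a b) (fixedPoints Γ X)) :
    Disjoint (Set.Icc (min a (h a)) (max b (h b))) (fixedPoints Γ X) := by
  refine Set.disjoint_left.2 fun z hz hfix => ?_
  have hz' : h z = z := mem_fixedPoints_subgroup_iff.1 hfix h hh
  refine (Set.disjoint_left.1 hab · hfix) ⟨?_, ?_⟩
  · rcases min_le_iff.1 hz.1 with ha | ha
    · exact ha
    · rwa [← hz', h.le_iff_le] at ha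
  · rcases le_max_iff.1 hz.2 with hb | hb
    · exact hb
    · rwa [← hz', h.le_iff_le] at hb

end LinearOrder

variable [ConditionallyCompleteLinearOrder X]

-- If `g` displaces all intervals but `[a j, b j]`, and `h` displaces `[a j, b j]`, then `g * h⁻¹`
-- or `h * g` displaces all of them, provided that `g` displaces slightly larger intervals.
theorem exists_forall_displaces {ι : Type*} {Γ : Subgroup (X ≃o X)} (s : Finset ι) (a b : ι → X)
    (hab : ∀ i ∈ s, a i ≤ b i)
    (hfix : ∀ i ∈ s, Disjoint (Set.Icc (a i) (b i)) (fixedPoints Γ X)) :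
    ∃ t ∈ Γ, ∀ i ∈ s, Displaces t (a i) (b i) := by
  classical
  induction s using Finset.induction_on generalizing a b with
  | empty => exact ⟨1, one_mem _, by simp⟩
  | insert j s _ ih =>
    simp only [Finset.forall_mem_insert] at hab hfix
    obtain ⟨h, hh, hlt⟩ := exists_lt_apply_of_disjoint_fixedPoints hfix.1
    obtain ⟨g, hg, hdisp⟩ := ih (fun i => min (a i) (h⁻¹ (a i))) (fun i => max (b i) (h⁻¹ (b i)))
      (fun i hi => (min_le_left _ _).trans ((hab.2 i hi).trans (le_max_left _ _)))
      (fun i hi => disjoint_Icc_fixedPoints_hull (inv_mem hh) (hfix.2 i hi))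
    have hle (i : ι) : min (a i) (h⁻¹ (a i)) ≤ a i := min_le_left _ _
    have hinv_le (i : ι) : min (a i) (h⁻¹ (a i)) ≤ h⁻¹ (a i) := min_le_right _ _
    have le_hle (i : ι) : b i ≤ max (b i) (h⁻¹ (b i)) := le_max_left _ _
    have le_hinv (i : ι) : h⁻¹ (b i) ≤ max (b i) (h⁻¹ (b i)) := le_max_right _ _
    rcases le_or_gt (g (a j)) (a j) with hgj | hgj
    · refine ⟨g * h⁻¹, mul_mem hg (inv_mem hh), (Finset.forall_mem_insert ..).2
        ⟨.inr ((g.lt_iff_lt.2 (h.symm_apply_lt.2 hlt)).trans_le hgj), fun i hi => ?_⟩⟩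
      refine (hdisp i hi).imp (fun hd => ?_) fun hd => ?_
      · exact (le_hle i).trans_lt (hd.trans_le (g.le_iff_le.2 (hinv_le i)))
      · exact (g.le_iff_le.2 (le_hinv i)).trans_lt (hd.trans_le (hle i))
    · refine ⟨h * g, mul_mem hh hg, (Finset.forall_mem_insert ..).2
        ⟨.inl (hlt.trans (h.lt_iff_lt.2 hgj)), fun i hi => ?_⟩⟩
      refine (hdisp i hi).imp (fun hd => ?_) fun hd => ?_
      · exact h.symm_apply_lt.1 ((le_hinv i).trans_lt (hd.trans_le (g.le_iff_le.2 (hle i))))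
      · exact h.lt_symm_apply.1 ((g.le_iff_le.2 (le_hle i)).trans_lt (hd.trans_le (hinv_le i)))

variable [TopologicalSpace X] [OrderTopology X]

-- Cover `C` by finitely many intervals avoiding the fixed points. An element displacing the hulls
-- of all pairs of these intervals lying in the same gap between fixed points moves `C` off itself.
theorem exists_forall_pow_apply_notMem {Γ : Subgroup (X ≃o X)} {C : Set X} (hC : IsCompact C)
    (hfix : Disjoint C (fixedPoints Γ X)) :
    ∃ t ∈ Γ, ∀ k : ℕ, 1 ≤ k → ∀ y ∈ C, (t ^ k) y ∉ C := by
  classical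
  have hnhds (c : X) (hc : c ∈ C) :
      ∃ l r, Set.Icc l r ∈ 𝓝 c ∧ Disjoint (Set.Icc l r) (fixedPoints Γ X) := by
    obtain ⟨l, r, -, hmem, hsub⟩ := exists_Icc_mem_subset_of_mem_nhds
      ((isClosed_fixedPoints_subgroup Γ).isOpen_compl.mem_nhds (Set.disjoint_left.1 hfix hc))
    exact ⟨l, r, hmem, Set.subset_compl_iff_disjoint_right.1 hsub⟩
  choose! l r hmem hdisj using hnhds
  obtain ⟨s, hsC, hcover⟩ := hC.elim_nhds_subcover (fun c => Set.Icc (l c) (r c)) hmem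
  have hle (c) (hc : c ∈ s) : l c ≤ r c :=
    let h := mem_of_mem_nhds (hmem c (hsC c hc)); h.1.trans h.2
  let gap : Finset (X × X) := (s ×ˢ s).filter fun p =>
    Disjoint (Set.Icc (min (l p.1) (l p.2)) (max (r p.1) (r p.2))) (fixedPoints Γ X)
  obtain ⟨t, ht, hdisp⟩ := exists_forall_displaces gap
    (fun p => min (l p.1) (l p.2)) (fun p => max (r p.1) (r p.2))
    (fun p hp => (min_le_left _ _).trans ((hle p.1 (by grind)).trans (le_max_left _ _)))
    (fun p hp => (Finset.mem_filter.1 hp).2)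
  refine ⟨t, ht, fun k hk y hy hty => ?_⟩
  obtain ⟨c, hc, hyc⟩ := Set.mem_iUnion₂.1 (hcover hy)
  obtain ⟨d, hd, hyd⟩ := Set.mem_iUnion₂.1 (hcover hty)
  have hgap : (c, d) ∈ gap := Finset.mem_filter.2 ⟨Finset.mk_mem_product hc hd,
    Set.disjoint_left.2 fun z hz hzfix => by
      have hzt : (t ^ k) z = z := mem_fixedPoints_subgroup_iff.1 hzfix _ (pow_mem ht k)
      have hzc := (Set.disjoint_left.1 (hdisj c (hsC c hc)) · hzfix)
      have hzd := (Set.disjoint_left.1 (hdisj d (hsC d hd)) · hzfix)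
      have hyz := (t ^ k).lt_iff_lt (x := y) (y := z)
      rw [hzt] at hyz
      grind⟩
  have hy_mem : min (l c) (l d) ≤ y ∧ y ≤ max (r c) (r d) := by grind
  have hty_mem : min (l c) (l d) ≤ (t ^ k) y ∧ (t ^ k) y ≤ max (r c) (r d) := by grind
  rcases (hdisp _ hgap).pow (hy_mem.1.trans hy_mem.2) hk with h | h
  · exact (h.trans_le ((t ^ k).le_iff_le.2 hy_mem.1)).not_ge hty_mem.2
  · exact (((t ^ k).le_iff_le.2 hy_mem.2).trans_lt h).not_ge hty_mem.1

theorem exists_commutesWithConjugates {Γ K : Subgroup (X ≃o X)} (hKΓ : K ≤ Γ) {p q : X}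
    (hp : p ∈ fixedPoints Γ X) (hq : q ∈ fixedPoints Γ X)
    (hfaithful : ∀ γ ∈ Γ, (∀ y ∈ Set.Icc p q, γ y = y) → γ = 1)
    (hK : ∀ z ∈ fixedPoints Γ X, fixedPoints K X ∈ 𝓝 z) :
    ∃ t ∈ Γ, CommutesWithConjugates K t := by
  obtain ⟨t, ht, hdisj⟩ := exists_forall_pow_apply_notMem (Γ := Γ)
    (C := Set.Icc p q ∩ closure (fixedPoints K X)ᶜ) (isCompact_Icc.inter_right isClosed_closure)
    (Set.disjoint_left.2 fun z hz hzfix => by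
      rw [closure_compl] at hz
      exact hz.2 (mem_interior_iff_mem_nhds.2 (hK z hzfix)))
  have hmoved (u) (hu : u ∈ K) {y} (hy : y ∈ Set.Icc p q) (huy : u y ≠ y) :
      y ∈ Set.Icc p q ∩ closure (fixedPoints K X)ᶜ :=
    ⟨hy, subset_closure fun hfix => huy (mem_fixedPoints_subgroup_iff.1 hfix u hu)⟩
  refine ⟨t, ht, fun k hk u hu v hv => ?_⟩
  have htk : (t ^ k)⁻¹ ∈ Γ := inv_mem (pow_mem ht k)
  refine commute_of_forall_Icc_eq_or_eq hp hq hfaithful (hKΓ hu)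
    (mul_mem (mul_mem (pow_mem ht k) (hKΓ hv)) htk) fun y hy => ?_
  by_contra! hne
  have hvy : v ((t ^ k)⁻¹ y) ≠ (t ^ k)⁻¹ y := fun h => hne.2 <| by
    rw [MulAut.conj_apply, RelIso.mul_apply, RelIso.mul_apply, h, RelIso.apply_inv_self]
  refine hdisj k hk _ (hmoved v hv (apply_mem_Icc hp hq htk hy) hvy) ?_
  rw [RelIso.apply_inv_self]
  exact hmoved u hu hy hne.1

end Displacement

/-! ### Piecewise linear germs -/

section OneSidedNeighbourhoods

variable {X : Type*} [LinearOrder X] [TopologicalSpace X] [OrderTopology X]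

theorem tendsto_nhdsLE (e : X ≃o X) (z : X) : Tendsto e (𝓝[≤] z) (𝓝[≤] (e z)) :=
  e.continuous.continuousWithinAt.tendsto_nhdsWithin fun _ hy => e.monotone hy

theorem tendsto_nhdsGE (e : X ≃o X) (z : X) : Tendsto e (𝓝[≥] z) (𝓝[≥] (e z)) :=
  e.continuous.continuousWithinAt.tendsto_nhdsWithin fun _ hy => e.monotone hy

end OneSidedNeighbourhoods

section PiecewiseLinear

variable {𝕜 : Type*} [Field 𝕜]

/-- Along the filter `l`, which stands for the germ of a side of `z`, the function `f` is given by
a nonconstant affine formula extending to `z`. -/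
def IsAffineAlong (f : 𝕜 → 𝕜) (l : Filter 𝕜) (z : 𝕜) : Prop :=
  ∃ c ≠ 0, ∀ᶠ y in l, f y = f z + c * (y - z)

theorem IsAffineAlong.comp {f g : 𝕜 → 𝕜} {l l' : Filter 𝕜} {z : 𝕜}
    (hf : IsAffineAlong f l' (g z)) (hg : IsAffineAlong g l z) (hgl : Tendsto g l l') :
    IsAffineAlong (f ∘ g) l z := by
  obtain ⟨c, hc, hf⟩ := hf
  obtain ⟨d, hd, hg⟩ := hg
  refine ⟨c * d, mul_ne_zero hc hd, ?_⟩
  filter_upwards [hgl.eventually hf, hg] with y hfy hgy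
  rw [Function.comp_apply, hfy, hgy, Function.comp_apply]
  ring

theorem IsAffineAlong.symm {e : 𝕜 ≃ 𝕜} {l l' : Filter 𝕜} {z : 𝕜}
    (he : IsAffineAlong e l (e.symm z)) (hl : Tendsto e.symm l' l) :
    IsAffineAlong e.symm l' z := by
  obtain ⟨c, hc, he⟩ := he
  refine ⟨c⁻¹, inv_ne_zero hc, ?_⟩
  filter_upwards [hl.eventually he] with y hy
  rw [e.apply_symm_apply, e.apply_symm_apply, ← sub_eq_iff_eq_add'] at hy
  rw [hy, inv_mul_cancel_left₀ hc, add_sub_cancel]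

theorem IsAffineAlong.eventually_apply_comm {f g : 𝕜 → 𝕜} {l : Filter 𝕜} {z : 𝕜}
    (hf : IsAffineAlong f l z) (hg : IsAffineAlong g l z) (hfz : f z = z) (hgz : g z = z)
    (hfl : Tendsto f l l) (hgl : Tendsto g l l) : ∀ᶠ y in l, f (g y) = g (f y) := by
  obtain ⟨c, -, hf⟩ := hf
  obtain ⟨d, -, hg⟩ := hg
  filter_upwards [hf, hg, hgl.eventually hf, hfl.eventually hg] with y hfy hgy hfgy hgfy
  rw [hfgy, hgfy, hfy, hgy, hfz, hgz]
  ring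

variable [LinearOrder 𝕜] [TopologicalSpace 𝕜] [OrderTopology 𝕜]

variable (𝕜) in
/-- The group of order automorphisms of `𝕜` which near each point are affine on either side. -/
def plSubgroup : Subgroup (𝕜 ≃o 𝕜) where
  carrier := {f | ∀ z, IsAffineAlong f (𝓝[≤] z) z ∧ IsAffineAlong f (𝓝[≥] z) z}
  one_mem' z := ⟨⟨1, one_ne_zero, by simp⟩, ⟨1, one_ne_zero, by simp⟩⟩
  mul_mem' {f g} hf hg z :=
    ⟨(hf (g z)).1.comp (hg z).1 (tendsto_nhdsLE g z),
      (hf (g z)).2.comp (hg z).2 (tendsto_nhdsGE g z)⟩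
  inv_mem' {f} hf z :=
    ⟨(hf (f.symm z)).1.symm (e := f.toEquiv) (tendsto_nhdsLE f.symm z),
      (hf (f.symm z)).2.symm (e := f.toEquiv) (tendsto_nhdsGE f.symm z)⟩

theorem eventually_apply_comm_of_mem_plSubgroup {f g : 𝕜 ≃o 𝕜} (hf : f ∈ plSubgroup 𝕜)
    (hg : g ∈ plSubgroup 𝕜) {z : 𝕜} (hfz : f z = z) (hgz : g z = z) :
    ∀ᶠ y in 𝓝 z, f (g y) = g (f y) := by
  have hle := (hf z).1.eventually_apply_comm (hg z).1 hfz hgz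
    (by simpa only [hfz] using tendsto_nhdsLE f z) (by simpa only [hgz] using tendsto_nhdsLE g z)
  have hge := (hf z).2.eventually_apply_comm (hg z).2 hfz hgz
    (by simpa only [hfz] using tendsto_nhdsGE f z) (by simpa only [hgz] using tendsto_nhdsGE g z)
  rw [← nhdsLE_sup_nhdsGE]
  exact eventually_sup.2 ⟨hle, hge⟩

theorem eventually_eq_self_of_mem_commutator {Γ : Subgroup (𝕜 ≃o 𝕜)} (hΓ : Γ ≤ plSubgroup 𝕜)
    {z : 𝕜} (hz : z ∈ fixedPoints Γ 𝕜) {u : 𝕜 ≃o 𝕜} (hu : u ∈ ⁅Γ, Γ⁆) :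
    ∀ᶠ y in 𝓝 z, u y = y := by
  rw [mem_fixedPoints_subgroup_iff] at hz
  rw [Subgroup.commutator_def] at hu
  induction hu using Subgroup.closure_induction with
  | mem u hu =>
    obtain ⟨f, hf, g, hg, rfl⟩ := hu
    have hinv := (g * f)⁻¹.continuous.tendsto z
    rw [hz _ (inv_mem (mul_mem hg hf))] at hinv
    have hcomm := eventually_apply_comm_of_mem_plSubgroup (hΓ hf) (hΓ hg) (hz f hf) (hz g hg)
    filter_upwards [hinv.eventually hcomm] with y hy
    simpa [commutatorElement_def] using hy
  | one => exact .of_forall fun _ => rfl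
  | mul u v _ _ ihu ihv =>
    filter_upwards [ihu, ihv] with y hu hv
    rw [RelIso.mul_apply, hv, hu]
  | inv u _ ih =>
    filter_upwards [ih] with y hu
    exact u.symm_apply_eq.2 hu.symm

end PiecewiseLinear

/-! ### Homeomorphisms of the line determined by a uniformly recurrent sequence -/

section Local

variable {α : Type*} {σ : ℤ → α}

/-- Every finite pattern of the two-sided sequence `σ` recurs with bounded gaps. -/
def IsUniformlyRecurrent (σ : ℤ → α) : Prop :=
  ∀ s : Finset ℤ, ∃ N : ℕ, ∀ k : ℤ, ∃ e ∈ Set.Icc k (k + N), ∀ m ∈ s, σ (m + e) = σ m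

/-- `f` moves points by at most `R`, and its value at `y`, relative to `y`, depends only on the
restriction of `σ` to the integers at distance at most `R` from `y`. -/
structure IsLocal (σ : ℤ → α) (f : ℝ → ℝ) (R : ℝ) : Prop where
  abs_apply_sub_le : ∀ y, |f y - y| ≤ R
  map_add : ∀ (y : ℝ) (e : ℤ), (∀ m : ℤ, |m - y| ≤ R → σ (m + e) = σ m) → f (y + e) = f y + e

namespace IsLocal

theorem mono {f : ℝ → ℝ} {R R' : ℝ} (h : IsLocal σ f R) (hR : R ≤ R') : IsLocal σ f R' where
  abs_apply_sub_le y := (h.abs_apply_sub_le y).trans hR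
  map_add y e he := h.map_add y e fun m hm => he m (hm.trans hR)

theorem comp {f g : ℝ → ℝ} {R R' : ℝ} (hf : IsLocal σ f R) (hg : IsLocal σ g R') :
    IsLocal σ (f ∘ g) (R + R') where
  abs_apply_sub_le y :=
    (abs_sub_le _ (g y) _).trans (add_le_add (hf.abs_apply_sub_le _) (hg.abs_apply_sub_le y))
  map_add y e he := by
    have hgy := hg.abs_apply_sub_le y
    have hR : 0 ≤ R := (abs_nonneg _).trans (hf.abs_apply_sub_le y)
    rw [Function.comp_apply, hg.map_add y e fun m hm => he m (by linarith),
      hf.map_add (g y) e fun m hm => he m ?_, Function.comp_apply]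
    exact (abs_sub_le _ (g y) _).trans (add_le_add hm hgy)

theorem symm {f : ℝ ≃ ℝ} {R : ℝ} (h : IsLocal σ f R) : IsLocal σ f.symm (R + R) := by
  have hle (y : ℝ) : |f.symm y - y| ≤ R := by
    simpa only [f.apply_symm_apply, abs_sub_comm] using h.abs_apply_sub_le (f.symm y)
  refine ⟨fun y => (hle y).trans (le_add_of_nonneg_left ((abs_nonneg _).trans (hle y))),
    fun y e he => ?_⟩
  rw [f.symm_apply_eq, h.map_add (f.symm y) e fun m hm => he m ?_, f.apply_symm_apply]
  exact (abs_sub_le _ (f.symm y) _).trans (add_le_add hm (hle y))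

end IsLocal

/-- The group of order automorphisms of `ℝ` that are local with respect to `σ` for some radius. -/
def localSubgroup (σ : ℤ → α) : Subgroup (ℝ ≃o ℝ) where
  carrier := {f | ∃ R, IsLocal σ f R}
  one_mem' := ⟨0, fun y => by simp, fun y e _ => rfl⟩
  mul_mem' := fun ⟨_, hf⟩ ⟨_, hg⟩ => ⟨_, hf.comp hg⟩
  inv_mem' {f} := fun ⟨_, hf⟩ => ⟨_, hf.symm (f := f.toEquiv)⟩

theorem exists_forall_isLocal {s : Finset (ℝ ≃o ℝ)} (hs : ∀ f ∈ s, f ∈ localSubgroup σ) :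
    ∃ R, ∀ f ∈ s, IsLocal σ f R := by
  choose! R hR using hs
  obtain ⟨M, hM⟩ := (s.image R).exists_le
  exact ⟨M, fun f hf => (hR f hf).mono (hM _ (Finset.mem_image_of_mem R hf))⟩

theorem exists_mem_fixedPoints_of_isUniformlyRecurrent (hσ : IsUniformlyRecurrent σ)
    {s : Finset (ℝ ≃o ℝ)} {R : ℝ} (hs : ∀ f ∈ s, IsLocal σ f R) {x : ℝ} (hx : ∀ f ∈ s, f x = x) :
    ∃ L : ℝ, ∀ y, (∃ p ∈ Set.Icc (y - L) y, ∀ f ∈ s, f p = p) ∧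
      ∃ p ∈ Set.Icc y (y + L), ∀ f ∈ s, f p = p := by
  obtain ⟨N, hN⟩ := hσ (Finset.Icc ⌈x - R⌉ ⌊x + R⌋)
  have hfix {e : ℤ} (he : ∀ m ∈ Finset.Icc ⌈x - R⌉ ⌊x + R⌋, σ (m + e) = σ m) (f) (hf : f ∈ s) :
      f (x + e) = x + e := by
    rw [(hs f hf).map_add x e fun m hm => he m ?_, hx f hf]
    rw [abs_sub_le_iff] at hm
    exact Finset.mem_Icc.2 ⟨Int.ceil_le.2 (by linarith), Int.le_floor.2 (by linarith)⟩
  refine ⟨N + 1, fun y => ⟨?_, ?_⟩⟩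
  · obtain ⟨e, ⟨hle, hge⟩, he⟩ := hN (⌊y - x⌋ - N)
    have hle' : ((⌊y - x⌋ - N : ℤ) : ℝ) ≤ e := mod_cast hle
    have hge' : (e : ℝ) ≤ ⌊y - x⌋ := mod_cast sub_add_cancel ⌊y - x⌋ (N : ℤ) ▸ hge
    push_cast at hle'
    exact ⟨x + e, ⟨by linarith [Int.sub_one_lt_floor (y - x)],
      by linarith [Int.floor_le (y - x)]⟩, hfix he⟩
  · obtain ⟨e, ⟨hle, hge⟩, he⟩ := hN ⌈y - x⌉
    have hle' : (⌈y - x⌉ : ℝ) ≤ e := mod_cast hle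
    have hge' : (e : ℝ) ≤ ⌈y - x⌉ + N := mod_cast hge
    exact ⟨x + e, ⟨by linarith [Int.le_ceil (y - x)],
      by linarith [Int.ceil_lt_add_one (y - x)]⟩, hfix he⟩

-- There are finitely many patterns of a given length; move each of them to a chosen occurrence.
theorem exists_translate_bounded [Finite α] (σ : ℤ → α) (L : ℝ) :
    ∃ B : ℝ, ∀ y : ℝ, ∃ e : ℤ, |y + e| ≤ B ∧ ∀ m : ℤ, |m - y| ≤ L → σ (m + e) = σ m := by
  let pattern (k : ℤ) (i : Set.Icc (-⌈L⌉) (⌈L⌉ + 1)) : α := σ (k + i)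
  let rep := Function.invFun pattern
  obtain ⟨B, hB⟩ := (Set.finite_range fun w => |(rep w : ℝ)|).bddAbove
  refine ⟨B + 1, fun y => ⟨rep (pattern ⌊y⌋) - ⌊y⌋, ?_, fun m hm => ?_⟩⟩
  · have hrep := abs_le.1 (hB (Set.mem_range_self (pattern ⌊y⌋)))
    push_cast
    rw [abs_le]
    constructor <;> linarith [Int.floor_le y, Int.lt_floor_add_one y]
  · have hrep : pattern (rep (pattern ⌊y⌋)) = pattern ⌊y⌋ := Function.invFun_eq ⟨⌊y⌋, rfl⟩
    rw [abs_sub_le_iff] at hm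
    have hlower : -⌈L⌉ ≤ m - ⌊y⌋ := by
      have : ((-⌈L⌉ : ℤ) : ℝ) ≤ (m - ⌊y⌋ : ℤ) := by
        push_cast; linarith [Int.floor_le y, Int.le_ceil L]
      exact_mod_cast this
    have hupper : m - ⌊y⌋ ≤ ⌈L⌉ + 1 := by
      have : ((m - ⌊y⌋ : ℤ) : ℝ) ≤ (⌈L⌉ + 1 : ℤ) := by
        push_cast; linarith [Int.lt_floor_add_one y, Int.le_ceil L]
      exact_mod_cast this
    have := congrFun hrep ⟨m - ⌊y⌋, hlower, hupper⟩
    simpa only [pattern, add_sub_left_comm, add_sub_cancel, add_comm] using this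

theorem apply_comm_of_mem_closure {X : Type*} [Preorder X] {s : Set (X ≃o X)} {p q : X}
    (hp : ∀ f ∈ s, f p = p) (hq : ∀ f ∈ s, f q = q) {τ : X → X}
    (hτ : ∀ f ∈ s, ∀ y ∈ Set.Icc p q, f (τ y) = τ (f y)) {γ : X ≃o X}
    (hγ : γ ∈ Subgroup.closure s) : ∀ y ∈ Set.Icc p q, γ (τ y) = τ (γ y) := by
  rw [← mem_fixedPoints_closure_iff] at hp hq
  induction hγ using Subgroup.closure_induction with
  | mem f hf => exact hτ f hf
  | one => exact fun y _ => rfl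
  | mul f g _ hg ihf ihg =>
    intro y hy
    rw [RelIso.mul_apply, ihg y hy, ihf _ (apply_mem_Icc hp hq hg hy), RelIso.mul_apply]
  | inv f hf ih =>
    intro y hy
    rw [← f.injective.eq_iff, ih _ (apply_mem_Icc hp hq (inv_mem hf) hy), RelIso.apply_inv_self,
      RelIso.apply_inv_self]

theorem exists_forall_eq_one_of_forall_Icc [Finite α] (hσ : IsUniformlyRecurrent σ)
    {S : Subgroup (ℝ ≃o ℝ)} (hfg : S.FG) (hS : S ≤ localSubgroup σ)
    (hfix : (fixedPoints S ℝ).Nonempty) :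
    ∃ p ∈ fixedPoints S ℝ, ∃ q ∈ fixedPoints S ℝ,
      ∀ γ ∈ S, (∀ y ∈ Set.Icc p q, γ y = y) → γ = 1 := by
  obtain ⟨s, rfl⟩ := hfg
  obtain ⟨x, hx⟩ := hfix
  rw [mem_fixedPoints_closure_iff] at hx
  obtain ⟨R, hR⟩ := exists_forall_isLocal fun f hf => hS (Subgroup.subset_closure hf)
  obtain ⟨L, hL⟩ := exists_mem_fixedPoints_of_isUniformlyRecurrent hσ hR hx
  obtain ⟨B, hB⟩ := exists_translate_bounded σ (L + R)
  obtain ⟨p, ⟨-, hpB⟩, hp⟩ := (hL (-B)).1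
  obtain ⟨q, ⟨hBq, -⟩, hq⟩ := (hL B).2
  refine ⟨p, mem_fixedPoints_closure_iff.2 hp, q, mem_fixedPoints_closure_iff.2 hq,
    fun γ hγ hγ1 => RelIso.ext fun y => ?_⟩
  obtain ⟨e, heB, he⟩ := hB y
  obtain ⟨⟨a, ha, hafix⟩, b, hb, hbfix⟩ := hL y
  have htrans : ∀ f ∈ s, ∀ z ∈ Set.Icc a b, f (z + e) = f z + e := fun f hf z hz =>
    (hR f hf).map_add z e fun m hm => he m <| (abs_sub_le _ z _).trans <| by
      have : |z - y| ≤ L := abs_le.2 ⟨by linarith [hz.1, ha.1], by linarith [hz.2, hb.2]⟩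
      linarith
  have hγe := apply_comm_of_mem_closure hafix hbfix (τ := (· + (e : ℝ))) htrans hγ y ⟨ha.2, hb.1⟩
  rw [abs_le] at heB
  rw [hγ1 _ ⟨hpB.trans heB.1, heB.2.trans hBq⟩] at hγe
  exact (add_right_cancel hγe).symm

theorem hasCommutingConjugates_of_le_localSubgroup [Finite α] (hσ : IsUniformlyRecurrent σ)
    {Γ : Subgroup (ℝ ≃o ℝ)} (hlocal : Γ ≤ localSubgroup σ) (hpl : Γ ≤ plSubgroup ℝ)
    (hfix : (fixedPoints Γ ℝ).Nonempty) : HasCommutingConjugates Γ := by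
  refine hasCommutingConjugates_of_forall_le fun S hSΓ hS K hKS hK => ?_
  obtain ⟨x, hx⟩ := hfix
  have hxS : x ∈ fixedPoints S ℝ := mem_fixedPoints_subgroup_iff.2 fun γ hγ =>
    mem_fixedPoints_subgroup_iff.1 hx γ (hSΓ hγ)
  obtain ⟨p, hp, q, hq, hfaithful⟩ :=
    exists_forall_eq_one_of_forall_Icc hσ hS (hSΓ.trans hlocal) ⟨x, hxS⟩
  exact exists_commutesWithConjugates (hKS.trans S.commutator_le_self) hp hq hfaithful
    fun z hz => fixedPoints_mem_nhds_of_fg hK fun u hu =>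
      eventually_eq_self_of_mem_commutator (hSΓ.trans hpl) hz (hKS hu)

end Local

/-! ### Thompson's group and cellwise conjugates of its elements -/

section Generators

theorem exists_castSucc_and_not_succ {m : ℕ} {P : Fin (m + 1) → Prop} (h0 : P 0)
    (hlast : ¬P (Fin.last m)) : ∃ i : Fin m, P i.castSucc ∧ ¬P i.succ := by
  by_contra! h
  exact hlast (Fin.induction (motive := P) h0 h (Fin.last m))

namespace InThompsonF

variable {ν : ℝ ≃o ℝ}

theorem mapsTo_Icc (hν : InThompsonF ν) : Set.MapsTo ν (Set.Icc 0 1) (Set.Icc 0 1) := by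
  intro x hx
  by_contra hνx
  exact hνx (by rwa [ν.injective (hν.1 _ hνx)])

theorem isAffineAlong_nhdsGE (hν : InThompsonF ν) {z : ℝ} (hz : z ∈ Set.Ico 0 1) :
    IsAffineAlong ν (𝓝[≥] z) z := by
  obtain ⟨-, m, x, hx0, hx1, -, -, hlin⟩ := hν
  obtain ⟨i, hi, hi'⟩ := exists_castSucc_and_not_succ (P := fun j => x j ≤ z)
    (hx0.trans_le hz.1) (by rw [hx1]; exact hz.2.not_ge)
  obtain ⟨k, c, hc⟩ := hlin i
  rw [not_le] at hi'
  refine ⟨2 ^ k, by positivity, ?_⟩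
  filter_upwards [Icc_mem_nhdsGE hi'] with y hy
  rw [hc y ⟨hi.trans hy.1, hy.2⟩, hc z ⟨hi, hi'.le⟩]
  ring

theorem isAffineAlong_nhdsLE (hν : InThompsonF ν) {z : ℝ} (hz : z ∈ Set.Ioc 0 1) :
    IsAffineAlong ν (𝓝[≤] z) z := by
  obtain ⟨-, m, x, hx0, hx1, -, -, hlin⟩ := hν
  obtain ⟨i, hi, hi'⟩ := exists_castSucc_and_not_succ (P := fun j => x j < z)
    (hx0.trans_lt hz.1) (by rw [hx1]; exact hz.2.not_gt)
  obtain ⟨k, c, hc⟩ := hlin i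
  rw [not_lt] at hi'
  refine ⟨2 ^ k, by positivity, ?_⟩
  filter_upwards [Icc_mem_nhdsLE hi] with y hy
  rw [hc y ⟨hy.1, hy.2.trans hi'⟩, hc z ⟨hi.le, hi'⟩]
  ring

end InThompsonF

theorem IsAffineAlong.of_eqOn_conj {f g : ℝ → ℝ} {s : Set ℝ} {l l' : Filter ℝ} {z a ε : ℝ}
    (hε : ε ≠ 0) (hg : IsAffineAlong g l' (ε * (z - a)))
    (hl : Tendsto (fun y => ε * (y - a)) l l') (hs : s ∈ l) (hz : z ∈ s)
    (hf : ∀ y ∈ s, f y = a + ε * g (ε * (y - a))) : IsAffineAlong f l z := by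
  obtain ⟨c, hc, hg⟩ := hg
  refine ⟨ε * c * ε, by positivity, ?_⟩
  filter_upwards [hs, hl.eventually hg] with y hy hgy
  rw [hf y hy, hf z hz, hgy]
  ring

/-- On each cell `[n + o, n + o + 1]` the map `f` is the conjugate of `ν`, viewed as a map of
`[0, 1]`, by the isometry of the cell with `[0, 1]` which preserves the orientation if `P n` holds
and reverses it otherwise. This is the common form of the generators `ζ` (for `o = 0`) and `χ`
(for `o = -1/2`). -/
def IsCellwiseConjugate (ν : ℝ → ℝ) (o : ℝ) (P : ℤ → Prop) (f : ℝ → ℝ) : Prop :=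
  ∀ n : ℤ, ∀ x ∈ Set.Icc (n + o) (n + o + 1),
    (P n → f x = n + o + ν (x - (n + o))) ∧ (¬P n → f x = n + o + 1 - ν (n + o + 1 - x))

namespace IsCellwiseConjugate

theorem isLocal {α : Type*} {σ : ℤ → α} {p : α → Prop} {ν f : ℝ → ℝ} {o : ℝ}
    (hf : IsCellwiseConjugate ν o (fun n => p (σ n)) f)
    (hν : Set.MapsTo ν (Set.Icc 0 1) (Set.Icc 0 1)) : IsLocal σ f (|o| + 1) := by
  have hcell (y : ℝ) : y ∈ Set.Icc (⌊y - o⌋ + o) (⌊y - o⌋ + o + 1) :=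
    ⟨by linarith [Int.floor_le (y - o)], by linarith [Int.lt_floor_add_one (y - o)]⟩
  refine ⟨fun y => ?_, fun y e he => ?_⟩
  · have hy := hcell y
    suffices |f y - y| ≤ 1 by linarith [abs_nonneg o]
    by_cases hp : p (σ ⌊y - o⌋)
    · rw [(hf _ y hy).1 hp, abs_le]
      have := hν (x := y - (⌊y - o⌋ + o)) ⟨by linarith [hy.1], by linarith [hy.2]⟩
      constructor <;> linarith [this.1, this.2, hy.1, hy.2]
    · rw [(hf _ y hy).2 hp, abs_le]
      have := hν (x := ⌊y - o⌋ + o + 1 - y) ⟨by linarith [hy.2], by linarith [hy.1]⟩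
      constructor <;> linarith [this.1, this.2, hy.1, hy.2]
  · set n := ⌊y - o⌋
    have hy : y ∈ Set.Icc (n + o) (n + o + 1) := hcell y
    have hye : y + e ∈ Set.Icc (((n + e : ℤ) : ℝ) + o) (((n + e : ℤ) : ℝ) + o + 1) := by
      push_cast
      exact ⟨by linarith [hy.1], by linarith [hy.2]⟩
    have hσ : σ (n + e) = σ n := he n <| abs_le.2
      ⟨by linarith [neg_abs_le o, le_abs_self o, hy.2], by linarith [neg_abs_le o, hy.1]⟩
    have hfe := hf (n + e) (y + e) hye
    beta_reduce at hfe
    rw [hσ] at hfe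
    push_cast at hfe
    by_cases hp : p (σ n)
    · rw [hfe.1 hp, (hf n y hy).1 hp, show y + e - (n + e + o) = y - (n + o) by ring]
      ring
    · rw [hfe.2 hp, (hf n y hy).2 hp, show n + e + o + 1 - (y + e) = n + o + 1 - y by ring]
      ring

variable {ν f : ℝ ≃o ℝ} {o : ℝ} {P : ℤ → Prop}

theorem isAffineAlong_nhdsGE (hf : IsCellwiseConjugate ν o P f) (hν : InThompsonF ν) (z : ℝ) :
    IsAffineAlong f (𝓝[≥] z) z := by
  set n := ⌊z - o⌋
  have hle : n + o ≤ z := by linarith [Int.floor_le (z - o)]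
  have hlt : z < n + o + 1 := by linarith [Int.lt_floor_add_one (z - o)]
  have hsub : Set.Icc z (n + o + 1) ⊆ Set.Icc (n + o) (n + o + 1) := Set.Icc_subset_Icc_left hle
  by_cases hP : P n
  · refine .of_eqOn_conj (a := n + o) (l' := 𝓝[≥] (1 * (z - (n + o)))) one_ne_zero
      (hν.isAffineAlong_nhdsGE ⟨by linarith, by linarith⟩) ?_ (Icc_mem_nhdsGE hlt)
      (Set.left_mem_Icc.2 hlt.le) fun y hy => ?_
    · exact ContinuousWithinAt.tendsto_nhdsWithin (by fun_prop) fun y (hy : z ≤ y) =>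
        show 1 * (z - (n + o)) ≤ 1 * (y - (n + o)) by linarith
    · rw [(hf n y (hsub hy)).1 hP, one_mul, one_mul]
  · refine .of_eqOn_conj (a := n + o + 1) (l' := 𝓝[≤] (-1 * (z - (n + o + 1)))) (by norm_num)
      (hν.isAffineAlong_nhdsLE ⟨by linarith, by linarith⟩) ?_ (Icc_mem_nhdsGE hlt)
      (Set.left_mem_Icc.2 hlt.le) fun y hy => ?_
    · exact ContinuousWithinAt.tendsto_nhdsWithin (by fun_prop) fun y (hy : z ≤ y) =>
        show -1 * (y - (n + o + 1)) ≤ -1 * (z - (n + o + 1)) by linarith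
    · rw [(hf n y (hsub hy)).2 hP, neg_one_mul, neg_one_mul, neg_sub, sub_eq_add_neg]

theorem isAffineAlong_nhdsLE (hf : IsCellwiseConjugate ν o P f) (hν : InThompsonF ν) (z : ℝ) :
    IsAffineAlong f (𝓝[≤] z) z := by
  obtain ⟨n, hlt, hle⟩ : ∃ n : ℤ, n + o < z ∧ z ≤ n + o + 1 := by
    refine ⟨⌈z - o⌉ - 1, ?_, ?_⟩ <;> push_cast
    · linarith [Int.ceil_lt_add_one (z - o)]
    · linarith [Int.le_ceil (z - o)]
  have hsub : Set.Icc (n + o) z ⊆ Set.Icc (n + o) (n + o + 1) := Set.Icc_subset_Icc_right hle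
  by_cases hP : P n
  · refine .of_eqOn_conj (a := n + o) (l' := 𝓝[≤] (1 * (z - (n + o)))) one_ne_zero
      (hν.isAffineAlong_nhdsLE ⟨by linarith, by linarith⟩) ?_ (Icc_mem_nhdsLE hlt)
      (Set.right_mem_Icc.2 hlt.le) fun y hy => ?_
    · exact ContinuousWithinAt.tendsto_nhdsWithin (by fun_prop) fun y (hy : y ≤ z) =>
        show 1 * (y - (n + o)) ≤ 1 * (z - (n + o)) by linarith
    · rw [(hf n y (hsub hy)).1 hP, one_mul, one_mul]
  · refine .of_eqOn_conj (a := n + o + 1) (l' := 𝓝[≥] (-1 * (z - (n + o + 1)))) (by norm_num)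
      (hν.isAffineAlong_nhdsGE ⟨by linarith, by linarith⟩) ?_ (Icc_mem_nhdsLE hlt)
      (Set.right_mem_Icc.2 hlt.le) fun y hy => ?_
    · exact ContinuousWithinAt.tendsto_nhdsWithin (by fun_prop) fun y (hy : y ≤ z) =>
        show -1 * (z - (n + o + 1)) ≤ -1 * (y - (n + o + 1)) by linarith
    · rw [(hf n y (hsub hy)).2 hP, neg_one_mul, neg_one_mul, neg_sub, sub_eq_add_neg]

theorem mem_plSubgroup (hf : IsCellwiseConjugate ν o P f) (hν : InThompsonF ν) :
    f ∈ plSubgroup ℝ :=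
  fun z => ⟨hf.isAffineAlong_nhdsLE hν z, hf.isAffineAlong_nhdsGE hν z⟩

end IsCellwiseConjugate

end Generators

/-! ### The generators of `G_ρ` -/

section Labelling

variable {ρ : ℤ → Letter}

instance : Fintype Letter := ⟨{.a, .b, .A, .B}, by rintro ⟨⟩ <;> decide⟩

theorem blockWord_eq_map (ρ : ℤ → Letter) (k : ℤ) (n : ℕ) :
    blockWord ρ k n = (List.range (n + 1)).map fun i : ℕ => ρ (k + i) := by
  simp [blockWord, ← List.map_eq_flatMap, Function.comp_def]

theorem exists_of_blockWord_infix {k k' : ℤ} {n n' : ℕ}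
    (h : blockWord ρ k n <:+: blockWord ρ k' n') :
    ∃ i : ℕ, i ≤ n' ∧ ∀ j : ℕ, j ≤ n → ρ (k' + i + j) = ρ (k + j) := by
  simp only [blockWord_eq_map, List.infix_iff_getElem?, List.length_map, List.length_range] at h
  obtain ⟨i, hi, h⟩ := h
  refine ⟨i, by lia, fun j hj => ?_⟩
  have := h j (by lia)
  rw [List.getElem?_eq_getElem (by simp; lia)] at this
  simpa [add_assoc, add_comm (j : ℤ)] using this

theorem isUniformlyRecurrent_of_blockWord
    (h : ∀ (k : ℤ) (n : ℕ), ∃ N : ℕ, ∀ (k' : ℤ) (n' : ℕ), N ≤ n' + 1 →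
      blockWord ρ k n <:+: blockWord ρ k' n') : IsUniformlyRecurrent ρ := by
  intro s
  obtain ⟨M, hM⟩ := (s.image Int.natAbs).exists_le
  have hMs (m) (hm : m ∈ s) : m.natAbs ≤ M := hM _ (Finset.mem_image_of_mem _ hm)
  obtain ⟨N, hN⟩ := h (-M) (2 * M)
  refine ⟨N, fun k => ?_⟩
  obtain ⟨i, hi, hρi⟩ := exists_of_blockWord_infix (hN (k - M) N N.le_succ)
  refine ⟨k + i, ⟨by lia, by lia⟩, fun m hm => ?_⟩
  have := hMs m hm
  have := hρi (m + M).toNat (by lia)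
  rwa [Int.toNat_of_nonneg (by lia), show k - M + i + (m + M) = m + (k + i) by ring,
    show -(M : ℤ) + (m + M) = m by ring] at this

namespace IsLabelling

theorem even_of_apply_eq (hρ : IsLabelling ρ) {m m' : ℤ} (h : ρ m = ρ m') (hm : Even m) :
    Even m' := by
  by_contra hm'
  have := (hρ m).1 hm
  have := (hρ m').2 (Int.not_even_iff_odd.1 hm')
  grind

theorem isUniformlyRecurrent_pairs (hρ : IsLabelling ρ) (hrec : IsUniformlyRecurrent ρ) :
    IsUniformlyRecurrent fun n => (ρ (2 * n), ρ (2 * n + 1)) := by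
  intro s
  obtain ⟨N, hN⟩ := hrec (insert 0 (s.image (2 * ·) ∪ s.image (2 * · + 1)))
  refine ⟨N, fun k => ?_⟩
  obtain ⟨e', ⟨hke, hek⟩, hρe⟩ := hN (2 * k)
  obtain ⟨e, rfl⟩ : Even e' := by
    simpa using hρ.even_of_apply_eq (hρe 0 (Finset.mem_insert_self _ _)).symm Even.zero
  refine ⟨e, ⟨by lia, by lia⟩, fun m hm => ?_⟩
  have h₀ := hρe (2 * m) (by simp [hm])
  have h₁ := hρe (2 * m + 1) (by simp [hm])
  beta_reduce
  rw [show 2 * (m + e) = 2 * m + (e + e) by ring, add_right_comm, h₀, h₁]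

end IsLabelling

theorem IsZeta.isCellwiseConjugate (hρ : IsLabelling ρ) {ν ζ : ℝ ≃o ℝ} (hζ : IsZeta ρ ν ζ) :
    IsCellwiseConjugate ν 0 (fun n => ρ (2 * n + 1) = .b) ζ := by
  intro n x hx
  rw [add_zero] at hx ⊢
  exact ⟨(hζ n x hx).1, fun hb =>
    (hζ n x hx).2 (((hρ _).2 (odd_two_mul_add_one n)).resolve_left hb)⟩

theorem IsChi.isCellwiseConjugate (hρ : IsLabelling ρ) {ν χ : ℝ ≃o ℝ} (hχ : IsChi ρ ν χ) :
    IsCellwiseConjugate ν (-1 / 2) (fun n => ρ (2 * n) = .a) χ := by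
  intro n x hx
  rw [show (n : ℝ) + -1 / 2 = n - 1 / 2 by ring, show (n : ℝ) - 1 / 2 + 1 = n + 1 / 2 by ring]
    at hx ⊢
  exact ⟨(hχ n x hx).1, fun ha => (hχ n x hx).2 (((hρ _).1 (even_two_mul n)).resolve_left ha)⟩

end Labelling

/-! ### Subgroups with a global fixed point -/

theorem mem_localSubgroup_inf_plSubgroup {ρ : ℤ → Letter} (hρ : IsLabelling ρ) {ν f : ℝ ≃o ℝ}
    (hν : InThompsonF ν) (hf : IsZeta ρ ν f ∨ IsChi ρ ν f) :
    f ∈ localSubgroup (fun n => (ρ (2 * n), ρ (2 * n + 1))) ⊓ plSubgroup ℝ := by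
  rcases hf with hζ | hχ
  · have hf := hζ.isCellwiseConjugate hρ
    exact ⟨⟨_, hf.isLocal (p := fun w => w.2 = .b) hν.mapsTo_Icc⟩, hf.mem_plSubgroup hν⟩
  · have hf := hχ.isCellwiseConjugate hρ
    exact ⟨⟨_, hf.isLocal (p := fun w => w.1 = .a) hν.mapsTo_Icc⟩, hf.mem_plSubgroup hν⟩

theorem fixpoint_subgroup_two_boundedly_acyclic_general {ρ : ℤ → Letter} (hρ : IsLabelling ρ)
    (hrec : IsUniformlyRecurrent ρ) {Γ : Subgroup (ℝ ≃o ℝ)}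
    (hΓ : Γ ≤ Subgroup.closure {f | ∃ ν, InThompsonF ν ∧ (IsZeta ρ ν f ∨ IsChi ρ ν f)})
    (hfix : ∃ x : ℝ, ∀ γ ∈ Γ, γ x = x) : Is2BoundedlyAcyclic Γ := by
  have hle : Γ ≤ localSubgroup (fun n => (ρ (2 * n), ρ (2 * n + 1))) ⊓ plSubgroup ℝ :=
    hΓ.trans <| (Subgroup.closure_le _).2 fun _ ⟨_, hν, hf⟩ =>
      mem_localSubgroup_inf_plSubgroup hρ hν hf
  obtain ⟨x, hx⟩ := hfix
  exact (hasCommutingConjugates_of_le_localSubgroup (hρ.isUniformlyRecurrent_pairs hrec)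
    (hle.trans inf_le_left) (hle.trans inf_le_right)
    ⟨x, mem_fixedPoints_subgroup_iff.2 hx⟩).is2BoundedlyAcyclic

/-- Any subgroup of `G_ρ` with a global fixed point in `ℝ` is
2-boundedly acyclic. -/
theorem fixpoint_subgroup_two_boundedly_acyclic
    (ρ : ℤ → Letter) (hρ : IsQuasiPeriodic ρ)
    (H : Subgroup (ℝ ≃o ℝ)) (hH : ∀ f : ℝ ≃o ℝ, f ∈ H ↔ InH f)
    (ν₁ ν₂ ν₃ : ℝ ≃o ℝ) (hgen : Subgroup.closure {ν₁, ν₂, ν₃} = H)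
    (ζ₁ ζ₂ ζ₃ χ₁ χ₂ χ₃ : ℝ ≃o ℝ)
    (hζ₁ : IsZeta ρ ν₁ ζ₁) (hζ₂ : IsZeta ρ ν₂ ζ₂) (hζ₃ : IsZeta ρ ν₃ ζ₃)
    (hχ₁ : IsChi ρ ν₁ χ₁) (hχ₂ : IsChi ρ ν₂ χ₂) (hχ₃ : IsChi ρ ν₃ χ₃)
    (G : Subgroup (ℝ ≃o ℝ))
    (hG : G = Subgroup.closure {ζ₁, ζ₂, ζ₃, χ₁, χ₂, χ₃})
    (Γ : Subgroup (ℝ ≃o ℝ)) (hΓG : Γ ≤ G)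
    (hfix : ∃ x : ℝ, ∀ γ ∈ Γ, γ x = x) :
    Is2BoundedlyAcyclic ↥Γ := by
  have hν {ν} (h : ν ∈ ({ν₁, ν₂, ν₃} : Set (ℝ ≃o ℝ))) : InThompsonF ν :=
    ((hH ν).1 (hgen ▸ Subgroup.subset_closure h)).1
  refine fixpoint_subgroup_two_boundedly_acyclic_general hρ.1
    (isUniformlyRecurrent_of_blockWord hρ.2.1) (hΓG.trans (hG.trans_le ?_)) hfix
  refine Subgroup.closure_mono ?_
  rintro f (rfl | rfl | rfl | rfl | rfl | rfl)
  exacts [⟨ν₁, hν (by simp), .inl hζ₁⟩, ⟨ν₂, hν (by simp), .inl hζ₂⟩, ⟨ν₃, hν (by simp), .inl hζ₃⟩,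
    ⟨ν₁, hν (by simp), .inr hχ₁⟩, ⟨ν₂, hν (by simp), .inr hχ₂⟩, ⟨ν₃, hν (by simp), .inr hχ₃⟩]
end

section
/- Let ρ be a quasi-periodic labelling and let a₁, a₂, a₃ ∈ G_ρ. Then there exist h, g₁, g₂, g₃ ∈ G_ρ and nonempty sets I₁ ⊆ I₂ ⊆ I₃ ⊆ ℝ with the following properties, where f_i := h⁻¹ a_i h for i = 1, 2, 3: (1) each of the subgroups ⟨g₁, g₂, g₃⟩, ⟨f₁, g₁⟩, ⟨f₂, g₂⟩, ⟨f₃, g₃⟩ of G_ρ has a global fixed point in ℝ; (2) the element f_i g_i fixes I_i pointwise for i = 1, 2, 3; (3) the support {x ∈ ℝ : g_i(x) ≠ x} of g_i is contained in I_{i+1} for i = 1, 2. -/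
/-!
An element of `G` commutes near any given point with all isometries of `ℤ` that preserve the labels
near that point. Quasi-periodicity provides label-preserving reflections with arbitrarily distant
centres, so by the intermediate value theorem every element of `G` has fixed points arbitrarily far
to the right.

A bump supported in a small interval is realised in `G` together with copies of itself under all
isometries preserving one label. If `w` pushes `x` off the support of `f`, then `f w⁻¹ f⁻¹ w` acts
at `x` as `f` does, but is trivial on every copy on which `f` or `w` is; such commutators leave only
the copies under isometries preserving a long word of labels. No isometry moving a point to the
right preserves all labels beyond it, so the action at `x` of any element of `G` is also that of
some `t ∈ G` fixing a prescribed finite set of points far to the right of `x`.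

Now let `x` be fixed by `a₁`, let `p` and `q` be far to the right and fixed by `a₂` and `a₃`, and
let `t ∈ G` fix `p` and `q` and satisfy `t x = a₂⁻¹ x`. The elements `h = g₁ = 1`, `g₂ = t`,
`g₃ = a₃⁻¹` and the sets `I₁ = I₂ = {x}`, `I₃ = ℝ` have the required properties.
-/

open Set Filter Topology

/-! ### Dyadic piecewise linear homeomorphisms of the line -/

/-- The ring `ℤ[1/2]` of dyadic rationals, as a subring of `ℝ`. -/
def dyadicSubring : Subring ℝ where
  carrier := {x | IsDyadic x}
  zero_mem' := ⟨0, 0, by simp⟩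
  one_mem' := ⟨1, 0, by simp⟩
  neg_mem' := by
    rintro _ ⟨a, b, rfl⟩
    exact ⟨-a, b, by push_cast; ring⟩
  add_mem' := by
    rintro _ _ ⟨a, b, rfl⟩ ⟨c, d, rfl⟩
    exact ⟨a * 2 ^ d + c * 2 ^ b, b + d, by push_cast; rw [pow_add]; field_simp⟩
  mul_mem' := by
    rintro _ _ ⟨a, b, rfl⟩ ⟨c, d, rfl⟩
    exact ⟨a * c, b + d, by push_cast; rw [pow_add]; field_simp⟩

theorem two_zpow_mem_dyadicSubring (k : ℤ) : (2 : ℝ) ^ k ∈ dyadicSubring := by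
  obtain ⟨n, rfl | rfl⟩ := Int.eq_nat_or_neg k
  · exact ⟨2 ^ n, 0, by simp⟩
  · exact ⟨1, n, by simp⟩

theorem intCast_div_two_mem_dyadicSubring (n : ℤ) : (n : ℝ) / 2 ∈ dyadicSubring :=
  ⟨n, 1, by simp⟩

theorem two_zpow_mul_mem_dyadicSubring_iff {k : ℤ} {x : ℝ} :
    2 ^ k * x ∈ dyadicSubring ↔ x ∈ dyadicSubring := by
  refine ⟨fun h => ?_, dyadicSubring.mul_mem (two_zpow_mem_dyadicSubring k)⟩
  have h' := dyadicSubring.mul_mem (two_zpow_mem_dyadicSubring (-k)) h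
  rwa [← mul_assoc, ← zpow_add₀ two_ne_zero, neg_add_cancel, zpow_zero, one_mul] at h'

theorem dense_dyadicSubring : Dense (dyadicSubring : Set ℝ) := by
  refine AddSubgroup.dense_of_not_isolated_zero dyadicSubring.toAddSubgroup fun ε hε => ?_
  obtain ⟨n, hn⟩ := exists_pow_lt_of_lt_one hε (one_half_lt_one (α := ℝ))
  exact ⟨(1 / 2) ^ n, ⟨1, n, by simp⟩, by positivity, hn⟩

/-- `f` agrees on `s` with an affine map whose slope is a power of two and whose constant term is
dyadic. -/
def DyadicAffineOn (f : ℝ → ℝ) (s : Set ℝ) : Prop :=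
  ∃ (k : ℤ), ∃ c ∈ dyadicSubring, ∀ t ∈ s, f t = 2 ^ k * t + c

namespace DyadicAffineOn

variable {f g : ℝ → ℝ} {s t : Set ℝ}

theorem comp (hf : DyadicAffineOn f t) (hg : DyadicAffineOn g s) (h : MapsTo g s t) :
    DyadicAffineOn (f ∘ g) s := by
  obtain ⟨k, c, hc, hf⟩ := hf
  obtain ⟨l, d, hd, hg⟩ := hg
  refine ⟨k + l, 2 ^ k * d + c, dyadicSubring.add_mem
    (two_zpow_mul_mem_dyadicSubring_iff.2 hd) hc, fun x hx => ?_⟩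
  rw [Function.comp_apply, hf _ (h hx), hg x hx, zpow_add₀ two_ne_zero]
  ring

theorem of_leftInvOn (hf : DyadicAffineOn f s) (h : LeftInvOn f g t) (hg : MapsTo g t s) :
    DyadicAffineOn g t := by
  obtain ⟨k, c, hc, hf⟩ := hf
  refine ⟨-k, -(2 ^ (-k) * c), dyadicSubring.neg_mem (two_zpow_mul_mem_dyadicSubring_iff.2 hc),
    fun x hx => ?_⟩
  have hx' : x = 2 ^ k * g x + c := by rw [← hf _ (hg hx), h hx]
  nth_rw 2 [hx']
  rw [zpow_neg]
  field_simp
  ring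

theorem neg_comp_neg (hf : DyadicAffineOn f s) (h : MapsTo Neg.neg t s) :
    DyadicAffineOn (fun x => -f (-x)) t := by
  obtain ⟨k, c, hc, hf⟩ := hf
  exact ⟨k, -c, dyadicSubring.neg_mem hc, fun x hx => by
    simp only [hf _ (h hx)]; ring⟩

theorem apply_mem_iff {x : ℝ} (hf : DyadicAffineOn f s) (hx : x ∈ s) :
    f x ∈ dyadicSubring ↔ x ∈ dyadicSubring := by
  obtain ⟨k, c, hc, hf⟩ := hf
  rw [hf x hx, add_mem_cancel_right hc, two_zpow_mul_mem_dyadicSubring_iff]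

end DyadicAffineOn

/-- A dyadic piecewise linear map of the line: finitely many breakpoints, all dyadic, between which
the map is affine with slope a power of two and dyadic constant term. -/
def IsDyadicPL (f : ℝ → ℝ) : Prop :=
  ∃ S : Set ℝ, S.Finite ∧ S ⊆ dyadicSubring ∧
    ∀ a b : ℝ, a < b → Disjoint S (Ioo a b) → DyadicAffineOn f (Icc a b)

theorem exists_gt_disjoint_Ioo {S : Set ℝ} (hS : S.Finite) (x : ℝ) :
    ∃ y > x, Disjoint S (Ioo x y) := by
  obtain ⟨y, hy, h⟩ := mem_nhdsGT_iff_exists_Ioo_subset.1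
    ((nhdsGT_le_nhdsNE x).trans (nhdsNE_le_cofinite x) hS.compl_mem_cofinite)
  exact ⟨y, hy, (disjoint_compl_right.mono_right h)⟩

theorem IsDyadicPL.apply_mem_iff {f : ℝ → ℝ} (hf : IsDyadicPL f) {x : ℝ} :
    f x ∈ dyadicSubring ↔ x ∈ dyadicSubring := by
  obtain ⟨S, hfin, -, hS⟩ := hf
  obtain ⟨y, hxy, hdisj⟩ := exists_gt_disjoint_Ioo hfin x
  exact (hS x y hxy hdisj).apply_mem_iff (left_mem_Icc.2 hxy.le)

/-- The group of dyadic piecewise linear homeomorphisms of the line. -/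
def dyadicPL : Subgroup (ℝ ≃o ℝ) where
  carrier := {f | IsDyadicPL f}
  one_mem' := ⟨∅, finite_empty, empty_subset _, fun a b _ _ =>
    ⟨0, 0, dyadicSubring.zero_mem, fun t _ => by simp⟩⟩
  mul_mem' := by
    rintro f g ⟨S, hSfin, hSd, hS⟩ hg
    obtain ⟨T, hTfin, hTd, hT⟩ := id hg
    refine ⟨T ∪ g ⁻¹' S, hTfin.union (hSfin.preimage g.injective.injOn),
      union_subset hTd fun x hx => hg.apply_mem_iff.1 (hSd hx), fun a b hab hdisj => ?_⟩
    rw [disjoint_union_left] at hdisj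
    refine (hS (g a) (g b) (g.strictMono hab) ?_).comp (hT a b hab hdisj.1) g.monotone.mapsTo_Icc
    rw [← g.image_Ioo, disjoint_image_right]
    exact hdisj.2
  inv_mem' := by
    rintro f hf
    obtain ⟨S, hSfin, hSd, hS⟩ := id hf
    refine ⟨⇑f⁻¹ ⁻¹' S, hSfin.preimage (f⁻¹ : ℝ ≃o ℝ).injective.injOn,
      fun x hx => ?_, fun a b hab hdisj => ?_⟩
    · rw [← RelIso.apply_inv_self f x]
      exact hf.apply_mem_iff.2 (hSd hx)
    · refine (hS (f⁻¹ a) (f⁻¹ b) ((f⁻¹ : ℝ ≃o ℝ).strictMono hab) ?_).of_leftInvOn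
        (fun x _ => RelIso.apply_inv_self f x) (f⁻¹ : ℝ ≃o ℝ).monotone.mapsTo_Icc
      rwa [← OrderIso.image_Ioo, disjoint_image_right]

/-- The conjugate of a homeomorphism of the line by `t ↦ -t`. -/
def reflect (f : ℝ ≃o ℝ) : ℝ ≃o ℝ :=
  (OrderIso.neg ℝ).trans (f.dual.trans (OrderIso.neg ℝ).symm)

@[simp]
theorem reflect_apply (f : ℝ ≃o ℝ) (t : ℝ) : reflect f t = -f (-t) := rfl

theorem reflect_mem_dyadicPL {f : ℝ ≃o ℝ} (hf : f ∈ dyadicPL) : reflect f ∈ dyadicPL := by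
  obtain ⟨S, hSfin, hSd, hS⟩ := hf
  refine ⟨Neg.neg ⁻¹' S, hSfin.preimage neg_injective.injOn,
    fun x hx => neg_mem_iff.1 (hSd hx), fun a b hab hdisj => ?_⟩
  refine (hS (-b) (-a) (neg_lt_neg hab) ?_).neg_comp_neg
    fun x hx => ⟨neg_le_neg hx.2, neg_le_neg hx.1⟩
  simpa [preimage_preimage] using hdisj.preimage Neg.neg

/-- The homeomorphism `t ↦ 2 ^ j * t + a` of the line. -/
noncomputable def dyadicAffine (j : ℤ) (a : ℝ) : ℝ ≃o ℝ :=
  (OrderIso.mulLeft₀ (2 ^ j) (by positivity)).trans (OrderIso.addRight a)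

@[simp]
theorem dyadicAffine_apply (j : ℤ) (a t : ℝ) : dyadicAffine j a t = 2 ^ j * t + a := rfl

theorem dyadicAffine_mem_dyadicPL {a : ℝ} (ha : a ∈ dyadicSubring) (j : ℤ) :
    dyadicAffine j a ∈ dyadicPL :=
  ⟨∅, finite_empty, empty_subset _, fun _ _ _ _ => ⟨j, a, ha, fun t _ => by simp⟩⟩

/-- The homeomorphisms of the line that are the identity outside a compact subset of `(c, d)`. -/
def supportedInside (c d : ℝ) : Subgroup (ℝ ≃o ℝ) where
  carrier := {f | ∃ c' > c, ∃ d' < d, ∀ t ∉ Icc c' d', f t = t}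
  one_mem' := ⟨c + 1, lt_add_one c, d - 1, sub_one_lt d, fun _ _ => rfl⟩
  mul_mem' := by
    rintro f g ⟨c₁, hc₁, d₁, hd₁, hf⟩ ⟨c₂, hc₂, d₂, hd₂, hg⟩
    refine ⟨min c₁ c₂, lt_min hc₁ hc₂, max d₁ d₂, max_lt hd₁ hd₂, fun t ht => ?_⟩
    have hsub₁ : Icc c₁ d₁ ⊆ Icc (min c₁ c₂) (max d₁ d₂) :=
      Icc_subset_Icc (min_le_left _ _) (le_max_left _ _)
    have hsub₂ : Icc c₂ d₂ ⊆ Icc (min c₁ c₂) (max d₁ d₂) :=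
      Icc_subset_Icc (min_le_right _ _) (le_max_right _ _)
    rw [RelIso.mul_apply, hg t fun h => ht (hsub₂ h), hf t fun h => ht (hsub₁ h)]
  inv_mem' := by
    rintro f ⟨c', hc, d', hd, hf⟩
    refine ⟨c', hc, d', hd, fun t ht => ?_⟩
    nth_rw 1 [← hf t ht, RelIso.inv_apply_self]

/-- The dyadic piecewise linear homeomorphisms of the line that are the identity outside a compact
subset of `(c, d)`. -/
def dyadicBumps (c d : ℝ) : Subgroup (ℝ ≃o ℝ) := dyadicPL ⊓ supportedInside c d

section Support

variable {c d c' d' t : ℝ} {f k : ℝ ≃o ℝ}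

theorem supportedInside_mono (hc : c' ≤ c) (hd : d ≤ d') :
    supportedInside c d ≤ supportedInside c' d' := by
  rintro f ⟨c₁, hc₁, d₁, hd₁, hf⟩
  exact ⟨c₁, hc.trans_lt hc₁, d₁, hd₁.trans_le hd, hf⟩

theorem dyadicBumps_mono (hc : c' ≤ c) (hd : d ≤ d') : dyadicBumps c d ≤ dyadicBumps c' d' :=
  inf_le_inf_left _ (supportedInside_mono hc hd)

theorem apply_eq_self_of_notMem_Ioo (hf : f ∈ supportedInside c d) (ht : t ∉ Ioo c d) :
    f t = t := by
  obtain ⟨c₁, hc₁, d₁, hd₁, hf⟩ := hf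
  exact hf t fun h => ht ⟨hc₁.trans_le h.1, h.2.trans_lt hd₁⟩

theorem mapsTo_Ioo_of_mem_supportedInside (hf : f ∈ supportedInside c d) :
    MapsTo f (Ioo c d) (Ioo c d) := by
  have hIoo : f '' Ioo c d = Ioo c d := by
    rw [f.image_Ioo, apply_eq_self_of_notMem_Ioo hf left_notMem_Ioo,
      apply_eq_self_of_notMem_Ioo hf right_notMem_Ioo]
  exact mapsTo_iff_image_subset.2 hIoo.subset

theorem conj_apply_eq_self_of_notMem_Icc (hf : ∀ t ∉ Icc c d, f t = t) (ht : t ∉ Icc (k c) (k d)) :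
    (k * f * k⁻¹) t = t := by
  obtain ⟨s, rfl⟩ := k.surjective t
  rw [mem_Icc, k.le_iff_le, k.le_iff_le] at ht
  rw [RelIso.mul_apply, RelIso.mul_apply, RelIso.inv_apply_self, hf s ht]

theorem conj_mem_supportedInside (hf : f ∈ supportedInside c d) :
    k * f * k⁻¹ ∈ supportedInside (k c) (k d) := by
  obtain ⟨c₁, hc₁, d₁, hd₁, hf⟩ := hf
  exact ⟨k c₁, k.strictMono hc₁, k d₁, k.strictMono hd₁, fun t =>
    conj_apply_eq_self_of_notMem_Icc hf⟩

theorem conj_mem_dyadicPL (hk : k ∈ dyadicPL) (hf : f ∈ dyadicPL) : k * f * k⁻¹ ∈ dyadicPL :=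
  dyadicPL.mul_mem (dyadicPL.mul_mem hk hf) (dyadicPL.inv_mem hk)

theorem conj_mem_dyadicBumps (hk : k ∈ dyadicPL) (hf : f ∈ dyadicBumps c d) :
    k * f * k⁻¹ ∈ dyadicBumps (k c) (k d) :=
  ⟨conj_mem_dyadicPL hk hf.1, conj_mem_supportedInside hf.2⟩

theorem reflect_mem_dyadicBumps (hf : f ∈ dyadicBumps c d) :
    reflect f ∈ dyadicBumps (-d) (-c) := by
  obtain ⟨hf, c₁, hc₁, d₁, hd₁, hfix⟩ := hf
  refine ⟨reflect_mem_dyadicPL hf, -d₁, neg_lt_neg hd₁, -c₁, neg_lt_neg hc₁, fun t ht => ?_⟩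
  rw [reflect_apply, hfix, neg_neg]
  exact fun h => ht ⟨neg_le.1 h.2, le_neg.1 h.1⟩

end Support

section Bump

/-- The piecewise linear map with slopes `2, 1, 1/2` on `[0, 1/4]`, `[1/4, 1/2]`, `[1/2, 1]` which
is the identity outside `[0, 1]`. -/
noncomputable def bumpFun (t : ℝ) : ℝ := max t (min (2 * t) (min (t + 1 / 4) ((t + 1) / 2)))

theorem strictMono_bumpFun : StrictMono bumpFun := fun s t hst =>
  max_lt_max hst (min_lt_min (by linarith) (min_lt_min (by linarith) (by linarith)))

theorem bumpFun_eq_self {t : ℝ} (ht : t ∉ Ioo 0 1) : bumpFun t = t := by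
  refine max_eq_left ?_
  rcases not_and_or.1 ht with h | h
  · exact min_le_of_left_le (by linarith)
  · exact min_le_of_right_le (min_le_of_right_le (by linarith))

theorem lt_bumpFun {t : ℝ} (ht : t ∈ Ioo 0 1) : t < bumpFun t :=
  lt_max_of_lt_right (lt_min (by linarith [ht.1]) (lt_min (by linarith) (by linarith [ht.2])))

theorem bumpFun_eq_two_mul {t : ℝ} (h₀ : 0 ≤ t) (h : t ≤ 1 / 4) : bumpFun t = 2 * t := by
  rw [bumpFun, min_eq_left (le_min (by linarith) (by linarith)), max_eq_right (by linarith)]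

theorem bumpFun_eq_add {t : ℝ} (h₀ : 1 / 4 ≤ t) (h : t ≤ 1 / 2) : bumpFun t = t + 1 / 4 := by
  rw [bumpFun, min_eq_left (by linarith : t + 1 / 4 ≤ _), min_eq_right (by linarith),
    max_eq_right (by linarith)]

theorem bumpFun_eq_div_two {t : ℝ} (h₀ : 1 / 2 ≤ t) (h : t ≤ 1) : bumpFun t = (t + 1) / 2 := by
  rw [bumpFun, min_eq_right (by linarith : (t + 1) / 2 ≤ _), min_eq_right (by linarith),
    max_eq_right (by linarith)]

/-- The homeomorphism `bumpFun` of the line: it moves every point of `(0, 1)` to the right. -/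
noncomputable def bump : ℝ ≃o ℝ :=
  strictMono_bumpFun.orderIsoOfSurjective bumpFun <| by
    refine Continuous.surjective (by unfold bumpFun; fun_prop)
      (tendsto_atTop_mono (fun t => le_max_left _ _) tendsto_id) ?_
    refine tendsto_id.congr' ?_
    filter_upwards [eventually_le_atBot 0] with t ht
    exact (bumpFun_eq_self fun h => h.1.not_ge ht).symm

theorem isDyadicPL_bumpFun : IsDyadicPL bumpFun := by
  have hhalf : (1 / 2 : ℝ) ∈ dyadicSubring := ⟨1, 1, by norm_num⟩
  have hquarter : (1 / 4 : ℝ) ∈ dyadicSubring := ⟨1, 2, by norm_num⟩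
  refine ⟨{0, 1 / 4, 1 / 2, 1}, toFinite _, ?_, fun a b _ hdisj => ?_⟩
  · rintro x (rfl | rfl | rfl | rfl)
    exacts [zero_mem _, hquarter, hhalf, one_mem _]
  have hcut : ∀ s ∈ ({0, 1 / 4, 1 / 2, 1} : Set ℝ), b ≤ s ∨ s ≤ a := fun s hs => by
    simpa [mem_Ioo, or_comm, imp_iff_not_or] using disjoint_left.1 hdisj hs
  simp only [mem_insert_iff, mem_singleton_iff, forall_eq_or_imp, forall_eq] at hcut
  obtain ⟨h0, h1, h2, h3⟩ := hcut
  rcases h0 with h0 | h0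
  · exact ⟨0, 0, zero_mem _, fun t ht => by
      rw [bumpFun_eq_self fun h => (h.1.trans_le ht.2).not_ge h0]; simp⟩
  rcases h1 with h1 | h1
  · exact ⟨1, 0, zero_mem _, fun t ht => by
      rw [bumpFun_eq_two_mul (h0.trans ht.1) (ht.2.trans h1)]; simp⟩
  rcases h2 with h2 | h2
  · exact ⟨0, 1 / 4, hquarter, fun t ht => by
      rw [bumpFun_eq_add (h1.trans ht.1) (ht.2.trans h2)]; simp⟩
  rcases h3 with h3 | h3
  · exact ⟨-1, 1 / 2, hhalf, fun t ht => by
      rw [bumpFun_eq_div_two (h2.trans ht.1) (ht.2.trans h3), zpow_neg_one]; ring⟩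
  · exact ⟨0, 0, zero_mem _, fun t ht => by
      rw [bumpFun_eq_self fun h => (h3.trans ht.1).not_gt h.2]; simp⟩

theorem bump_mem_dyadicPL : bump ∈ dyadicPL := isDyadicPL_bumpFun

variable {A : ℝ ≃o ℝ} {c d s : ℝ}

theorem conj_bump_mem_dyadicBumps (hA : A ∈ dyadicPL) (hc : c < A 0) (hd : A 1 < d) :
    A * bump * A⁻¹ ∈ dyadicBumps c d :=
  ⟨conj_mem_dyadicPL hA bump_mem_dyadicPL, A 0, hc, A 1, hd, fun _ =>
    conj_apply_eq_self_of_notMem_Icc fun _ ht =>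
      bumpFun_eq_self fun h => ht (Ioo_subset_Icc_self h)⟩

theorem lt_conj_bump_apply (hs : s ∈ Ioo (A 0) (A 1)) : s < (A * bump * A⁻¹) s := by
  obtain ⟨t, rfl⟩ := A.surjective s
  rw [mem_Ioo, A.lt_iff_lt, A.lt_iff_lt] at hs
  rw [RelIso.mul_apply, RelIso.mul_apply, RelIso.inv_apply_self, A.lt_iff_lt]
  exact lt_bumpFun hs

theorem exists_mem_dyadicBumps_self_lt_apply (hs : s ∈ Ioo c d) :
    ∃ f ∈ dyadicBumps c d, s < f s := by
  obtain ⟨j, hj⟩ := exists_pow_lt_of_lt_one (lt_min (sub_pos.2 hs.1) (sub_pos.2 hs.2))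
    (one_half_lt_one (α := ℝ))
  rw [one_div, inv_pow, ← zpow_natCast, ← zpow_neg, lt_min_iff] at hj
  have hpos : (0 : ℝ) < 2 ^ (-(j : ℤ)) := by positivity
  obtain ⟨a, ha, has, hsa⟩ := dense_dyadicSubring.exists_between (sub_lt_self s hpos)
  refine ⟨_, conj_bump_mem_dyadicBumps (dyadicAffine_mem_dyadicPL ha (-j)) ?_ ?_,
    lt_conj_bump_apply ⟨?_, ?_⟩⟩ <;> simp only [dyadicAffine_apply] <;> linarith

/-- The supremum `s` of the orbit of `x` would otherwise be a point of `(c, d)`, which some element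
pushes further to the right. -/
theorem exists_mem_dyadicBumps_lt_apply {x y : ℝ} (hx : x ∈ Ioo c d) (hy : y < d) :
    ∃ w ∈ dyadicBumps c d, y < w x := by
  by_contra! hle
  set O : Set ℝ := (fun w : ℝ ≃o ℝ => w x) '' dyadicBumps c d
  have hxO : x ∈ O := ⟨1, one_mem _, rfl⟩
  have hOy : y ∈ upperBounds O := forall_mem_image.2 hle
  have hs : sSup O ∈ Ioo c d :=
    ⟨hx.1.trans_le (le_csSup ⟨y, hOy⟩ hxO), (csSup_le ⟨x, hxO⟩ hOy).trans_lt hy⟩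
  obtain ⟨f, hf, hlt⟩ := exists_mem_dyadicBumps_self_lt_apply hs
  have hlt' : f⁻¹ (sSup O) < sSup O := by simpa using (f⁻¹ : ℝ ≃o ℝ).strictMono hlt
  obtain ⟨_, ⟨w, hw, rfl⟩, hwx⟩ := exists_lt_of_lt_csSup ⟨x, hxO⟩ hlt'
  have hfw : f (w x) ≤ sSup O := le_csSup ⟨y, hOy⟩ ⟨f * w, mul_mem hf hw, rfl⟩
  exact hfw.not_gt (by simpa using f.strictMono hwx)

end Bump

/-! ### Thompson's group -/

theorem exists_strictMono_partition {α : Type*} [LinearOrder α] {S : Set α} (hS : S.Finite)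
    {a b : α} (hab : a < b) :
    ∃ (m : ℕ) (x : Fin (m + 1) → α), x 0 = a ∧ x (Fin.last m) = b ∧ StrictMono x ∧
      (∀ i, x i ∈ insert a (insert b S)) ∧
      ∀ i : Fin m, Disjoint S (Ioo (x i.castSucc) (x i.succ)) := by
  classical
  obtain ⟨T, hT⟩ := (((hS.inter_of_left (Icc a b)).insert b).insert a).exists_finset_coe
  have hTI : ∀ t ∈ T, t ∈ Icc a b := fun t ht => by
    rw [← Finset.mem_coe, hT] at ht
    rcases ht with rfl | rfl | ht
    exacts [left_mem_Icc.2 hab.le, right_mem_Icc.2 hab.le, ht.2]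
  have haT : a ∈ T := by rw [← Finset.mem_coe, hT]; exact mem_insert _ _
  have hbT : b ∈ T := by rw [← Finset.mem_coe, hT]; exact mem_insert_of_mem _ (mem_insert _ _)
  obtain ⟨m, hm⟩ := Nat.exists_eq_succ_of_ne_zero (Finset.card_ne_zero_of_mem haT)
  set x := T.orderEmbOfFin hm
  have hxT : ∀ i, x i ∈ T := T.orderEmbOfFin_mem hm
  have hsurj : ∀ t ∈ T, ∃ i, x i = t := fun t ht => by
    rwa [← mem_range, Finset.range_orderEmbOfFin]
  refine ⟨m, x, ?_, ?_, x.strictMono, fun i => ?_, fun i => disjoint_left.2 fun s hsS hs => ?_⟩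
  · obtain ⟨i, hi⟩ := hsurj a haT
    exact le_antisymm (hi ▸ x.monotone (Fin.zero_le i)) (hTI _ (hxT 0)).1
  · obtain ⟨i, hi⟩ := hsurj b hbT
    exact le_antisymm (hTI _ (hxT _)).2 (hi ▸ x.monotone (Fin.le_last i))
  · have hi : x i ∈ (T : Set α) := hxT i
    rw [hT] at hi
    exact insert_subset_insert (insert_subset_insert inter_subset_left) hi
  · have hsT : s ∈ T := by
      rw [← Finset.mem_coe, hT]
      exact mem_insert_of_mem _ (mem_insert_of_mem _
        ⟨hsS, (hTI _ (hxT _)).1.trans hs.1.le, hs.2.le.trans (hTI _ (hxT _)).2⟩)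
    obtain ⟨j, rfl⟩ := hsurj s hsT
    have h₁ := x.lt_iff_lt.1 hs.1
    have h₂ := x.lt_iff_lt.1 hs.2
    simp only [Fin.lt_def, Fin.val_castSucc, Fin.val_succ] at h₁ h₂
    omega

theorem exists_castSucc_le_lt_succ {α : Type*} [LinearOrder α] {m : ℕ} {x : Fin (m + 1) → α}
    {t : α} (h₀ : x 0 ≤ t) (h₁ : t < x (Fin.last m)) :
    ∃ i : Fin m, x i.castSucc ≤ t ∧ t < x i.succ := by
  by_contra! hle
  have hall : ∀ i, x i ≤ t := Fin.induction h₀ hle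
  exact (hall (Fin.last m)).not_gt h₁

namespace InThompsonF

variable {f : ℝ ≃o ℝ}

theorem apply_eq_self (hf : InThompsonF f) {t : ℝ} (ht : t ∉ Ioo 0 1) : f t = t := by
  have hclosed : IsClosed {t | f t = t} := isClosed_eq f.continuous continuous_id
  have hsub : (Icc (0 : ℝ) 1)ᶜ ⊆ {t | f t = t} := fun t => hf.1 t
  have hmem := closure_minimal hsub hclosed
  rw [closure_compl, interior_Icc] at hmem
  exact hmem ht

theorem dyadicAffineOn (hf : InThompsonF f) :
    ∃ (m : ℕ) (x : Fin (m + 1) → ℝ), x 0 = 0 ∧ x (Fin.last m) = 1 ∧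
      (∀ i, x i ∈ dyadicSubring) ∧
      ∀ i : Fin m, DyadicAffineOn f (Icc (x i.castSucc) (x i.succ)) := by
  obtain ⟨m, x, hx₀, hx₁, hmono, hdyad, hpiece⟩ := hf.2
  have hle : ∀ i : Fin m, x i.castSucc ≤ x i.succ := fun i => hmono.monotone i.castSucc_lt_succ.le
  have hval : ∀ i, f (x i) ∈ dyadicSubring := by
    refine Fin.induction ?_ fun i ih => ?_
    · rw [hx₀, hf.apply_eq_self left_notMem_Ioo]
      exact dyadicSubring.zero_mem
    · obtain ⟨k, c, hk⟩ := hpiece i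
      have hstep : f (x i.succ) = 2 ^ k * (x i.succ - x i.castSucc) + f (x i.castSucc) := by
        rw [hk _ (left_mem_Icc.2 (hle i)), hk _ (right_mem_Icc.2 (hle i))]
        ring
      rw [hstep]
      exact add_mem (two_zpow_mul_mem_dyadicSubring_iff.2 (sub_mem (hdyad _) (hdyad _))) ih
  refine ⟨m, x, hx₀, hx₁, hdyad, fun i => ?_⟩
  obtain ⟨k, c, hk⟩ := hpiece i
  refine ⟨k, c, ?_, hk⟩
  rw [eq_sub_of_add_eq' (hk _ (left_mem_Icc.2 (hle i))).symm]
  exact sub_mem (hval _) (two_zpow_mul_mem_dyadicSubring_iff.2 (hdyad _))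

theorem mem_dyadicPL (hf : InThompsonF f) : f ∈ dyadicPL := by
  obtain ⟨m, x, hx₀, hx₁, hdyad, hpiece⟩ := hf.dyadicAffineOn
  refine ⟨range x, finite_range x, range_subset_iff.2 hdyad, fun a b hab hdisj => ?_⟩
  have hcut : ∀ i, b ≤ x i ∨ x i ≤ a := fun i => by
    simpa [mem_Ioo, or_comm, imp_iff_not_or] using disjoint_left.1 hdisj (mem_range_self i)
  have houtside (h : ∀ t ∈ Icc a b, t ∉ Ioo 0 1) : DyadicAffineOn f (Icc a b) :=
    ⟨0, 0, dyadicSubring.zero_mem, fun t ht => by simp [hf.apply_eq_self (h t ht)]⟩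
  rcases hcut 0 with h₀ | h₀
  · exact houtside fun t ht h => (h.1.trans_le ht.2).not_ge (hx₀ ▸ h₀)
  rcases hcut (Fin.last m) with h₁ | h₁
  · obtain ⟨i, hi, hi'⟩ := exists_castSucc_le_lt_succ h₀ (hab.trans_le h₁)
    obtain ⟨k, c, hc, hk⟩ := hpiece i
    have hb : b ≤ x i.succ := (hcut i.succ).resolve_right hi'.not_ge
    exact ⟨k, c, hc, fun t ht => hk t ⟨hi.trans ht.1, ht.2.trans hb⟩⟩
  · exact houtside fun t ht h => (h.2.trans_le (hx₁ ▸ h₁)).not_ge ht.1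

end InThompsonF

theorem inH_of_mem_dyadicBumps {f : ℝ ≃o ℝ} (hf : f ∈ dyadicBumps 0 1) : InH f := by
  have hfix : ∀ t ∉ Icc (0 : ℝ) 1, f t = t := fun t ht =>
    apply_eq_self_of_notMem_Ioo hf.2 fun h => ht (Ioo_subset_Icc_self h)
  obtain ⟨⟨S, hSfin, hSd, hS⟩, c, hc, d, hd, hcd⟩ := hf
  obtain ⟨m, x, hx₀, hx₁, hmono, hmem, hdisj⟩ := exists_strictMono_partition hSfin zero_lt_one
  refine ⟨⟨hfix, m, x, hx₀, hx₁, hmono, fun i => ?_, fun i => ?_⟩, 0, min (c / 2) ((1 - d) / 2),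
    lt_min (by linarith) (by linarith), fun t ht => ?_, fun t ht => ?_⟩
  · rcases hmem i with h | h | h
    exacts [h ▸ dyadicSubring.zero_mem, h ▸ dyadicSubring.one_mem, hSd h]
  · obtain ⟨k, b, -, hk⟩ := hS _ _ (hmono i.castSucc_lt_succ) (hdisj i)
    exact ⟨k, b, hk⟩
  · have ht' := ht.2.trans (min_le_left _ _)
    rw [hcd t fun h => by linarith [h.1], zpow_zero, one_mul]
  · have ht' := (sub_le_sub_left (min_le_right (c / 2) ((1 - d) / 2)) 1).trans ht.1
    rw [hcd t fun h => by linarith [h.2], zpow_zero, one_mul, add_sub_cancel]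

section Germ

variable {f g : ℝ ≃o ℝ} {z : ℝ}

theorem eventually_nhdsGE_eq_of_mem_dyadicPL (hf : f ∈ dyadicPL) (z : ℝ) :
    ∃ k : ℤ, ∀ᶠ t in 𝓝[≥] z, f t = f z + 2 ^ k * (t - z) := by
  obtain ⟨S, hSfin, -, hS⟩ := hf
  obtain ⟨y, hy, hdisj⟩ := exists_gt_disjoint_Ioo hSfin z
  obtain ⟨k, c, -, hk⟩ := hS z y hy hdisj
  refine ⟨k, mem_of_superset (Icc_mem_nhdsGE hy) fun t ht => ?_⟩
  rw [mem_ofPred_eq, hk t ht, hk z (left_mem_Icc.2 (le_of_lt hy))]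
  ring

theorem eventually_nhdsLE_eq_of_mem_dyadicPL (hf : f ∈ dyadicPL) (z : ℝ) :
    ∃ k : ℤ, ∀ᶠ t in 𝓝[≤] z, f t = f z + 2 ^ k * (t - z) := by
  obtain ⟨k, hk⟩ := eventually_nhdsGE_eq_of_mem_dyadicPL (reflect_mem_dyadicPL hf) (-z)
  refine ⟨k, ?_⟩
  filter_upwards [tendsto_neg_nhdsLE.eventually hk] with t ht
  simp only [reflect_apply, neg_neg] at ht
  linarith

variable {D : ℝ ≃o ℝ} {j : ℤ}

theorem conj_homothety_eventuallyEq_nhdsWithin {s : Set ℝ} (hs : MapsTo (D⁻¹ : ℝ ≃o ℝ) s s)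
    (hD : ∀ t, D t = z + 2 ^ j * (t - z)) {k : ℤ}
    (hf : ∀ᶠ t in 𝓝[s] z, f t = z + 2 ^ k * (t - z)) :
    ⇑(D * f * D⁻¹) =ᶠ[𝓝[s] z] f := by
  have hDz : (D⁻¹ : ℝ ≃o ℝ) z = z := by
    nth_rw 1 [show z = D z by simp [hD], RelIso.inv_apply_self]
  have htend : Tendsto (D⁻¹ : ℝ ≃o ℝ) (𝓝[s] z) (𝓝[s] z) := by
    nth_rw 2 [← hDz]
    exact (D⁻¹ : ℝ ≃o ℝ).continuous.continuousWithinAt.tendsto_nhdsWithin hs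
  filter_upwards [hf, htend.eventually hf] with t ht ht'
  have htD : t = z + 2 ^ j * (D⁻¹ t - z) := by rw [← hD, RelIso.apply_inv_self]
  rw [RelIso.mul_apply, RelIso.mul_apply, hD, ht', ht]
  nth_rw 2 [htD]
  ring

/-- Linear germs commute with homotheties. -/
theorem conj_homothety_eventuallyEq (hf : f ∈ dyadicPL) (hz : f z = z)
    (hD : ∀ t, D t = z + 2 ^ j * (t - z)) : ⇑(D * f * D⁻¹) =ᶠ[𝓝 z] f := by
  obtain ⟨k, hk⟩ := eventually_nhdsLE_eq_of_mem_dyadicPL hf z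
  obtain ⟨l, hl⟩ := eventually_nhdsGE_eq_of_mem_dyadicPL hf z
  rw [hz] at hk hl
  have hDz : (D⁻¹ : ℝ ≃o ℝ) z = z := by
    nth_rw 1 [show z = D z by simp [hD], RelIso.inv_apply_self]
  have hmono := (D⁻¹ : ℝ ≃o ℝ).monotone
  have hle : ⇑(D * f * D⁻¹) =ᶠ[𝓝[≤] z] f :=
    conj_homothety_eventuallyEq_nhdsWithin (fun t ht => (hmono ht).trans_eq hDz) hD hk
  have hge : ⇑(D * f * D⁻¹) =ᶠ[𝓝[≥] z] f :=
    conj_homothety_eventuallyEq_nhdsWithin (fun t ht => hDz.symm.trans_le (hmono ht)) hD hl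
  rw [← nhdsLE_sup_nhdsGE]
  exact eventually_sup.2 ⟨hle, hge⟩

theorem exists_eventuallyEq_shrunk {c d : ℝ} (hf : f ∈ dyadicPL) (hfix : ∀ t ∉ Icc c d, f t = t)
    (hz : f z = z) (hzd : z ∈ dyadicSubring) (j : ℤ) :
    ∃ g ∈ dyadicPL, g =ᶠ[𝓝 z] f ∧
      ∀ t ∉ Icc (z + 2 ^ j * (c - z)) (z + 2 ^ j * (d - z)), g t = t := by
  set D := dyadicAffine j (z - 2 ^ j * z)
  have hD : ∀ t, D t = z + 2 ^ j * (t - z) := fun t => by simp only [D, dyadicAffine_apply]; ring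
  have hDmem : D ∈ dyadicPL :=
    dyadicAffine_mem_dyadicPL (sub_mem hzd (two_zpow_mul_mem_dyadicSubring_iff.2 hzd)) j
  refine ⟨D * f * D⁻¹, conj_mem_dyadicPL hDmem hf, conj_homothety_eventuallyEq hf hz hD,
    fun t ht => conj_apply_eq_self_of_notMem_Icc hfix ?_⟩
  rwa [hD, hD]

theorem mul_inv_eventuallyEq_id (h : f =ᶠ[𝓝 z] g) (hz : g z = z) :
    ⇑(f * g⁻¹) =ᶠ[𝓝 z] id := by
  have hinv : Tendsto (g⁻¹ : ℝ ≃o ℝ) (𝓝 z) (𝓝 z) := by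
    nth_rw 2 [← RelIso.inv_apply_self g z]
    rw [hz]
    exact (g⁻¹ : ℝ ≃o ℝ).continuous.tendsto z
  filter_upwards [hinv.eventually h] with t ht
  rw [RelIso.mul_apply, ht, RelIso.apply_inv_self, id]

theorem mul_eventuallyEq_of_eventuallyEq_id (hf : f =ᶠ[𝓝 z] id) (hg : g z = z) :
    ⇑(f * g) =ᶠ[𝓝 z] g := by
  have hgz : Tendsto g (𝓝 z) (𝓝 z) := by
    nth_rw 2 [← hg]
    exact g.continuous.tendsto z
  exact hgz.eventually hf

theorem mem_supportedInside_of_eventuallyEq_id {c d : ℝ} (hf : ∀ t ∉ Icc c d, f t = t)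
    (hc : f =ᶠ[𝓝 c] id) (hd : f =ᶠ[𝓝 d] id) : f ∈ supportedInside c d := by
  obtain ⟨ε, hε, hεc⟩ := Metric.eventually_nhds_iff.1 hc
  obtain ⟨δ, hδ, hδd⟩ := Metric.eventually_nhds_iff.1 hd
  refine ⟨c + ε / 2, by linarith, d - δ / 2, by linarith, fun t ht => ?_⟩
  by_cases htcd : t ∈ Icc c d
  swap
  · exact hf t htcd
  rcases not_and_or.1 ht with h | h
  · exact hεc (by rw [Real.dist_eq, abs_lt]; constructor <;> linarith [htcd.1])
  · exact hδd (by rw [Real.dist_eq, abs_lt]; constructor <;> linarith [htcd.2])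

theorem mul_inv_mem_dyadicBumps_of_eventuallyEq {c d : ℝ} (hf : f ∈ dyadicPL) (hg : g ∈ dyadicPL)
    (hffix : ∀ t ∉ Ioo c d, f t = t) (hgfix : ∀ t ∉ Ioo c d, g t = t) (hc : f =ᶠ[𝓝 c] g)
    (hd : f =ᶠ[𝓝 d] g) : f * g⁻¹ ∈ dyadicBumps c d := by
  refine ⟨dyadicPL.mul_mem hf (dyadicPL.inv_mem hg), mem_supportedInside_of_eventuallyEq_id
    (fun t ht => ?_) (mul_inv_eventuallyEq_id hc (hgfix c left_notMem_Ioo))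
    (mul_inv_eventuallyEq_id hd (hgfix d right_notMem_Ioo))⟩
  replace ht : t ∉ Ioo c d := fun h => ht (Ioo_subset_Icc_self h)
  nth_rw 1 [← hgfix t ht, RelIso.mul_apply, RelIso.inv_apply_self, hffix t ht]

end Germ

/-- Shrinking `f` by homotheties towards the two endpoints produces elements with the germs of `f`
at `0` and at `1` whose supports miss `x`; dividing `f` by them makes it compactly supported. -/
theorem InThompsonF.exists_mem_dyadicBumps_apply_eq {f : ℝ ≃o ℝ} (hf : InThompsonF f) {x : ℝ}
    (hx : x ∈ Ioo 0 1) : ∃ φ ∈ dyadicBumps 0 1, φ x = f x := by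
  obtain ⟨j, hj⟩ := exists_pow_lt_of_lt_one (lt_min hx.1 (sub_pos.2 hx.2))
    (one_half_lt_one (α := ℝ))
  rw [one_div, inv_pow, ← zpow_natCast, ← zpow_neg, lt_min_iff] at hj
  set i : ℤ := -j
  have hf₀ : f 0 = 0 := hf.apply_eq_self left_notMem_Ioo
  have hf₁ : f 1 = 1 := hf.apply_eq_self right_notMem_Ioo
  obtain ⟨g₀, hg₀, hgerm₀, hfix₀⟩ :=
    exists_eventuallyEq_shrunk hf.mem_dyadicPL hf.1 hf₀ dyadicSubring.zero_mem i
  obtain ⟨g₁, hg₁, hgerm₁, hfix₁⟩ :=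
    exists_eventuallyEq_shrunk hf.mem_dyadicPL hf.1 hf₁ dyadicSubring.one_mem i
  replace hfix₀ : ∀ t, t ≤ 0 ∨ x ≤ t → g₀ t = t := fun t ht => by
    rcases eq_or_ne t 0 with rfl | ht₀
    · exact hgerm₀.eq_of_nhds.trans hf₀
    · exact hfix₀ t fun h => ht.elim (fun ht => ht₀ (by linarith [h.1])) fun ht => by linarith [h.2]
  replace hfix₁ : ∀ t, t ≤ x ∨ 1 ≤ t → g₁ t = t := fun t ht => by
    rcases eq_or_ne t 1 with rfl | ht₁
    · exact hgerm₁.eq_of_nhds.trans hf₁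
    · exact hfix₁ t fun h => ht.elim (fun ht => by linarith [h.1]) fun ht => ht₁ (by linarith [h.2])
  have hgx : (g₀ * g₁) x = x := by
    rw [RelIso.mul_apply, hfix₁ x (Or.inl le_rfl), hfix₀ x (Or.inr le_rfl)]
  have hid₀ : g₁ =ᶠ[𝓝 0] id := by
    filter_upwards [Iio_mem_nhds hx.1] with t ht using hfix₁ t (Or.inl (le_of_lt ht))
  have hid₁ : g₀ =ᶠ[𝓝 1] id := by
    filter_upwards [Ioi_mem_nhds hx.2] with t ht using hfix₀ t (Or.inr (le_of_lt ht))
  have hfix : ∀ t ∉ Ioo (0 : ℝ) 1, (g₀ * g₁) t = t := fun t ht => by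
    rcases not_and_or.1 ht with h | h <;> rw [not_lt] at h
    · rw [RelIso.mul_apply, hfix₁ t (Or.inl (h.trans hx.1.le)), hfix₀ t (Or.inl h)]
    · rw [RelIso.mul_apply, hfix₁ t (Or.inr h), hfix₀ t (Or.inr (hx.2.le.trans h))]
  have heq₀ : f =ᶠ[𝓝 0] ⇑(g₀ * g₁) := hgerm₀.symm.trans (hid₀.fun_comp g₀).symm
  have heq₁ : f =ᶠ[𝓝 1] ⇑(g₀ * g₁) := hgerm₁.symm.trans
    (mul_eventuallyEq_of_eventuallyEq_id hid₁ (hgerm₁.eq_of_nhds.trans hf₁)).symm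
  refine ⟨f * (g₀ * g₁)⁻¹, mul_inv_mem_dyadicBumps_of_eventuallyEq hf.mem_dyadicPL
    (dyadicPL.mul_mem hg₀ hg₁) (fun t => hf.apply_eq_self) hfix heq₀ heq₁, ?_⟩
  nth_rw 1 [← hgx, RelIso.mul_apply, RelIso.inv_apply_self]

/-! ### Isometries of the integers -/

/-- The isometry `y ↦ sign * y + shift` of the line. These are exactly the isometries preserving
`ℤ`; the images of `[m / 2, (m + 1) / 2]` under them are its *copies*, which tile the line. -/
@[ext]
structure IntIsometry where
  sign : ℤˣ
  shift : ℤ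

namespace IntIsometry

/-- The action of an isometry on points of the line. -/
def toFun (σ : IntIsometry) (y : ℝ) : ℝ :=
  (σ.sign : ℤ) * y + σ.shift

instance : CoeFun IntIsometry fun _ => ℝ → ℝ :=
  ⟨toFun⟩

instance : One IntIsometry :=
  ⟨⟨1, 0⟩⟩

/-- The action of an isometry on half-integers, with `i` encoding the point `i / 2`. -/
def index (σ : IntIsometry) (i : ℤ) : ℤ :=
  σ.sign * i + 2 * σ.shift

variable {σ σ' : IntIsometry} {m : ℤ} {c d y y' z : ℝ}

theorem apply_def (σ : IntIsometry) (y : ℝ) : σ y = (σ.sign : ℤ) * y + σ.shift :=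
  rfl

theorem index_def (σ : IntIsometry) (i : ℤ) : σ.index i = σ.sign * i + 2 * σ.shift :=
  rfl

theorem index_of_sign_eq_neg_one (hσ : σ.sign = -1) (i : ℤ) :
    σ.index i = 2 * σ.shift - i := by
  rw [index_def, hσ, Units.val_neg, Units.val_one]
  ring

theorem one_apply (y : ℝ) : (1 : IntIsometry) y = y := by
  change ((1 : ℤˣ) : ℤ) * y + ((0 : ℤ) : ℝ) = y
  simp

theorem apply_eq_or (σ : IntIsometry) :
    (σ.sign = 1 ∧ ∀ y, σ y = y + σ.shift) ∨ (σ.sign = -1 ∧ ∀ y, σ y = -y + σ.shift) := by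
  rcases Int.units_eq_one_or σ.sign with h | h
  · exact Or.inl ⟨h, fun y => by simp [apply_def, h]⟩
  · exact Or.inr ⟨h, fun y => by simp [apply_def, h]⟩

theorem injective (σ : IntIsometry) : Function.Injective σ := by
  intro y y' h
  rcases σ.apply_eq_or with ⟨-, hσ⟩ | ⟨-, hσ⟩ <;> rw [hσ, hσ] at h <;> linarith

theorem image_Ioo (σ : IntIsometry) (hcd : c ≤ d) : σ '' Ioo c d = uIoo (σ c) (σ d) := by
  rcases σ.apply_eq_or with ⟨-, h⟩ | ⟨-, h⟩
  · rw [funext h, image_add_const_Ioo, uIoo_of_le (by linarith)]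
  · rw [funext h, ← image_image (· + (σ.shift : ℝ)) Neg.neg, image_neg_Ioo, image_add_const_Ioo,
      uIoo_of_ge (by linarith)]

theorem mapsTo_image_Ioo (σ : IntIsometry) (hcd : c ≤ d) {f : ℝ ≃o ℝ} (hc : f (σ c) = σ c)
    (hd : f (σ d) = σ d) : MapsTo f (σ '' Ioo c d) (σ '' Ioo c d) := by
  rw [image_Ioo σ hcd, uIoo]
  intro z hz
  rw [← hc, ← hd, ← f.map_inf, ← f.map_sup]
  exact ⟨f.strictMono hz.1, f.strictMono hz.2⟩

theorem exists_apply_eq (m : ℤ) (z : ℝ) :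
    ∃ σ : IntIsometry, ∃ y ∈ Icc (m / 2 : ℝ) ((m + 1) / 2), σ y = z := by
  have hle := Int.floor_le (2 * z)
  have hlt := Int.lt_floor_add_one (2 * z)
  obtain ⟨k, hk | hk⟩ := Int.even_or_odd' (⌊2 * z⌋ - m)
  · rw [sub_eq_iff_eq_add.1 hk] at hle hlt
    push_cast at hle hlt
    exact ⟨⟨1, k⟩, z - k, ⟨by linarith, by linarith⟩, by simp [apply_def]⟩
  · rw [sub_eq_iff_eq_add.1 hk] at hle hlt
    push_cast at hle hlt
    exact ⟨⟨-1, m + k + 1⟩, m + k + 1 - z, ⟨by linarith, by linarith⟩, by simp [apply_def]⟩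

theorem eq_of_apply_eq (hy : y ∈ Icc (m / 2 : ℝ) ((m + 1) / 2))
    (hy' : y' ∈ Ioo (m / 2 : ℝ) ((m + 1) / 2)) (h : σ y = σ' y') : σ = σ' := by
  obtain ⟨hy₀, hy₁⟩ := hy
  obtain ⟨hy₀', hy₁'⟩ := hy'
  rcases σ.apply_eq_or with ⟨hs, hσ⟩ | ⟨hs, hσ⟩ <;>
    rcases σ'.apply_eq_or with ⟨hs', hσ'⟩ | ⟨hs', hσ'⟩ <;> rw [hσ, hσ'] at h
  · have hlt : (σ.shift : ℝ) < σ'.shift + 1 := by linarith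
    have hgt : (σ'.shift : ℝ) < σ.shift + 1 := by linarith
    norm_cast at hlt hgt
    exact IntIsometry.ext (hs.trans hs'.symm) (by lia)
  · have hlt : (m : ℝ) < σ'.shift - σ.shift := by linarith
    have hgt : (σ'.shift - σ.shift : ℝ) < m + 1 := by linarith
    norm_cast at hlt hgt
    lia
  · have hlt : (m : ℝ) < σ.shift - σ'.shift := by linarith
    have hgt : (σ.shift - σ'.shift : ℝ) < m + 1 := by linarith
    norm_cast at hlt hgt
    lia
  · have hlt : (σ.shift : ℝ) < σ'.shift + 1 := by linarith
    have hgt : (σ'.shift : ℝ) < σ.shift + 1 := by linarith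
    norm_cast at hlt hgt
    exact IntIsometry.ext (hs.trans hs'.symm) (by lia)

theorem lt_index_of_lt_apply (hy : y ∈ Icc (m / 2 : ℝ) ((m + 1) / 2))
    (h : (m + 1) / 2 < σ y) : m < σ.index m := by
  obtain ⟨hy₀, hy₁⟩ := hy
  rcases σ.apply_eq_or with ⟨hs, hσ⟩ | ⟨hs, hσ⟩ <;> rw [hσ] at h
  · have hpos : (0 : ℝ) < σ.shift := by linarith
    norm_cast at hpos
    simpa [index_def, hs] using hpos
  · have hlt : (m : ℝ) < σ.shift := by linarith
    norm_cast at hlt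
    rw [index_def, hs, Units.val_neg, Units.val_one]
    lia

/-- The isometry whose composite with the reflection in `m / 2` is `σ`. -/
def reflectAt (m : ℤ) (σ : IntIsometry) : IntIsometry :=
  ⟨-σ.sign, σ.sign * m + σ.shift⟩

theorem reflectAt_apply_sub (m : ℤ) (σ : IntIsometry) (y : ℝ) : σ.reflectAt m (m - y) = σ y := by
  simp only [reflectAt, apply_def, Units.val_neg]
  push_cast
  ring

theorem index_reflectAt (m : ℤ) (σ : IntIsometry) : (σ.reflectAt m).index m = σ.index m := by
  simp only [reflectAt, index_def, Units.val_neg]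
  ring

end IntIsometry

/-- The union of the images of `s` under the isometries in `P`. -/
def copies (P : Set IntIsometry) (s : Set ℝ) : Set ℝ :=
  image2 IntIsometry.toFun P s

theorem apply_mem_copies_iff {P : Set IntIsometry} {s : Set ℝ} {m : ℤ} {σ : IntIsometry} {y : ℝ}
    (hs : s ⊆ Ioo (m / 2 : ℝ) ((m + 1) / 2)) (hy : y ∈ Icc (m / 2 : ℝ) ((m + 1) / 2)) :
    σ y ∈ copies P s ↔ σ ∈ P ∧ y ∈ s := by
  refine ⟨?_, fun h => mem_image2_of_mem h.1 h.2⟩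
  rintro ⟨σ', hσ', y', hy', h⟩
  obtain rfl : σ = σ' := IntIsometry.eq_of_apply_eq hy (hs hy') h.symm
  exact ⟨hσ', σ.injective h ▸ hy'⟩

/-- The isometries respecting the orientations `e i` attached to the half-integers `i / 2` with
`i ∈ s`. -/
def labelPreserving (e : ℤ → ℤˣ) (s : Set ℤ) : Set IntIsometry :=
  {σ | ∀ i ∈ s, e (σ.index i) = σ.sign * e i}

theorem labelPreserving_anti {e : ℤ → ℤˣ} {s t : Set ℤ} (hst : s ⊆ t) :
    labelPreserving e t ⊆ labelPreserving e s :=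
  fun _ hσ i hi => hσ i (hst hi)

theorem one_mem_labelPreserving (e : ℤ → ℤˣ) (s : Set ℤ) : 1 ∈ labelPreserving e s := fun i _ => by
  change e (((1 : ℤˣ) : ℤ) * i + 2 * 0) = 1 * e i
  simp

theorem mem_labelPreserving_singleton {e : ℤ → ℤˣ} {m : ℤ} {σ : IntIsometry} :
    σ ∈ labelPreserving e {m} ↔ e (σ.index m) = σ.sign * e m :=
  forall_eq

theorem reflectAt_mem_labelPreserving_singleton {e : ℤ → ℤˣ} {m : ℤ} {σ : IntIsometry}
    (hσ : σ ∉ labelPreserving e {m}) : σ.reflectAt m ∈ labelPreserving e {m} := by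
  rw [mem_labelPreserving_singleton] at hσ ⊢
  rw [IntIsometry.index_reflectAt, Int.units_ne_iff_eq_neg.1 hσ, IntIsometry.reflectAt, neg_mul]

/-! ### Localisation by commutators -/

/-- `Θ` acts as `φ` on all label-preserving copies of the unit interval centred at `m / 2`. -/
def ActsOnCopies (e : ℤ → ℤˣ) (m : ℤ) (φ Θ : ℝ ≃o ℝ) : Prop :=
  ∀ σ ∈ labelPreserving e {m}, ∀ y ∈ Icc (m / 2 - 1 / 2 : ℝ) (m / 2 + 1 / 2), Θ (σ y) = σ (φ y)

/-- The dyadic bumps supported inside the unit interval centred at `m / 2`. -/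
noncomputable def cellBumps (m : ℤ) : Subgroup (ℝ ≃o ℝ) :=
  dyadicBumps (m / 2 - 1 / 2) (m / 2 + 1 / 2)

/-- Every dyadic bump on a unit interval centred at a half-integer is realised by an element of `G`
acting in the same way on all label-preserving copies of that interval. -/
def RealizesBumps (G : Subgroup (ℝ ≃o ℝ)) (e : ℤ → ℤˣ) : Prop :=
  ∀ m, ∀ φ ∈ cellBumps m, ∃ Θ ∈ G, ActsOnCopies e m φ Θ

/-- The effect at any single point of a bump supported inside a subinterval `(c, d)` of
`[m / 2, (m + 1) / 2]` is also achieved by an element of `G` supported in the images of `(c, d)`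
under the isometries in `P`. -/
def Localizes (G : Subgroup (ℝ ≃o ℝ)) (m : ℤ) (P : Set IntIsometry) : Prop :=
  ∀ c d : ℝ, m / 2 ≤ c → d ≤ (m + 1) / 2 → ∀ φ ∈ dyadicBumps c d, ∀ x, ∃ t ∈ G,
    t x = φ x ∧ ∀ z ∉ copies P (Ioo c d), t z = z

/-- No isometry moving the half-integer `m / 2` to the right preserves all orientations to the right
of `m / 2`. -/
def RightAperiodic (e : ℤ → ℤˣ) : Prop :=
  ∀ (m : ℤ) (σ : IntIsometry), m < σ.index m → σ ∉ labelPreserving e (Ici m)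

section Localization

variable {e : ℤ → ℤˣ} {G : Subgroup (ℝ ≃o ℝ)} {m : ℤ} {P Q : Set IntIsometry}

theorem ActsOnCopies.apply_eq {φ Θ : ℝ ≃o ℝ} (h : ActsOnCopies e m φ Θ) {y : ℝ}
    (hy : y ∈ Icc (m / 2 - 1 / 2 : ℝ) (m / 2 + 1 / 2)) : Θ y = φ y := by
  simpa only [IntIsometry.one_apply] using h 1 (one_mem_labelPreserving e _) y hy

theorem ActsOnCopies.conj_apply_eq {k K φ t : ℝ ≃o ℝ} (hK : ActsOnCopies e m k K) {x : ℝ}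
    (hx : x ∈ Icc (m / 2 - 1 / 2 : ℝ) (m / 2 + 1 / 2))
    (hφx : φ x ∈ Icc (m / 2 - 1 / 2 : ℝ) (m / 2 + 1 / 2)) (ht : t (k x) = (k * φ * k⁻¹) (k x)) :
    (K⁻¹ * t * K) x = φ x := by
  rw [RelIso.mul_apply, RelIso.mul_apply, RelIso.inv_apply_self] at ht
  rw [RelIso.mul_apply, RelIso.mul_apply, hK.apply_eq hx, ht, ← hK.apply_eq hφx,
    RelIso.inv_apply_self]

theorem ActsOnCopies.eq_self_of_notMem_copies {φ Θ : ℝ ≃o ℝ} (h : ActsOnCopies e m φ Θ) {c d : ℝ}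
    (hφ : φ ∈ dyadicBumps c d) (hc : m / 2 ≤ c) {z : ℝ}
    (hz : z ∉ copies (labelPreserving e {m}) (Ioo c d)) : Θ z = z := by
  obtain ⟨σ, y, ⟨hy₀, hy₁⟩, rfl⟩ := IntIsometry.exists_apply_eq m z
  by_cases hσ : σ ∈ labelPreserving e {m}
  · have hy : y ∉ Ioo c d := fun hy => hz (mem_image2_of_mem hσ hy)
    rw [h σ hσ y ⟨by linarith, by linarith⟩, apply_eq_self_of_notMem_Ioo hφ.2 hy]
  · have hy : m - y ∉ Ioo c d := fun hy => by linarith [hy.1]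
    rw [← IntIsometry.reflectAt_apply_sub m, h _ (reflectAt_mem_labelPreserving_singleton hσ) _
      ⟨by linarith, by linarith⟩, apply_eq_self_of_notMem_Ioo hφ.2 hy]

theorem exists_right_mem_dyadicBumps {c d : ℝ} (hcd : c < d) {φ : ℝ ≃o ℝ}
    (hφ : φ ∈ dyadicBumps c d) : ∃ d' ∈ Ioo c d, φ ∈ dyadicBumps c d' := by
  obtain ⟨hPL, c₁, hc₁, d₁, hd₁, hfix⟩ := hφ
  obtain ⟨d', hd', hd'd⟩ := exists_between (max_lt hd₁ hcd)
  exact ⟨d', ⟨(le_max_right _ _).trans_lt hd', hd'd⟩, hPL, c₁, hc₁, d₁,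
    (le_max_left _ _).trans_lt hd', hfix⟩

theorem exists_left_mem_dyadicBumps {c d : ℝ} (hcd : c < d) {φ : ℝ ≃o ℝ}
    (hφ : φ ∈ dyadicBumps c d) : ∃ c' ∈ Ioo c d, φ ∈ dyadicBumps c' d := by
  obtain ⟨hPL, c₁, hc₁, d₁, hd₁, hfix⟩ := hφ
  obtain ⟨c', hc', hc'c⟩ := exists_between (lt_min hc₁ hcd)
  exact ⟨c', ⟨hc', hc'c.trans_le (min_le_right _ _)⟩, hPL, c₁,
    hc'c.trans_le (min_le_left _ _), d₁, hd₁, hfix⟩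

theorem inv_apply_eq_self {f : ℝ ≃o ℝ} {x : ℝ} (h : f x = x) : f⁻¹ x = x := by
  nth_rw 1 [← h, RelIso.inv_apply_self]

theorem Localizes.mono (h : Localizes G m P) (hPQ : P ⊆ Q) : Localizes G m Q := by
  intro c d hc hd φ hφ x
  obtain ⟨t, ht, htx, hfix⟩ := h c d hc hd φ hφ x
  exact ⟨t, ht, htx, fun z hz => hfix z fun h => hz (image2_subset_right hPQ h)⟩

theorem localizes_of_forall_mem_Ioo
    (h : ∀ c d : ℝ, m / 2 ≤ c → d ≤ (m + 1) / 2 → ∀ φ ∈ dyadicBumps c d, ∀ x ∈ Ioo c d,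
      ∃ t ∈ G, t x = φ x ∧ ∀ z ∉ copies P (Ioo c d), t z = z) : Localizes G m P := by
  intro c d hc hd φ hφ x
  by_cases hx : x ∈ Ioo c d
  · exact h c d hc hd φ hφ x hx
  · exact ⟨1, G.one_mem, (apply_eq_self_of_notMem_Ioo hφ.2 hx).symm, fun _ _ => rfl⟩

theorem RealizesBumps.localizes_singleton (hG : RealizesBumps G e) (m : ℤ) :
    Localizes G m (labelPreserving e {m}) := by
  refine localizes_of_forall_mem_Ioo fun c d hc hd φ hφ x hx => ?_
  obtain ⟨Θ, hΘ, hact⟩ := hG m φ (dyadicBumps_mono (by linarith) (by linarith) hφ)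
  exact ⟨Θ, hΘ, hact.apply_eq ⟨by linarith [hx.1], by linarith [hx.2]⟩,
    fun z => hact.eq_self_of_notMem_copies hφ hc⟩

theorem commutator_apply_eq_self_of_left {f w : ℝ ≃o ℝ} {s : Set ℝ} (hf : ∀ y ∈ s, f y = y)
    (hw : MapsTo w s s) {z : ℝ} (hz : z ∈ s) : (f * w⁻¹ * f⁻¹ * w) z = z := by
  simp only [RelIso.mul_apply]
  rw [inv_apply_eq_self (hf _ (hw hz)), RelIso.inv_apply_self, hf z hz]

theorem commutator_apply_eq_self_of_right {f w : ℝ ≃o ℝ} {s : Set ℝ} (hw : ∀ y ∈ s, w y = y)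
    (hf : MapsTo (f⁻¹ : ℝ ≃o ℝ) s s) {z : ℝ} (hz : z ∈ s) : (f * w⁻¹ * f⁻¹ * w) z = z := by
  simp only [RelIso.mul_apply]
  rw [hw z hz, inv_apply_eq_self (hw _ (hf hz)), RelIso.apply_inv_self]

theorem mapsTo_image_Ioo_of_fixes_notMem_copies {c d : ℝ} (hc : m / 2 ≤ c) (hcd : c ≤ d)
    (hd : d ≤ (m + 1) / 2) {f : ℝ ≃o ℝ} (hf : ∀ z ∉ copies P (Ioo c d), f z = z)
    (σ : IntIsometry) : MapsTo f (σ '' Ioo c d) (σ '' Ioo c d) := by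
  have hsub : Ioo c d ⊆ Ioo (m / 2) ((m + 1) / 2) := Ioo_subset_Ioo hc hd
  refine σ.mapsTo_image_Ioo hcd (hf _ fun h => ?_) (hf _ fun h => ?_)
  · exact left_notMem_Ioo ((apply_mem_copies_iff hsub ⟨hc, hcd.trans hd⟩).1 h).2
  · exact right_notMem_Ioo ((apply_mem_copies_iff hsub ⟨hc.trans hcd, hd⟩).1 h).2

/-- Both elements preserve each image of `(c, d)`, and on an image under an isometry outside `P`
or outside `Q` one of them is the identity. -/
theorem commutator_apply_eq_self_of_notMem_copies {c d : ℝ} (hc : m / 2 ≤ c) (hcd : c ≤ d)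
    (hd : d ≤ (m + 1) / 2) {f w : ℝ ≃o ℝ} (hf : ∀ z ∉ copies P (Ioo c d), f z = z)
    (hw : ∀ z ∉ copies Q (Ioo c d), w z = z) {z : ℝ} (hz : z ∉ copies (P ∩ Q) (Ioo c d)) :
    (f * w⁻¹ * f⁻¹ * w) z = z := by
  have hsub : Ioo c d ⊆ Ioo (m / 2) ((m + 1) / 2) := Ioo_subset_Ioo hc hd
  have hfix : ∀ {R : Set IntIsometry} {g : ℝ ≃o ℝ}, (∀ z ∉ copies R (Ioo c d), g z = z) →
      ∀ σ ∉ R, ∀ u ∈ σ '' Ioo c d, g u = u := by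
    rintro R g hg σ hσ - ⟨y, hy, rfl⟩
    exact hg _ fun h => hσ ((apply_mem_copies_iff hsub (Ioo_subset_Icc_self (hsub hy))).1 h).1
  obtain ⟨σ, y, hy, rfl⟩ := IntIsometry.exists_apply_eq m z
  by_cases hyI : y ∈ Ioo c d
  · rcases not_and_or.1 fun hσ : σ ∈ P ∩ Q => hz (mem_image2_of_mem hσ hyI) with hσ | hσ
    · exact commutator_apply_eq_self_of_left (hfix hf σ hσ)
        (mapsTo_image_Ioo_of_fixes_notMem_copies hc hcd hd hw σ) (mem_image_of_mem σ hyI)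
    · exact commutator_apply_eq_self_of_right (hfix hw σ hσ)
        (mapsTo_image_Ioo_of_fixes_notMem_copies hc hcd hd
          (fun z hz => inv_apply_eq_self (hf z hz)) σ) (mem_image_of_mem σ hyI)
  · have hnot : ∀ R : Set IntIsometry, σ y ∉ copies R (Ioo c d) := fun R h =>
      hyI ((apply_mem_copies_iff hsub hy).1 h).2
    have hwy := hw _ (hnot Q)
    exact commutator_apply_eq_self_of_left (s := {σ y}) (by rintro _ rfl; exact hf _ (hnot P))
      (by rintro _ rfl; exact hwy) rfl

/-- If `w` pushes `x` out of the support of `f` then `f * w⁻¹ * f⁻¹ * w` acts on `x` as `f`. -/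
theorem Localizes.inter (hP : Localizes G m P) (hQ : Localizes G m Q) :
    Localizes G m (P ∩ Q) := by
  refine localizes_of_forall_mem_Ioo fun c d hc hd φ hφ x hx => ?_
  have hcd : c < d := hx.1.trans hx.2
  obtain ⟨d', hd', hφ'⟩ := exists_right_mem_dyadicBumps hcd hφ
  obtain ⟨f, hfG, hfx, hf⟩ := hP c d' hc (hd'.2.le.trans hd) φ hφ' x
  obtain ⟨w₀, hw₀, hw₀x⟩ := exists_mem_dyadicBumps_lt_apply hx hd'.2
  obtain ⟨w, hwG, hwx, hw⟩ := hQ c d hc hd w₀ hw₀ x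
  have hwmem : w x ∈ Ioo c d := hwx ▸ mapsTo_Ioo_of_mem_supportedInside hw₀.2 hx
  have hfw : f (w x) = w x := hf _ fun h => by
    rw [← IntIsometry.one_apply (w x)] at h
    have h' := ((apply_mem_copies_iff (Ioo_subset_Ioo hc (hd'.2.le.trans hd))
      ⟨hc.trans hwmem.1.le, hwmem.2.le.trans hd⟩).1 h).2.2
    exact (h'.trans (hwx ▸ hw₀x)).false
  refine ⟨f * w⁻¹ * f⁻¹ * w, ?_, ?_, fun z => commutator_apply_eq_self_of_notMem_copies hc hcd.le hd
    (fun z hz => hf z fun h => hz ?_) hw⟩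
  · exact G.mul_mem (G.mul_mem (G.mul_mem hfG (G.inv_mem hwG)) (G.inv_mem hfG)) hwG
  · simp only [RelIso.mul_apply]
    rw [inv_apply_eq_self hfw, RelIso.inv_apply_self, hfx]
  · exact image2_subset_left (Ioo_subset_Ioo_right hd'.2.le) h

/-- Conjugating by an element which pushes `(c, d)` across `(m + 1) / 2` on all copies allows to
localise in the next interval. -/
theorem Localizes.of_succ (hG : RealizesBumps G e) (hP : Localizes G (m + 1) P)
    (hPm : P ⊆ labelPreserving e {m + 1}) : Localizes G m P := by
  refine localizes_of_forall_mem_Ioo fun c d hc hd φ hφ x hx => ?_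
  obtain ⟨c', hc', hφ'⟩ := exists_left_mem_dyadicBumps (hx.1.trans hx.2) hφ
  have hcell : ∀ y ∈ Icc c d,
      y ∈ Icc (((m + 1 : ℤ) : ℝ) / 2 - 1 / 2) (((m + 1 : ℤ) : ℝ) / 2 + 1 / 2) := fun y hy => by
    push_cast
    exact ⟨by linarith [hy.1], by linarith [hy.2]⟩
  obtain ⟨k, hk, hkc⟩ := exists_mem_dyadicBumps_lt_apply
    (c := ((m + 1 : ℤ) : ℝ) / 2 - 1 / 2) (d := ((m + 1 : ℤ) : ℝ) / 2 + 1 / 2)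
    (x := c') (y := ((m + 1 : ℤ) : ℝ) / 2)
    (by push_cast; exact ⟨by linarith [hc'.1], by linarith [hc'.2]⟩) (by linarith)
  obtain ⟨K, hKG, hK⟩ := hG (m + 1) k hk
  have hkd : k d ≤ (((m + 1 : ℤ) : ℝ) + 1) / 2 := by
    have hdmem : d ∈ Ioo (((m + 1 : ℤ) : ℝ) / 2 - 1 / 2) (((m + 1 : ℤ) : ℝ) / 2 + 1 / 2) := by
      push_cast
      exact ⟨by linarith [hx.1, hx.2], by linarith⟩
    linarith [(mapsTo_Ioo_of_mem_supportedInside hk.2 hdmem).2]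
  obtain ⟨t, htG, htx, ht⟩ := hP (k c') (k d) hkc.le hkd (k * φ * k⁻¹)
    (conj_mem_dyadicBumps hk.1 hφ') (k x)
  refine ⟨K⁻¹ * t * K, G.mul_mem (G.mul_mem (G.inv_mem hKG) htG) hKG,
    hK.conj_apply_eq (hcell x (Ioo_subset_Icc_self hx))
      (hcell _ (Ioo_subset_Icc_self (mapsTo_Ioo_of_mem_supportedInside hφ.2 hx))) htx,
    fun z hz => ?_⟩
  have hKz : t (K z) = K z := ht _ fun h => hz <| by
    obtain ⟨σ, hσ, y', hy', hσy⟩ := h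
    rw [← k.image_Ioo] at hy'
    obtain ⟨y, hy, rfl⟩ := hy'
    have hy' : y ∈ Ioo c d := ⟨hc'.1.trans hy.1, hy.2⟩
    rw [← hK σ (hPm hσ) y (hcell y (Ioo_subset_Icc_self hy'))] at hσy
    exact ⟨σ, hσ, y, hy', K.injective hσy⟩
  rw [RelIso.mul_apply, RelIso.mul_apply, hKz, RelIso.inv_apply_self]

theorem RealizesBumps.localizes_Icc (hG : RealizesBumps G e) (N : ℕ) (m : ℤ) :
    Localizes G m (labelPreserving e (Icc m (m + N))) := by
  induction N generalizing m with
  | zero =>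
    rw [Nat.cast_zero, add_zero, Icc_self]
    exact hG.localizes_singleton m
  | succ N ih =>
    have hsucc : Localizes G m (labelPreserving e (Icc (m + 1) (m + 1 + N))) :=
      (ih (m + 1)).of_succ hG (labelPreserving_anti (by simp))
    refine ((hG.localizes_singleton m).inter hsucc).mono fun σ hσ i hi => ?_
    rcases hi.1.eq_or_lt with rfl | h
    · exact hσ.1 _ rfl
    · exact hσ.2 i ⟨h, by have := hi.2; push_cast at this; lia⟩

theorem RightAperiodic.eventually_notMem_copies (he : RightAperiodic e) {z : ℝ}
    (hz : (m + 1) / 2 < z) : ∀ᶠ N : ℕ in atTop,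
      z ∉ copies (labelPreserving e (Icc m (m + N))) (Ioo (m / 2) ((m + 1) / 2)) := by
  obtain ⟨σ, y, hy, rfl⟩ := IntIsometry.exists_apply_eq m z
  have hσ := he m σ (IntIsometry.lt_index_of_lt_apply hy hz)
  simp only [labelPreserving, mem_ofPred_eq, not_forall] at hσ
  obtain ⟨i, hi, hne⟩ := hσ
  filter_upwards [eventually_ge_atTop (i - m).toNat] with N hN h
  exact hne (((apply_mem_copies_iff subset_rfl hy).1 h).1 i ⟨hi, by lia⟩)

theorem RealizesBumps.exists_apply_eq_and_fixes (hG : RealizesBumps G e) (he : RightAperiodic e)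
    {φ : ℝ ≃o ℝ} (hφ : φ ∈ cellBumps m) {x : ℝ}
    (hx : x ∈ Ioo (m / 2 - 1 / 2 : ℝ) (m / 2 + 1 / 2)) {F : Set ℝ} (hF : F.Finite)
    (hmF : ∀ p ∈ F, m / 2 + 1 / 2 < p) : ∃ t ∈ G, t x = φ x ∧ ∀ p ∈ F, t p = p := by
  obtain ⟨c, hc, hφc⟩ := exists_left_mem_dyadicBumps (hx.1.trans hx.2) hφ
  obtain ⟨k, hk, hkc⟩ := exists_mem_dyadicBumps_lt_apply hc (y := m / 2) (by linarith)
  obtain ⟨K, hKG, hK⟩ := hG m k hk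
  set d : ℝ := m / 2 + 1 / 2
  have hdc : d = (m + 1) / 2 := by ring
  have hkd : k d = d := apply_eq_self_of_notMem_Ioo hk.2 right_notMem_Ioo
  have hKd : K d = d := (hK.apply_eq ⟨by linarith, le_rfl⟩).trans hkd
  obtain ⟨N, hN⟩ := ((eventually_all_finite hF).2 fun p hp =>
    he.eventually_notMem_copies (z := K p) (m := m)
      (by rw [← hdc]; exact hKd.symm.trans_lt (K.strictMono (hmF p hp)))).exists
  obtain ⟨t, htG, htx, ht⟩ := hG.localizes_Icc N m (k c) (k d) hkc.le (by rw [hkd, hdc])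
    (k * φ * k⁻¹) (conj_mem_dyadicBumps hk.1 hφc) (k x)
  refine ⟨K⁻¹ * t * K, G.mul_mem (G.mul_mem (G.inv_mem hKG) htG) hKG,
    hK.conj_apply_eq (Ioo_subset_Icc_self hx)
      (Ioo_subset_Icc_self (mapsTo_Ioo_of_mem_supportedInside hφ.2 hx)) htx, fun p hp => ?_⟩
  have hKp : t (K p) = K p := ht _ fun h => hN p hp <| image2_subset_left
    (Ioo_subset_Ioo hkc.le (by rw [hkd, hdc])) h
  rw [RelIso.mul_apply, RelIso.mul_apply, hKp, RelIso.inv_apply_self]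

end Localization

/-! ### Quasi-periodic labellings -/

/-- The exponent of a letter, as a generator or an inverse of a generator. -/
def Letter.sign : Letter → ℤˣ
  | .a => 1
  | .b => 1
  | .A => -1
  | .B => -1

theorem Letter.sign_inv (l : Letter) : l.inv.sign = -l.sign := by
  cases l <;> simp [Letter.inv, Letter.sign]

theorem IsLabelling.even_sub_of_eq_inv {ρ : ℤ → Letter} (hρ : IsLabelling ρ) {i j : ℤ}
    (h : ρ i = (ρ j).inv) : Even (i - j) := by
  rcases Int.even_or_odd i with hi | hi <;> rcases Int.even_or_odd j with hj | hj
  · exact hi.sub hj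
  · rcases (hρ i).1 hi with h₁ | h₁ <;> rcases (hρ j).2 hj with h₂ | h₂ <;>
      simp [h₁, h₂, Letter.inv] at h
  · rcases (hρ i).2 hi with h₁ | h₁ <;> rcases (hρ j).1 hj with h₂ | h₂ <;>
      simp [h₁, h₂, Letter.inv] at h
  · exact hi.sub_odd hj

section BlockWord

variable {ρ : ℤ → Letter} {k k' : ℤ} {n n' : ℕ}

theorem length_blockWord (ρ : ℤ → Letter) (k : ℤ) (n : ℕ) : (blockWord ρ k n).length = n + 1 := by
  simp [blockWord]

theorem getElem_blockWord {i : ℕ} (hi : i < (blockWord ρ k n).length) :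
    (blockWord ρ k n)[i] = ρ (k + i) := by
  simp [blockWord, ← List.map_eq_flatMap]

theorem exists_eq_of_blockWord_infix (h : blockWord ρ k n <:+: blockWord ρ k' n') :
    ∃ j, k' ≤ j ∧ ∀ i ≤ n, ρ (j + i) = ρ (k + i) := by
  obtain ⟨j, -, hj⟩ := List.infix_iff_getElem?.1 h
  refine ⟨k' + j, by lia, fun i hi => ?_⟩
  obtain ⟨_, heq⟩ := List.getElem?_eq_some_iff.1 (hj i (by rw [length_blockWord]; lia))
  rw [getElem_blockWord, getElem_blockWord] at heq
  rw [← heq]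
  push_cast
  ring_nf

theorem eq_inv_of_blockWord_eq_wordInv (h : blockWord ρ k' n = wordInv (blockWord ρ k n)) {i : ℕ}
    (hi : i ≤ n) : ρ (k' + i) = (ρ (k + (n - i : ℕ))).inv := by
  have hi₁ : i < (blockWord ρ k' n).length := by rw [length_blockWord]; lia
  have hi₂ : n - i < (blockWord ρ k n).length := by rw [length_blockWord]; lia
  rw [← getElem_blockWord hi₁, ← getElem_blockWord hi₂]
  simp [h, wordInv, length_blockWord]

end BlockWord

/-- Arbitrarily large reflections respect the orientations `e` on any given interval. -/
def HasFarReflections (e : ℤ → ℤˣ) : Prop :=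
  ∀ k l M : ℤ, ∃ σ ∈ labelPreserving e (Icc k l), σ.sign = -1 ∧ M ≤ σ.shift

theorem IsQuasiPeriodic.exists_reflection {ρ : ℤ → Letter} (hρ : IsQuasiPeriodic ρ) (k : ℤ) (n : ℕ)
    (M : ℤ) : ∃ c ≥ M, ∀ i ∈ Icc k (k + n), ρ (c - i) = (ρ i).inv := by
  obtain ⟨-, hrec, hinv⟩ := hρ
  obtain ⟨k', hk'⟩ := hinv k n
  obtain ⟨N, hN⟩ := hrec k' n
  obtain ⟨j, hj, hρj⟩ := exists_eq_of_blockWord_infix (hN (M - k - n) N (Nat.le_succ N))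
  refine ⟨j + k + n, by lia, fun i hi => ?_⟩
  obtain ⟨i', rfl⟩ : ∃ i' : ℕ, i = k + i' := ⟨(i - k).toNat, by have := hi.1; lia⟩
  have hi' : i' ≤ n := by have := hi.2; lia
  have hcomp := hρj (n - i') (Nat.sub_le n i')
  rw [eq_inv_of_blockWord_eq_wordInv hk' (Nat.sub_le n i'), Nat.sub_sub_self hi',
    Nat.cast_sub hi'] at hcomp
  rw [← hcomp]
  ring_nf

theorem IsQuasiPeriodic.hasFarReflections {ρ : ℤ → Letter} (hρ : IsQuasiPeriodic ρ) :
    HasFarReflections fun n => (ρ n).sign := by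
  intro k l M
  obtain ⟨c, hM, hc⟩ := hρ.exists_reflection k (l - k).toNat (2 * M)
  obtain ⟨s, hs⟩ : Even (c - k - k) := hρ.1.even_sub_of_eq_inv (hc k ⟨le_rfl, by lia⟩)
  refine ⟨⟨-1, s + k⟩, fun i hi => ?_, rfl, by lia⟩
  have hindex : (⟨-1, s + k⟩ : IntIsometry).index i = c - i := by
    rw [IntIsometry.index_of_sign_eq_neg_one rfl]
    lia
  dsimp only
  rw [hindex, hc i ⟨hi.1, by have := hi.2; lia⟩, Letter.sign_inv, neg_one_mul]

section Periodicity

variable {e : ℤ → ℤˣ}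

theorem apply_add_mul_of_translation {σ : IntIsometry} {m : ℤ} (hσ : σ.sign = 1)
    (hshift : 0 ≤ σ.shift) (hmem : σ ∈ labelPreserving e (Ici m)) {i : ℤ} (hi : m ≤ i) (n : ℕ) :
    e (i + n * (2 * σ.shift)) = e i := by
  induction n with
  | zero => simp
  | succ n ih =>
    have hstep := hmem (i + n * (2 * σ.shift)) (hi.trans (le_add_of_nonneg_right (by positivity)))
    rw [IntIsometry.index_def, hσ, Units.val_one, one_mul, one_mul, ih] at hstep
    rw [← hstep]
    push_cast
    ring_nf

/-- A reflection flips the orientation at its centre. If `e` were periodic to the right of `m / 2`,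
then a reflection with a far centre would flip the orientation at any point equivalent to its
centre modulo the period. -/
theorem HasFarReflections.rightAperiodic (he : HasFarReflections e) : RightAperiodic e := by
  intro m σ hm hσ
  rcases Int.units_eq_one_or σ.sign with hs | hs
  · have hpos : 0 < 2 * σ.shift := by simpa [IntIsometry.index_def, hs] using hm
    obtain ⟨τ, hτ, hτs, hmτ⟩ := he m (m + 2 * σ.shift) m
    have hlt := Int.emod_lt_of_pos (τ.shift - m) hpos
    have hnonneg := Int.emod_nonneg (τ.shift - m) hpos.ne'
    have hdiv := Int.emod_add_mul_ediv (τ.shift - m) (2 * σ.shift)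
    obtain ⟨q, hq⟩ := Int.eq_ofNat_of_zero_le
      (Int.ediv_nonneg (sub_nonneg.2 hmτ) hpos.le : 0 ≤ (τ.shift - m) / (2 * σ.shift))
    set i := m + (τ.shift - m) % (2 * σ.shift)
    have hi := hτ i ⟨by lia, by lia⟩
    have hreflect : τ.index i = i + (2 * q : ℕ) * (2 * σ.shift) := by
      rw [IntIsometry.index_of_sign_eq_neg_one hτs]
      rw [hq] at hdiv
      push_cast
      linarith
    rw [hreflect, apply_add_mul_of_translation hs (by lia) hσ (by lia), hτs, neg_one_mul] at hi
    exact units_ne_neg_self _ hi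
  · rw [IntIsometry.index_of_sign_eq_neg_one hs] at hm
    have hcentre := hσ σ.shift (show m ≤ σ.shift by lia)
    rw [IntIsometry.index_of_sign_eq_neg_one hs, two_mul, add_sub_cancel_right, hs,
      neg_one_mul] at hcentre
    exact units_ne_neg_self _ hcentre

end Periodicity

/-! ### The action of the generators -/

/-- The isometry from `[0, 1]` onto the unit interval centred at `n / 2` with orientation `e n`. -/
noncomputable def chart (e : ℤ → ℤˣ) (n : ℤ) (y : ℝ) : ℝ :=
  (e n : ℤ) * (y - 1 / 2) + n / 2

/-- The pairs `(f, g)` such that `f` preserves `[0, 1]` and `g` acts as `f` in the charts of all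
unit intervals centred at `n / 2` with `n` of the same parity as `m`. -/
def chartAction (e : ℤ → ℤˣ) (m : ℤ) : Subgroup ((ℝ ≃o ℝ) × (ℝ ≃o ℝ)) where
  carrier := {p | p.1 0 = 0 ∧ p.1 1 = 1 ∧
    ∀ n : ℤ, Even (n - m) → ∀ y ∈ Icc (0 : ℝ) 1, p.2 (chart e n y) = chart e n (p.1 y)}
  one_mem' := ⟨rfl, rfl, fun _ _ _ _ => rfl⟩
  mul_mem' := by
    rintro ⟨f, g⟩ ⟨f', g'⟩ ⟨h₀, h₁, h⟩ ⟨h₀', h₁', h'⟩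
    refine ⟨(congrArg f h₀').trans h₀, (congrArg f h₁').trans h₁, fun n hn y hy => ?_⟩
    have hy' : f' y ∈ Icc (0 : ℝ) 1 :=
      ⟨h₀' ▸ f'.monotone hy.1, h₁' ▸ f'.monotone hy.2⟩
    exact (congrArg g (h' n hn y hy)).trans (h n hn _ hy')
  inv_mem' := by
    rintro ⟨f, g⟩ ⟨h₀, h₁, h⟩
    have h₀' := inv_apply_eq_self h₀
    have h₁' := inv_apply_eq_self h₁
    refine ⟨h₀', h₁', fun n hn y hy => ?_⟩
    have hy' : f⁻¹ y ∈ Icc (0 : ℝ) 1 :=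
      ⟨h₀' ▸ (f⁻¹ : ℝ ≃o ℝ).monotone hy.1, h₁' ▸ (f⁻¹ : ℝ ≃o ℝ).monotone hy.2⟩
    apply g.injective
    change g (g⁻¹ (chart e n y)) = g (chart e n (f⁻¹ y))
    rw [RelIso.apply_inv_self, h n hn _ hy', RelIso.apply_inv_self]

section Chart

variable {e : ℤ → ℤˣ} {m n : ℤ} {f g : ℝ ≃o ℝ}

theorem chart_eq_or (e : ℤ → ℤˣ) (n : ℤ) :
    (∀ y, chart e n y = y - 1 / 2 + n / 2) ∨ ∀ y, chart e n y = 1 / 2 - y + n / 2 := by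
  rcases Int.units_eq_one_or (e n) with h | h
  · exact Or.inl fun y => by simp [chart, h]
  · exact Or.inr fun y => by simp [chart, h]

theorem chart_mem_Icc (e : ℤ → ℤˣ) (n : ℤ) {y : ℝ} (hy : y ∈ Icc (0 : ℝ) 1) :
    chart e n y ∈ Icc (n / 2 - 1 / 2 : ℝ) (n / 2 + 1 / 2) := by
  obtain ⟨h₀, h₁⟩ := hy
  rcases chart_eq_or e n with h | h <;> rw [h] <;> constructor <;> linarith

theorem chart_mem_Ioo (e : ℤ → ℤˣ) (n : ℤ) {y : ℝ} (hy : y ∈ Ioo (0 : ℝ) 1) :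
    chart e n y ∈ Ioo (n / 2 - 1 / 2 : ℝ) (n / 2 + 1 / 2) := by
  obtain ⟨h₀, h₁⟩ := hy
  rcases chart_eq_or e n with h | h <;> rw [h] <;> constructor <;> linarith

theorem exists_chart_eq (e : ℤ → ℤˣ) {n : ℤ} {x : ℝ}
    (hx : x ∈ Icc (n / 2 - 1 / 2 : ℝ) (n / 2 + 1 / 2)) : ∃ y ∈ Icc (0 : ℝ) 1, chart e n y = x := by
  obtain ⟨h₀, h₁⟩ := hx
  rcases chart_eq_or e n with h | h
  · exact ⟨x - n / 2 + 1 / 2, ⟨by linarith, by linarith⟩, by rw [h]; ring⟩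
  · exact ⟨1 / 2 - x + n / 2, ⟨by linarith, by linarith⟩, by rw [h]; ring⟩

theorem exists_even_sub_and_chart_eq (e : ℤ → ℤˣ) (m : ℤ) (x : ℝ) :
    ∃ n, Even (n - m) ∧ ∃ y ∈ Icc (0 : ℝ) 1, chart e n y = x := by
  have hle := Int.floor_le (x - m / 2 + 1 / 2)
  have hlt := Int.lt_floor_add_one (x - m / 2 + 1 / 2)
  refine ⟨2 * ⌊x - m / 2 + 1 / 2⌋ + m, by simp, exists_chart_eq e ?_⟩
  push_cast
  exact ⟨by linarith, by linarith⟩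

theorem IntIsometry.apply_chart {σ : IntIsometry} (hσ : σ ∈ labelPreserving e {n}) (y : ℝ) :
    σ (chart e n y) = chart e (σ.index n) y := by
  rw [chart, chart, mem_labelPreserving_singleton.1 hσ, index_def, apply_def, Units.val_mul]
  push_cast
  ring

theorem IntIsometry.even_index_sub (σ : IntIsometry) (hn : Even (n - m)) :
    Even (σ.index n - m) := by
  obtain ⟨k, hk⟩ := hn
  rcases Int.units_eq_one_or σ.sign with h | h <;> rw [index_def, h]
  · exact ⟨k + σ.shift, by rw [Units.val_one]; lia⟩
  · exact ⟨σ.shift - n + k, by rw [Units.val_neg, Units.val_one]; lia⟩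

theorem apply_chart_of_mem_chartAction (h : (f, g) ∈ chartAction e m) (hn : Even (n - m)) {y : ℝ}
    (hy : y ∈ Icc (0 : ℝ) 1) : g (chart e n y) = chart e n (f y) :=
  h.2.2 n hn y hy

theorem mapsTo_Icc_of_mem_chartAction (h : (f, g) ∈ chartAction e m) :
    MapsTo f (Icc (0 : ℝ) 1) (Icc 0 1) := fun _ hy =>
  ⟨h.1 ▸ f.monotone hy.1, h.2.1 ▸ f.monotone hy.2⟩

theorem chartAction_le_of_even_sub (h : Even (n - m)) : chartAction e m ≤ chartAction e n :=
  fun _ hp => ⟨hp.1, hp.2.1, fun k hk => hp.2.2 k (by simpa using hk.add h)⟩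

theorem mem_chartAction_of_isZeta {ρ : ℤ → Letter} (hρ : IsLabelling ρ) {ν ζ : ℝ ≃o ℝ}
    (hν : InThompsonF ν) (h : IsZeta ρ ν ζ) :
    (ν, ζ) ∈ chartAction (fun n => (ρ n).sign) 1 := by
  refine ⟨hν.apply_eq_self left_notMem_Ioo, hν.apply_eq_self right_notMem_Ioo, ?_⟩
  intro n hn y ⟨hy₀, hy₁⟩
  obtain ⟨k, rfl⟩ : Odd n := by simpa using hn.add_odd odd_one
  rcases (hρ (2 * k + 1)).2 ⟨k, rfl⟩ with hl | hl <;>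
    simp only [chart, hl, Letter.sign, Units.val_neg, Units.val_one]
  · have hζ := (h k (y + k) ⟨by linarith, by linarith⟩).1 hl
    rw [add_sub_cancel_right] at hζ
    convert hζ using 1 <;> push_cast <;> ring_nf
  · have hζ := (h k (k + 1 - y) ⟨by linarith, by linarith⟩).2 hl
    rw [sub_sub_cancel] at hζ
    convert hζ using 1 <;> push_cast <;> ring_nf

theorem mem_chartAction_of_isChi {ρ : ℤ → Letter} (hρ : IsLabelling ρ) {ν χ : ℝ ≃o ℝ}
    (hν : InThompsonF ν) (h : IsChi ρ ν χ) :
    (ν, χ) ∈ chartAction (fun n => (ρ n).sign) 0 := by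
  refine ⟨hν.apply_eq_self left_notMem_Ioo, hν.apply_eq_self right_notMem_Ioo, ?_⟩
  intro n hn y ⟨hy₀, hy₁⟩
  obtain ⟨k, rfl⟩ := even_iff_two_dvd.1 (show Even n by simpa using hn)
  rcases (hρ (2 * k)).1 (even_two_mul k) with hl | hl <;>
    simp only [chart, hl, Letter.sign, Units.val_neg, Units.val_one]
  · have hχ := (h k (y + (k - 1 / 2)) ⟨by linarith, by linarith⟩).1 hl
    rw [add_sub_cancel_right] at hχ
    convert hχ using 1 <;> push_cast <;> ring_nf
  · have hχ := (h k (k + 1 / 2 - y) ⟨by linarith, by linarith⟩).2 hl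
    rw [sub_sub_cancel] at hχ
    convert hχ using 1 <;> push_cast <;> ring_nf

theorem exists_mem_dyadicBumps_of_isometry (ε : ℤˣ) {a b r : ℝ} (ha : a ∈ dyadicSubring)
    (hb : b ∈ dyadicSubring) (hf : f ∈ dyadicBumps (a - r) (a + r)) :
    ∃ φ ∈ dyadicBumps (b - r) (b + r),
      ∀ y, φ ((ε : ℤ) * (y - a) + b) = (ε : ℤ) * (f y - a) + b := by
  rcases Int.units_eq_one_or ε with rfl | rfl
  · set A := dyadicAffine 0 (b - a)
    have hA : ∀ y, A y = y - a + b := fun y => by rw [dyadicAffine_apply]; ring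
    refine ⟨A * f * A⁻¹, ?_, fun y => ?_⟩
    · convert conj_mem_dyadicBumps (dyadicAffine_mem_dyadicPL (sub_mem hb ha) 0) hf using 1
      rw [hA, hA]
      ring_nf
    · simp only [Units.val_one, Int.cast_one, one_mul, ← hA, RelIso.mul_apply,
        RelIso.inv_apply_self]
  · set A := dyadicAffine 0 (a + b)
    have hA : ∀ y, A (-y) = -1 * (y - a) + b := fun y => by rw [dyadicAffine_apply]; ring
    refine ⟨A * reflect f * A⁻¹, ?_, fun y => ?_⟩
    · convert conj_mem_dyadicBumps (dyadicAffine_mem_dyadicPL (add_mem ha hb) 0)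
        (reflect_mem_dyadicBumps hf) using 1
      rw [hA, hA]
      ring_nf
    · simp only [Units.val_neg, Units.val_one, Int.cast_neg, Int.cast_one, ← hA,
        RelIso.mul_apply, RelIso.inv_apply_self, reflect_apply, neg_neg]

theorem one_half_mem_dyadicSubring : (1 / 2 : ℝ) ∈ dyadicSubring := by
  simpa using intCast_div_two_mem_dyadicSubring 1

theorem exists_cellBumps_apply_chart (e : ℤ → ℤˣ) (n : ℤ) (hf : f ∈ dyadicBumps 0 1) :
    ∃ φ ∈ cellBumps n, ∀ y, φ (chart e n y) = chart e n (f y) :=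
  exists_mem_dyadicBumps_of_isometry (e n) one_half_mem_dyadicSubring
    (intCast_div_two_mem_dyadicSubring n) (by norm_num [hf])

theorem exists_dyadicBumps_chart_apply (e : ℤ → ℤˣ) {φ : ℝ ≃o ℝ} (hφ : φ ∈ cellBumps n) :
    ∃ f ∈ dyadicBumps 0 1, ∀ y, φ (chart e n y) = chart e n (f y) := by
  obtain ⟨f, hf, hφf⟩ := exists_mem_dyadicBumps_of_isometry (e n)
    (intCast_div_two_mem_dyadicSubring n) one_half_mem_dyadicSubring hφ
  refine ⟨f, by convert hf using 2 <;> norm_num, fun y => ?_⟩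
  have hy := hφf (chart e n y)
  rcases Int.units_eq_one_or (e n) with h | h <;>
    simp only [chart, h, Units.val_neg, Units.val_one, Int.cast_neg, Int.cast_one] at hy ⊢ <;>
    ring_nf at hy ⊢ <;> linarith

theorem actsOnCopies_of_mem_chartAction {φ : ℝ ≃o ℝ} (h : (f, g) ∈ chartAction e m)
    (hφ : ∀ y, φ (chart e m y) = chart e m (f y)) : ActsOnCopies e m φ g := by
  intro σ hσ z hz
  obtain ⟨y, hy, rfl⟩ := exists_chart_eq e hz
  rw [IntIsometry.apply_chart hσ, hφ, IntIsometry.apply_chart hσ]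
  exact apply_chart_of_mem_chartAction h (σ.even_index_sub (by simp)) hy

end Chart

theorem realizesBumps_of_mem_chartAction {ι : Type*} {e : ℤ → ℤˣ} {G : Subgroup (ℝ ≃o ℝ)}
    {ν : ι → ℝ ≃o ℝ} (hν : ∀ f, InH f → f ∈ Subgroup.closure (range ν))
    (hG : ∀ i m, ∃ g ∈ G, (ν i, g) ∈ chartAction e m) : RealizesBumps G e := by
  intro m φ hφ
  obtain ⟨f, hf, hφf⟩ := exists_dyadicBumps_chart_apply e hφ
  have hle : Subgroup.closure (range ν) ≤
      (chartAction e m ⊓ G.comap (MonoidHom.snd _ _)).map (MonoidHom.fst _ _) := by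
    rw [Subgroup.closure_le]
    rintro _ ⟨i, rfl⟩
    obtain ⟨g, hg, hact⟩ := hG i m
    exact ⟨(ν i, g), ⟨hact, hg⟩, rfl⟩
  obtain ⟨⟨f, g⟩, ⟨hact, hg⟩, rfl⟩ := hle (hν f (inH_of_mem_dyadicBumps hf))
  exact ⟨g, hg, actsOnCopies_of_mem_chartAction hact hφf⟩

/-! ### Dynamics on the line -/

/-- Every point is moved by at most `D`. -/
def DisplacementLE (a : ℝ ≃o ℝ) (D : ℝ) : Prop :=
  ∀ x, |a x - x| ≤ D

namespace DisplacementLE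

variable {a b : ℝ ≃o ℝ} {D D' : ℝ}

theorem nonneg (ha : DisplacementLE a D) : 0 ≤ D :=
  (abs_nonneg _).trans (ha 0)

theorem one : DisplacementLE 1 0 := fun x => by simp

theorem mul (ha : DisplacementLE a D) (hb : DisplacementLE b D') :
    DisplacementLE (a * b) (D + D') := fun x =>
  (abs_sub_le (a (b x)) (b x) x).trans (add_le_add (ha _) (hb x))

theorem inv (ha : DisplacementLE a D) : DisplacementLE a⁻¹ D := fun x => by
  simpa [abs_sub_comm] using ha (a⁻¹ x)

theorem of_mem_chartAction {e : ℤ → ℤˣ} {m : ℤ} (h : (b, a) ∈ chartAction e m) :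
    DisplacementLE a 1 := by
  intro x
  obtain ⟨n, hn, y, hy, rfl⟩ := exists_even_sub_and_chart_eq e m x
  rw [apply_chart_of_mem_chartAction h hn hy, abs_le]
  have hx := chart_mem_Icc e n hy
  have hax := chart_mem_Icc e n (mapsTo_Icc_of_mem_chartAction h hy)
  constructor <;> linarith [hx.1, hx.2, hax.1, hax.2]

end DisplacementLE

/-- The homeomorphisms whose action near any point commutes with every isometry respecting the
orientations near that point. -/
def localEquivariance (e : ℤ → ℤˣ) : Subgroup (ℝ ≃o ℝ) where
  carrier := {a | ∃ D, DisplacementLE a D ∧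
    ∀ x : ℝ, ∀ σ ∈ labelPreserving e {i | |(i : ℝ) / 2 - x| ≤ D}, a (σ x) = σ (a x)}
  one_mem' := ⟨0, DisplacementLE.one, fun _ _ _ => rfl⟩
  mul_mem' := by
    rintro a b ⟨D, haD, ha⟩ ⟨D', hbD, hb⟩
    refine ⟨D + D', haD.mul hbD, fun x σ hσ => ?_⟩
    rw [RelIso.mul_apply, RelIso.mul_apply, hb x σ, ha (b x) σ]
    · refine labelPreserving_anti (fun i hi => ?_) hσ
      exact (abs_sub_le (i / 2 : ℝ) (b x) x).trans (add_le_add hi (hbD x))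
    · exact labelPreserving_anti
        (fun i (hi : |(i / 2 : ℝ) - x| ≤ D') => hi.trans (le_add_of_nonneg_left haD.nonneg)) hσ
  inv_mem' := by
    rintro a ⟨D, haD, ha⟩
    refine ⟨2 * D, fun x => (haD.inv x).trans (by linarith [haD.nonneg]), fun x σ hσ => ?_⟩
    apply a.injective
    rw [RelIso.apply_inv_self, ha _ σ, RelIso.apply_inv_self]
    refine labelPreserving_anti (fun i (hi : |(i / 2 : ℝ) - a⁻¹ x| ≤ D) => ?_) hσ
    calc |(i / 2 : ℝ) - x| ≤ |i / 2 - a⁻¹ x| + |a⁻¹ x - x| := abs_sub_le _ _ _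
      _ ≤ 2 * D := by linarith [haD.inv x]

/-- The homeomorphisms whose effect at any single point `x` is also achieved by elements of `G`
fixing any given finite set of points far to the right of `x`. -/
def localTransitivity (G : Subgroup (ℝ ≃o ℝ)) : Subgroup (ℝ ≃o ℝ) where
  carrier := {a | ∃ D, DisplacementLE a D ∧ ∀ x : ℝ, ∀ F : Set ℝ, F.Finite → F ⊆ Ioi (x + D) →
    ∃ t ∈ G, t x = a x ∧ ∀ p ∈ F, t p = p}
  one_mem' := ⟨0, DisplacementLE.one, fun _ _ _ _ => ⟨1, G.one_mem, rfl, fun _ _ => rfl⟩⟩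
  mul_mem' := by
    rintro a b ⟨D, haD, ha⟩ ⟨D', hbD, hb⟩
    refine ⟨D + D', haD.mul hbD, fun x F hF hxF => ?_⟩
    obtain ⟨t, ht, htx, htF⟩ := hb x F hF fun p hp =>
      (by linarith [haD.nonneg] : x + D' ≤ x + (D + D')).trans_lt (hxF hp)
    obtain ⟨u, hu, hux, huF⟩ := ha (b x) F hF fun p hp =>
      (by linarith [(abs_le.1 (hbD x)).2] : b x + D ≤ x + (D + D')).trans_lt (hxF hp)
    refine ⟨u * t, G.mul_mem hu ht, ?_, fun p hp => ?_⟩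
    · rw [RelIso.mul_apply, htx, hux, RelIso.mul_apply]
    · rw [RelIso.mul_apply, htF p hp, huF p hp]
  inv_mem' := by
    rintro a ⟨D, haD, ha⟩
    refine ⟨2 * D, fun x => (haD.inv x).trans (by linarith [haD.nonneg]), fun x F hF hxF => ?_⟩
    obtain ⟨t, ht, htx, htF⟩ := ha (a⁻¹ x) F hF fun p hp =>
      (by linarith [(abs_le.1 (haD.inv x)).2] : a⁻¹ x + D ≤ x + 2 * D).trans_lt (hxF hp)
    refine ⟨t⁻¹, G.inv_mem ht, t.injective ?_, fun p hp => inv_apply_eq_self (htF p hp)⟩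
    rw [RelIso.apply_inv_self, htx, RelIso.apply_inv_self]

section Dynamics

variable {e : ℤ → ℤˣ} {m : ℤ} {f g a : ℝ ≃o ℝ}

theorem mem_localEquivariance_of_mem_chartAction (h : (f, g) ∈ chartAction e m) :
    g ∈ localEquivariance e := by
  refine ⟨1, .of_mem_chartAction h, fun x σ hσ => ?_⟩
  obtain ⟨n, hn, y, hy, rfl⟩ := exists_even_sub_and_chart_eq e m x
  have hcell := chart_mem_Icc e n hy
  have hnear : |(n / 2 : ℝ) - chart e n y| ≤ 1 :=
    abs_le.2 ⟨by linarith [hcell.2], by linarith [hcell.1]⟩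
  have hσn : σ ∈ labelPreserving e {n} := labelPreserving_anti (singleton_subset_iff.2 hnear) hσ
  rw [IntIsometry.apply_chart hσn, apply_chart_of_mem_chartAction h hn hy,
    IntIsometry.apply_chart hσn]
  exact apply_chart_of_mem_chartAction h (σ.even_index_sub hn) hy

theorem mem_localTransitivity_of_mem_chartAction {G : Subgroup (ℝ ≃o ℝ)} (hG : RealizesBumps G e)
    (he : RightAperiodic e) (hf : InThompsonF f) (h : (f, g) ∈ chartAction e m) :
    g ∈ localTransitivity G := by
  refine ⟨1, .of_mem_chartAction h, fun x F hF hxF => ?_⟩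
  obtain ⟨n, hn, y, hy, rfl⟩ := exists_even_sub_and_chart_eq e m x
  rw [apply_chart_of_mem_chartAction h hn hy]
  by_cases hy' : y ∈ Ioo (0 : ℝ) 1
  · obtain ⟨f', hf', hf'y⟩ := hf.exists_mem_dyadicBumps_apply_eq hy'
    obtain ⟨φ, hφ, hφf'⟩ := exists_cellBumps_apply_chart e n hf'
    rw [← hf'y, ← hφf']
    have hcell := (chart_mem_Icc e n hy).1
    exact hG.exists_apply_eq_and_fixes he hφ (chart_mem_Ioo e n hy') hF fun p hp =>
      (by linarith : (n / 2 + 1 / 2 : ℝ) ≤ chart e n y + 1).trans_lt (hxF hp)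
  · rw [hf.apply_eq_self hy']
    exact ⟨1, G.one_mem, rfl, fun _ _ => rfl⟩

/-- A reflection commuting with `a` near `x` exchanges the cases `x ≤ a x` and `a x ≤ x`, so the
intermediate value theorem applies between `x` and its mirror image. -/
theorem HasFarReflections.exists_gt_apply_eq_self (he : HasFarReflections e)
    (ha : a ∈ localEquivariance e) (M : ℝ) : ∃ p > M, a p = p := by
  obtain ⟨D, -, ha⟩ := ha
  obtain ⟨x, hMx⟩ := exists_gt M
  obtain ⟨σ, hσ, hsign, hshift⟩ := he ⌊2 * (x - D)⌋ ⌈2 * (x + D)⌉ ⌈M + x + 1⌉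
  have hσx : ∀ y, σ y = -y + σ.shift := fun y => by simp [IntIsometry.apply_def, hsign]
  have hMσ : M < σ x := by
    rw [hσx]
    linarith [Int.ceil_le.1 hshift]
  have hcomm : a (σ x) = σ (a x) := by
    refine ha x σ (labelPreserving_anti (fun i (hi : |(i / 2 : ℝ) - x| ≤ D) => ?_) hσ)
    obtain ⟨h₀, h₁⟩ := abs_le.1 hi
    exact ⟨Int.cast_le.1 ((Int.floor_le _).trans (by linarith)),
      Int.cast_le.1 (le_trans (by linarith) (Int.le_ceil _))⟩
  have hcont : ContinuousOn (fun y => a y) (Ioi M) := a.continuous.continuousOn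
  rcases le_total (a x) x with h | h
  · exact isPreconnected_Ioi.intermediate_value₂ hMx hMσ hcont continuousOn_id h
      (by rw [hcomm, hσx, hσx]; exact add_le_add_left (neg_le_neg h) _)
  · exact isPreconnected_Ioi.intermediate_value₂ hMσ hMx hcont continuousOn_id
      (by rw [hcomm, hσx, hσx]; exact add_le_add_left (neg_le_neg h) _) h

end Dynamics

theorem apply_eq_self_of_mem_closure {S : Set (ℝ ≃o ℝ)} {x : ℝ} (hS : ∀ g ∈ S, g x = x) :
    ∀ γ ∈ Subgroup.closure S, γ x = x :=
  (Subgroup.closure_le (MulAction.stabilizer (ℝ ≃o ℝ) x)).2 hS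

theorem exists_fixed_points_and_transport {e : ℤ → ℤˣ} (he : HasFarReflections e)
    {G : Subgroup (ℝ ≃o ℝ)} (heq : G ≤ localEquivariance e) (htr : G ≤ localTransitivity G)
    {a₁ a₂ a₃ : ℝ ≃o ℝ} (ha₁ : a₁ ∈ G) (ha₂ : a₂ ∈ G) (ha₃ : a₃ ∈ G) :
    ∃ x p q : ℝ, a₁ x = x ∧ a₂ p = p ∧ a₃ q = q ∧
      ∃ t ∈ G, t x = a₂⁻¹ x ∧ t p = p ∧ t q = q := by
  obtain ⟨x, -, hx⟩ := he.exists_gt_apply_eq_self (heq ha₁) 0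
  obtain ⟨D, -, hD⟩ := htr (G.inv_mem ha₂)
  obtain ⟨p, hxp, hp⟩ := he.exists_gt_apply_eq_self (heq ha₂) (x + D)
  obtain ⟨q, hxq, hq⟩ := he.exists_gt_apply_eq_self (heq ha₃) (x + D)
  obtain ⟨t, ht, htx, htF⟩ := hD x {p, q} (toFinite _) (pair_subset hxp hxq)
  exact ⟨x, p, q, hx, hp, hq, t, ht, htx, htF p (by simp), htF q (by simp)⟩

theorem exists_generator_mem_chartAction {ι : Type*} {ρ : ℤ → Letter} (hρ : IsLabelling ρ)
    {ν ζ χ : ι → ℝ ≃o ℝ} (hν : ∀ i, InThompsonF (ν i)) (hζ : ∀ i, IsZeta ρ (ν i) (ζ i))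
    (hχ : ∀ i, IsChi ρ (ν i) (χ i)) (i : ι) (m : ℤ) :
    ∃ g ∈ range ζ ∪ range χ, (ν i, g) ∈ chartAction (fun n => (ρ n).sign) m := by
  rcases Int.even_or_odd m with hm | hm
  · exact ⟨χ i, Or.inr (mem_range_self i), chartAction_le_of_even_sub (by simpa using hm)
      (mem_chartAction_of_isChi hρ (hν i) (hχ i))⟩
  · exact ⟨ζ i, Or.inl (mem_range_self i), chartAction_le_of_even_sub (hm.sub_odd odd_one)
      (mem_chartAction_of_isZeta hρ (hν i) (hζ i))⟩

theorem key_proposition_general {ι : Type*} {ρ : ℤ → Letter} (hρ : IsLabelling ρ)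
    (href : HasFarReflections fun n => (ρ n).sign) {ν ζ χ : ι → ℝ ≃o ℝ}
    (hν : ∀ i, InThompsonF (ν i)) (hgen : ∀ f, InH f → f ∈ Subgroup.closure (range ν))
    (hζ : ∀ i, IsZeta ρ (ν i) (ζ i)) (hχ : ∀ i, IsChi ρ (ν i) (χ i))
    {G : Subgroup (ℝ ≃o ℝ)} (hG : G = Subgroup.closure (range ζ ∪ range χ))
    {a₁ a₂ a₃ : ℝ ≃o ℝ} (ha₁ : a₁ ∈ G) (ha₂ : a₂ ∈ G) (ha₃ : a₃ ∈ G) :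
    ∃ h g₁ g₂ g₃ : ℝ ≃o ℝ, h ∈ G ∧ g₁ ∈ G ∧ g₂ ∈ G ∧ g₃ ∈ G ∧
      ∃ I₁ I₂ I₃ : Set ℝ, I₁.Nonempty ∧ I₂.Nonempty ∧ I₃.Nonempty ∧
        I₁ ⊆ I₂ ∧ I₂ ⊆ I₃ ∧
        (∃ x : ℝ, ∀ γ ∈ Subgroup.closure {g₁, g₂, g₃}, γ x = x) ∧
        (∃ x : ℝ, ∀ γ ∈ Subgroup.closure {h⁻¹ * a₁ * h, g₁}, γ x = x) ∧
        (∃ x : ℝ, ∀ γ ∈ Subgroup.closure {h⁻¹ * a₂ * h, g₂}, γ x = x) ∧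
        (∃ x : ℝ, ∀ γ ∈ Subgroup.closure {h⁻¹ * a₃ * h, g₃}, γ x = x) ∧
        (∀ x ∈ I₁, (h⁻¹ * a₁ * h * g₁) x = x) ∧
        (∀ x ∈ I₂, (h⁻¹ * a₂ * h * g₂) x = x) ∧
        (∀ x ∈ I₃, (h⁻¹ * a₃ * h * g₃) x = x) ∧
        {x : ℝ | g₁ x ≠ x} ⊆ I₂ ∧
        {x : ℝ | g₂ x ≠ x} ⊆ I₃ := by
  subst hG
  set G := Subgroup.closure (range ζ ∪ range χ)
  have hreal : RealizesBumps G fun n => (ρ n).sign :=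
    realizesBumps_of_mem_chartAction hgen fun i m =>
      let ⟨g, hg, hact⟩ := exists_generator_mem_chartAction hρ hν hζ hχ i m
      ⟨g, Subgroup.subset_closure hg, hact⟩
  have hact : ∀ g ∈ range ζ ∪ range χ, ∃ i m, (ν i, g) ∈ chartAction (fun n => (ρ n).sign) m := by
    rintro _ (⟨i, rfl⟩ | ⟨i, rfl⟩)
    · exact ⟨i, 1, mem_chartAction_of_isZeta hρ (hν i) (hζ i)⟩
    · exact ⟨i, 0, mem_chartAction_of_isChi hρ (hν i) (hχ i)⟩
  have heq : G ≤ localEquivariance fun n => (ρ n).sign := (Subgroup.closure_le _).2 fun g hg =>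
    let ⟨_, _, h⟩ := hact g hg
    mem_localEquivariance_of_mem_chartAction h
  have htr : G ≤ localTransitivity G := (Subgroup.closure_le _).2 fun g hg =>
    let ⟨i, _, h⟩ := hact g hg
    mem_localTransitivity_of_mem_chartAction hreal href.rightAperiodic (hν i) h
  obtain ⟨x, p, q, hx, hp, hq, t, ht, htx, htp, htq⟩ :=
    exists_fixed_points_and_transport href heq htr ha₁ ha₂ ha₃
  have hq' : a₃⁻¹ q = q := inv_apply_eq_self hq
  refine ⟨1, 1, t, a₃⁻¹, G.one_mem, G.one_mem, ht, G.inv_mem ha₃, {x}, {x}, univ,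
    singleton_nonempty x, singleton_nonempty x, univ_nonempty, subset_rfl, subset_univ _,
    ⟨q, apply_eq_self_of_mem_closure ?_⟩, ⟨x, apply_eq_self_of_mem_closure ?_⟩,
    ⟨p, apply_eq_self_of_mem_closure ?_⟩, ⟨q, apply_eq_self_of_mem_closure ?_⟩,
    ?_, ?_, ?_, ?_, subset_univ _⟩
  · simp [htq, hq']
  · simp [hx]
  · simp [hp, htp]
  · simp [hq, hq']
  · simp [hx]
  · simp [htx]
  · simp
  · simp

/-- The key structural proposition: given `a₁, a₂, a₃ ∈ G_ρ`, there
exist `h, g₁, g₂, g₃ ∈ G_ρ` and nonempty sets `I₁ ⊆ I₂ ⊆ I₃ ⊆ ℝ` such that, writing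
`fᵢ := h⁻¹ aᵢ h`: each of `⟨g₁, g₂, g₃⟩`, `⟨f₁, g₁⟩`, `⟨f₂, g₂⟩`, `⟨f₃, g₃⟩` has a
global fixed point, `fᵢ gᵢ` fixes `Iᵢ` pointwise, and `Supp(gᵢ) ⊆ I_{i+1}` for
`i = 1, 2`. -/
theorem key_proposition
    (ρ : ℤ → Letter) (hρ : IsQuasiPeriodic ρ)
    (H : Subgroup (ℝ ≃o ℝ)) (hH : ∀ f : ℝ ≃o ℝ, f ∈ H ↔ InH f)
    (ν₁ ν₂ ν₃ : ℝ ≃o ℝ) (hgen : Subgroup.closure {ν₁, ν₂, ν₃} = H)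
    (ζ₁ ζ₂ ζ₃ χ₁ χ₂ χ₃ : ℝ ≃o ℝ)
    (hζ₁ : IsZeta ρ ν₁ ζ₁) (hζ₂ : IsZeta ρ ν₂ ζ₂) (hζ₃ : IsZeta ρ ν₃ ζ₃)
    (hχ₁ : IsChi ρ ν₁ χ₁) (hχ₂ : IsChi ρ ν₂ χ₂) (hχ₃ : IsChi ρ ν₃ χ₃)
    (G : Subgroup (ℝ ≃o ℝ))
    (hG : G = Subgroup.closure {ζ₁, ζ₂, ζ₃, χ₁, χ₂, χ₃})
    (a₁ a₂ a₃ : ℝ ≃o ℝ) (ha₁ : a₁ ∈ G) (ha₂ : a₂ ∈ G) (ha₃ : a₃ ∈ G) :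
    ∃ h g₁ g₂ g₃ : ℝ ≃o ℝ, h ∈ G ∧ g₁ ∈ G ∧ g₂ ∈ G ∧ g₃ ∈ G ∧
      ∃ I₁ I₂ I₃ : Set ℝ, I₁.Nonempty ∧ I₂.Nonempty ∧ I₃.Nonempty ∧
        I₁ ⊆ I₂ ∧ I₂ ⊆ I₃ ∧
        (∃ x : ℝ, ∀ γ ∈ Subgroup.closure {g₁, g₂, g₃}, γ x = x) ∧
        (∃ x : ℝ, ∀ γ ∈ Subgroup.closure {h⁻¹ * a₁ * h, g₁}, γ x = x) ∧
        (∃ x : ℝ, ∀ γ ∈ Subgroup.closure {h⁻¹ * a₂ * h, g₂}, γ x = x) ∧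
        (∃ x : ℝ, ∀ γ ∈ Subgroup.closure {h⁻¹ * a₃ * h, g₃}, γ x = x) ∧
        (∀ x ∈ I₁, (h⁻¹ * a₁ * h * g₁) x = x) ∧
        (∀ x ∈ I₂, (h⁻¹ * a₂ * h * g₂) x = x) ∧
        (∀ x ∈ I₃, (h⁻¹ * a₃ * h * g₃) x = x) ∧
        {x : ℝ | g₁ x ≠ x} ⊆ I₂ ∧
        {x : ℝ | g₂ x ≠ x} ⊆ I₃ := by
  have hrange : ∀ a b c : ℝ ≃o ℝ, range ![a, b, c] = {a, b, c} := fun a b c => by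
    rw [Matrix.range_cons, Matrix.range_cons_cons_empty, singleton_union]
  have hν : ∀ i, InThompsonF (![ν₁, ν₂, ν₃] i) := fun i =>
    ((hH _).1 (hgen ▸ Subgroup.subset_closure (hrange ν₁ ν₂ ν₃ ▸ mem_range_self i))).1
  refine key_proposition_general (ζ := ![ζ₁, ζ₂, ζ₃]) (χ := ![χ₁, χ₂, χ₃]) hρ.1
    hρ.hasFarReflections hν (fun f hf => ?_) (by simp [Fin.forall_fin_succ, *])
    (by simp [Fin.forall_fin_succ, *]) ?_ ha₁ ha₂ ha₃
  · rw [hrange, hgen]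
    exact (hH f).2 hf
  · rw [hG, hrange, hrange, insert_union, insert_union, singleton_union]
end
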